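/- Let n ≥ 1 be an integer, α ∈ (0,n), β > 0, A > 0 and m > 0. Then there exists a measurable set E ⊆ ℝⁿ with Lebesgue measure |E| = m such that E_{α,β,A}(E) ≤ E_{α,β,A}(F) for every measurable set F ⊆ ℝⁿ with |F| = m; i.e. the variational problem inf{E_{α,β,A}(E) : |E| = m} admits a minimizer for every mass m > 0. -/

import Mathlib

open MeasureTheory Metric Filter ENNReal

noncomputable section

/-- The Lebesgue density of `E` at `x` equals `d`. -/
def HasDensity {n : ℕ} (E : Set (EuclideanSpace ℝ (Fin n)))
    (x : EuclideanSpace ℝ (Fin n)) (d : ℝ) : Prop :=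
  Filter.Tendsto
    (fun r : ℝ => (volume (E ∩ Metric.ball x r)).toReal / (volume (Metric.ball x r)).toReal)
    (nhdsWithin 0 (Set.Ioi 0)) (nhds d)

/-- The essential boundary of `E`: points where `E` has neither density 0 nor density 1. -/
def essBoundary {n : ℕ} (E : Set (EuclideanSpace ℝ (Fin n))) :
    Set (EuclideanSpace ℝ (Fin n)) :=
  {x | ¬ HasDensity E x 0 ∧ ¬ HasDensity E x 1}

/-- The perimeter of `E`: the `(n-1)`-dimensional Hausdorff measure of the essential
boundary of `E`. -/
def perimeter {n : ℕ} (E : Set (EuclideanSpace ℝ (Fin n))) : ℝ≥0∞ :=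
  μH[(n : ℝ) - 1] (essBoundary E)

/-- The Riesz energy `V_α(E) = ∫_{E×E} |x-y|^(α-n) dx dy`. -/
def rieszEnergy {n : ℕ} (α : ℝ) (E : Set (EuclideanSpace ℝ (Fin n))) : ℝ≥0∞ :=
  ∫⁻ x in E, ∫⁻ y in E, ENNReal.ofReal (‖x - y‖ ^ (α - (n : ℝ)))

/-- The potential energy `U_{β,A}(E) = A ∫_E |x|^β dx`. -/
def potEnergy {n : ℕ} (β A : ℝ) (E : Set (EuclideanSpace ℝ (Fin n))) : ℝ≥0∞ :=
  ∫⁻ x in E, ENNReal.ofReal (A * ‖x‖ ^ β)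

/-- The total energy `E_{α,β,A} = P + V_α + U_{β,A}`. -/
def totalEnergy {n : ℕ} (α β A : ℝ) (E : Set (EuclideanSpace ℝ (Fin n))) : ℝ≥0∞ :=
  perimeter E + rieszEnergy α E + potEnergy β A E

/-- `E` is a minimizer of `E_{α,β,A}` at mass `m`. -/
def IsMinimizer {n : ℕ} (α β A m : ℝ) (E : Set (EuclideanSpace ℝ (Fin n))) : Prop :=
  MeasurableSet E ∧ volume E = ENNReal.ofReal m ∧
    ∀ F : Set (EuclideanSpace ℝ (Fin n)), MeasurableSet F → volume F = ENNReal.ofReal m →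
      totalEnergy α β A E ≤ totalEnergy α β A F

/-- Short name for Euclidean space. -/
abbrev Eu (n : ℕ) := EuclideanSpace ℝ (Fin n)

section
open scoped Topology

lemma vol_ball {n : ℕ} (x : Eu n) {r : ℝ} (hr : 0 < r) :
    volume (ball x r) = ENNReal.ofReal (r ^ n) * volume (ball (0 : Eu n) 1) := by
  have := Measure.addHaar_ball_of_pos (volume : Measure (Eu n)) x hr
  simpa using this

lemma vol_closedBall {n : ℕ} (x : Eu n) {r : ℝ} (hr : 0 < r) :
    volume (closedBall x r) = ENNReal.ofReal (r ^ n) * volume (ball (0 : Eu n) 1) := by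
  have := Measure.addHaar_closedBall (volume : Measure (Eu n)) x hr.le
  simpa using this

lemma vol_ball_diff_ball {n : ℕ} (x y : Eu n) {r : ℝ} (hr : 0 < r) :
    volume (ball x r \ ball y r) ≤
      ENNReal.ofReal ((r + dist x y) ^ n - r ^ n) * volume (ball (0 : Eu n) 1) := by
  have h1 : ball x r \ ball y r ⊆ ball y (r + dist x y) \ ball y r := by
    apply Set.sdiff_subset_sdiff_left
    apply ball_subset_ball'
    rfl
  refine (measure_mono h1).trans ?_
  have hd : 0 ≤ dist x y := dist_nonneg
  rw [measure_sdiff (ball_subset_ball (by linarith)) measurableSet_ball.nullMeasurableSet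
    measure_ball_lt_top.ne, vol_ball y hr, vol_ball y (by linarith), ENNReal.ofReal_sub _ (by positivity),
    ENNReal.sub_mul]
  intro _ _
  exact measure_ball_lt_top.ne

lemma vol_inter_ball_le {n : ℕ} (A : Set (Eu n)) (x y : Eu n) {r : ℝ} (hr : 0 < r) :
    volume (ball x r ∩ A) ≤ volume (ball y r ∩ A) +
      ENNReal.ofReal ((r + dist x y) ^ n - r ^ n) * volume (ball (0 : Eu n) 1) := by
  refine le_trans (measure_mono (t := (ball y r ∩ A) ∪ (ball x r \ ball y r)) ?_)
    ((measure_union_le _ _).trans (add_le_add le_rfl (vol_ball_diff_ball x y hr)))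
  intro z hz
  by_cases h : z ∈ ball y r
  · exact Or.inl ⟨h, hz.2⟩
  · exact Or.inr ⟨hz.1, h⟩

lemma tendsto_err {n : ℕ} (x : Eu n) {r : ℝ} :
    Tendsto (fun y => ENNReal.ofReal ((r + dist x y) ^ n - r ^ n) * volume (ball (0 : Eu n) 1))
      (𝓝 x) (𝓝 0) := by
  have h : Continuous (fun y : Eu n => (r + dist x y) ^ n - r ^ n) := by fun_prop
  have h2 : Tendsto (fun y => ENNReal.ofReal ((r + dist x y) ^ n - r ^ n)) (𝓝 x) (𝓝 0) := by
    have := (ENNReal.continuous_ofReal.comp h).tendsto x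
    simpa [Function.comp_def] using this
  have := ENNReal.Tendsto.mul_const (b := volume (ball (0 : Eu n) 1)) h2
    (Or.inr measure_ball_lt_top.ne)
  simpa using this

lemma isClosed_le_ball {n : ℕ} (A : Set (Eu n)) {r : ℝ} (hr : 0 < r) (c : ℝ≥0∞) :
    IsClosed {x : Eu n | volume (ball x r ∩ A) ≤ c} := by
  rw [← isSeqClosed_iff_isClosed]
  intro u x hu hx
  have h := (tendsto_err (r := r) x).comp hx
  have h2 := h.const_add c
  rw [add_zero] at h2
  refine ge_of_tendsto' h2 fun k => ?_
  exact (vol_inter_ball_le A x (u k) hr).trans (add_le_add (hu k) le_rfl)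

/-- points where the complement of `E` is thin at all scales below `δ`. -/
def Gs {n : ℕ} (E : Set (Eu n)) (η δ : ℝ) : Set (Eu n) :=
  {x | ∀ r, 0 < r → r < δ → volume (ball x r ∩ Eᶜ) ≤ ENNReal.ofReal η * volume (ball (0 : Eu n) r)}

lemma isClosed_Gs {n : ℕ} (E : Set (Eu n)) (η δ : ℝ) : IsClosed (Gs E η δ) := by
  have : Gs E η δ = ⋂ r : ℝ, ⋂ (_ : 0 < r), ⋂ (_ : r < δ),
      {x | volume (ball x r ∩ Eᶜ) ≤ ENNReal.ofReal η * volume (ball (0 : Eu n) r)} := by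
    ext x; simp [Gs]
  rw [this]
  exact isClosed_iInter fun r => isClosed_iInter fun h => isClosed_iInter fun _ =>
    isClosed_le_ball _ h _

lemma Gs_mono {n : ℕ} (E : Set (Eu n)) (η : ℝ) {δ δ' : ℝ} (h : δ' ≤ δ) : Gs E η δ ⊆ Gs E η δ' :=
  fun _ hx r h0 h1 => hx r h0 (h1.trans_le h)

lemma vol_ball_zero_eq {n : ℕ} (x : Eu n) (r : ℝ) : volume (ball (0 : Eu n) r) = volume (ball x r) :=
  (Measure.addHaar_ball_center volume x r).symm

lemma vol_ball_toReal_pos {n : ℕ} (x : Eu n) {r : ℝ} (hr : 0 < r) : 0 < (volume (ball x r)).toReal :=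
  ENNReal.toReal_pos (measure_ball_pos _ _ hr).ne' measure_ball_lt_top.ne

lemma vol_ball_split {n : ℕ} {E : Set (Eu n)} (hE : MeasurableSet E) (x : Eu n) (r : ℝ) :
    (volume (E ∩ ball x r)).toReal + (volume (Eᶜ ∩ ball x r)).toReal = (volume (ball x r)).toReal := by
  rw [← ENNReal.toReal_add, Set.inter_comm E, Set.inter_comm Eᶜ, ← Set.sdiff_eq, measure_inter_add_sdiff _ hE]
  · exact ((measure_mono Set.inter_subset_right).trans_lt measure_ball_lt_top).ne
  · exact ((measure_mono Set.inter_subset_right).trans_lt measure_ball_lt_top).ne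

lemma HasDensity.compl {n : ℕ} {E : Set (Eu n)} (hE : MeasurableSet E) {x : Eu n} {d : ℝ}
    (h : HasDensity E x d) : HasDensity Eᶜ x (1 - d) := by
  unfold HasDensity at *
  refine (h.const_sub 1).congr' ?_
  filter_upwards [self_mem_nhdsWithin] with r hr
  have h1 := vol_ball_toReal_pos x hr
  have h2 := vol_ball_split hE x r
  field_simp
  linarith

lemma ae_hasDensity {n : ℕ} {E : Set (Eu n)} (hE : MeasurableSet E) :
    ∀ᵐ x, (x ∈ E → HasDensity E x 1) ∧ (x ∉ E → HasDensity E x 0) := by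
  filter_upwards [Besicovitch.ae_tendsto_measure_inter_div_of_measurableSet volume hE] with x hx
  have key : ∀ᶠ r in 𝓝[>] (0:ℝ), volume (E ∩ closedBall x r) / volume (closedBall x r) =
      volume (E ∩ ball x r) / volume (ball x r) := by
    filter_upwards [self_mem_nhdsWithin] with r hr
    rw [vol_closedBall x hr, vol_ball x hr]
    congr 1
    refine measure_congr ?_
    refine (ae_eq_refl E).inter ?_
    rw [← ball_union_sphere]
    have : sphere x r =ᵐ[volume] (∅ : Set (Eu n)) :=
      ae_eq_empty.2 (Measure.addHaar_sphere_of_ne_zero _ _ (ne_of_gt hr))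
    simpa using (ae_eq_refl (ball x r)).union this
  have h2 := hx.congr' key
  constructor
  · intro hxE
    simp only [hxE, Set.indicator_of_mem, Pi.one_apply] at h2
    have := (ENNReal.tendsto_toReal one_ne_top).comp h2
    simpa [HasDensity, Function.comp_def, ENNReal.toReal_div] using this
  · intro hxE
    simp only [hxE, not_false_eq_true, Set.indicator_of_notMem] at h2
    have := (ENNReal.tendsto_toReal zero_ne_top).comp h2
    simpa [HasDensity, Function.comp_def, ENNReal.toReal_div] using this

lemma HasDensity.exists_Gs {n : ℕ} {E : Set (Eu n)} (hE : MeasurableSet E) {x : Eu n}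
    (h : HasDensity E x 1) {η : ℝ} (hη : 0 < η) : ∃ k : ℕ, x ∈ Gs E η (1 / ((k : ℝ) + 1)) := by
  have h1 := h.compl hE
  rw [sub_self] at h1
  have h2 := h1.eventually (gt_mem_nhds hη)
  rw [eventually_nhdsWithin_iff, Metric.eventually_nhds_iff] at h2
  obtain ⟨δ, hδ, h2⟩ := h2
  obtain ⟨k, hk⟩ := exists_nat_one_div_lt hδ
  refine ⟨k, fun r h0 hr => ?_⟩
  have h3 := h2 (y := r) (by rw [Real.dist_eq, sub_zero, abs_of_pos h0]; linarith) h0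
  rw [div_lt_iff₀ (vol_ball_toReal_pos x h0)] at h3
  rw [vol_ball_zero_eq x, Set.inter_comm]
  have hf : volume (Eᶜ ∩ ball x r) ≠ ∞ :=
    ((measure_mono Set.inter_subset_right).trans_lt measure_ball_lt_top).ne
  rw [← ENNReal.ofReal_toReal hf, ← ENNReal.ofReal_toReal (measure_ball_lt_top (μ := volume) (x := x) (r := r)).ne,
    ← ENNReal.ofReal_mul hη.le]
  exact ENNReal.ofReal_le_ofReal h3.le

lemma not_density_zero_of_Gs {n : ℕ} {E : Set (Eu n)} (hE : MeasurableSet E) {x : Eu n}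
    {η δ : ℝ} (hη : 0 ≤ η) (hη1 : η < 1) (hδ : 0 < δ) (h : x ∈ Gs E η δ) : ¬ HasDensity E x 0 := by
  intro h0
  have h2 := (h0.eventually (gt_mem_nhds (show (0:ℝ) < 1 - η by linarith))).and
    (mem_nhdsWithin_of_mem_nhds (gt_mem_nhds hδ))
  obtain ⟨r, ⟨h3, h4⟩, h5⟩ := (h2.and self_mem_nhdsWithin).exists
  have h5 : 0 < r := h5
  have h6 := h r h5 h4
  rw [vol_ball_zero_eq x, Set.inter_comm] at h6
  have h7 := ENNReal.toReal_mono (ENNReal.mul_ne_top ofReal_ne_top measure_ball_lt_top.ne) h6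
  rw [ENNReal.toReal_mul, ENNReal.toReal_ofReal hη] at h7
  rw [div_lt_iff₀ (vol_ball_toReal_pos x h5)] at h3
  have := vol_ball_split hE x r
  nlinarith


end

section
open scoped Topology

/-- all lines in direction `e` through `A` -/
def cyl {n : ℕ} (e : Eu n) (A : Set (Eu n)) : Set (Eu n) := {w | ∃ x ∈ A, ∃ s : ℝ, w = x + s • e}

/-- height along `e` and horizontal projection -/
def hproj {n : ℕ} (e v : Eu n) : Eu n := v - (inner ℝ v e) • e

lemma norm_hproj_le {n : ℕ} {e : Eu n} (he : ‖e‖ = 1) (v : Eu n) : ‖hproj e v‖ ≤ ‖v‖ := by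
  have h : ‖hproj e v‖ ^ 2 = ‖v‖ ^ 2 - (inner ℝ v e) ^ 2 := by
    unfold hproj
    rw [norm_sub_sq_real, inner_smul_right, norm_smul, he]
    simp
    ring
  have := sq_nonneg (inner ℝ v e)
  exact le_of_sq_le_sq (by linarith) (norm_nonneg _)
where le_of_sq_le_sq {a b : ℝ} (h : a ^ 2 ≤ b ^ 2) (hb : 0 ≤ b) : a ≤ b := abs_le_of_sq_le_sq' h hb |>.2

lemma abs_inner_le {n : ℕ} {e : Eu n} (he : ‖e‖ = 1) (v : Eu n) : |inner ℝ v e| ≤ ‖v‖ := by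
  have := abs_real_inner_le_norm v e
  rwa [he, mul_one] at this

lemma norm_le_hproj_add {n : ℕ} {e : Eu n} (he : ‖e‖ = 1) (v : Eu n) :
    ‖v‖ ≤ ‖hproj e v‖ + |inner ℝ v e| := by
  have : v = hproj e v + (inner ℝ v e) • e := by simp [hproj]
  calc ‖v‖ = ‖hproj e v + (inner ℝ v e) • e‖ := by rw [← this]
    _ ≤ _ := by
      refine (norm_add_le _ _).trans ?_
      rw [norm_smul, he, mul_one, Real.norm_eq_abs]

lemma inner_self_one {n : ℕ} {e : Eu n} (he : ‖e‖ = 1) : inner ℝ e e = (1 : ℝ) := by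
  rw [real_inner_self_eq_norm_sq, he]; norm_num

lemma hproj_add_smul {n : ℕ} {e : Eu n} (he : ‖e‖ = 1) (v : Eu n) (s : ℝ) :
    hproj e (v + s • e) = hproj e v := by
  unfold hproj
  rw [inner_add_left, inner_smul_left, inner_self_one he]
  simp [add_smul]

lemma vol_preimage_add {n : ℕ} (T : Set (Eu n)) (v : Eu n) :
    volume ((fun x => x + v) ⁻¹' T) = volume T := measure_preimage_add_right volume v T

lemma nullBad_strip {n : ℕ} {E : Set (Eu n)} (hE : MeasurableSet E) {e : Eu n} (he : ‖e‖ = 1)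
    {δ a : ℝ} (hδ : 0 < δ) (A : Set (Eu n))
    (hA1 : ∀ x ∈ A, x ∈ Gs E (1 / (2 * 6 ^ n)) δ)
    (hA2 : ∀ x ∈ A, ∀ s, 0 < s → s < δ → HasDensity E (x + s • e) 0)
    (hA3 : ∀ x ∈ A, a ≤ inner ℝ x e ∧ inner ℝ x e < a + δ / 4) : volume (cyl e A) = 0 := by
  by_contra hne
  set T := cyl e A with hT
  have hTinv : ∀ w (s : ℝ), w + s • e ∈ T ↔ w ∈ T := by
    intro w s
    constructor
    · rintro ⟨x, hx, t, ht⟩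
      refine ⟨x, hx, t - s, ?_⟩
      rw [sub_smul, ← add_sub_assoc, ← ht, add_sub_cancel_right]
    · rintro ⟨x, hx, t, rfl⟩
      exact ⟨x, hx, t + s, by rw [add_smul, add_assoc]⟩
  obtain ⟨z, hzT, hz⟩ : ∃ z ∈ T, Tendsto (fun r => volume (T ∩ closedBall z r) / volume (closedBall z r))
      (𝓝[>] 0) (𝓝 1) := by
    by_contra hcon
    push Not at hcon
    apply hne
    have := Besicovitch.ae_tendsto_measure_inter_div volume T
    have h2 := ae_iff.1 this
    rw [← nonpos_iff_eq_zero, ← Measure.restrict_apply_self]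
    refine (measure_mono fun z hz => ?_).trans h2.le
    exact hcon z hz
  have hlt : (1 / 2 : ℝ≥0∞) < 1 := by simp
  have hev := (hz.eventually (lt_mem_nhds hlt)).and
    (mem_nhdsWithin_of_mem_nhds (gt_mem_nhds (show (0:ℝ) < δ / 100 by positivity)))
  obtain ⟨ρ, ⟨h1, h2⟩, hρ⟩ := (hev.and self_mem_nhdsWithin).exists
  have hρ : 0 < ρ := hρ
  have h1' : volume (closedBall z ρ) / 2 < volume (T ∩ closedBall z ρ) := by
    rw [ENNReal.lt_div_iff_mul_lt (Or.inl (measure_closedBall_pos _ _ hρ).ne')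
      (Or.inl measure_closedBall_lt_top.ne)] at h1
    rwa [ENNReal.div_eq_inv_mul, ← one_div]
  -- heights
  set Aρ := {x ∈ A | ‖hproj e (x - z)‖ ≤ ρ} with hAρ
  have hAne : Aρ.Nonempty := by
    obtain ⟨x, hx, s, hs⟩ := hzT
    refine ⟨x, hx, ?_⟩
    have : x - z = 0 + (-s) • e := by rw [hs]; simp
    rw [this, hproj_add_smul he]
    simp [hproj, hρ.le]
  set S := (fun x => inner ℝ x e) '' Aρ with hS
  have hSb : BddAbove S := ⟨a + δ / 4, by rintro _ ⟨x, hx, rfl⟩; exact (hA3 x hx.1).2.le⟩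
  have hSne : S.Nonempty := hAne.image _
  set h := sSup S with hh
  have hha : h ≤ a + δ / 4 := csSup_le hSne (by rintro _ ⟨x, hx, rfl⟩; exact (hA3 x hx.1).2.le)
  obtain ⟨_, ⟨x, hx, rfl⟩, hxh⟩ := exists_lt_of_lt_csSup hSne (show h - ρ < sSup S by linarith)
  have hxh2 : inner ℝ x e ≤ h := le_csSup hSb ⟨x, hx, rfl⟩
  set τ := h + 2 * ρ - inner ℝ z e with hτ
  set z' := z + τ • e with hz'
  have hz'e : inner ℝ z' e = h + 2 * ρ := by
    rw [hz', inner_add_left, inner_smul_left, inner_self_one he]; simp [hτ]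
  have htr : volume (T ∩ closedBall z' ρ) = volume (T ∩ closedBall z ρ) := by
    rw [← vol_preimage_add (T ∩ closedBall z' ρ) (τ • e)]
    congr 1
    ext w
    simp only [Set.mem_preimage, Set.mem_inter_iff, hTinv, mem_closedBall, hz', dist_add_right]
  have hO : ∀ w ∈ T ∩ closedBall z' ρ, HasDensity E w 0 := by
    rintro w ⟨⟨x', hx', s, rfl⟩, hw⟩
    rw [mem_closedBall, dist_eq_norm] at hw
    have k1 : ‖hproj e (x' - z)‖ ≤ ρ := by
      have : x' + s • e - z' = (x' - z) + (s - τ) • e := by rw [hz']; module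
      rw [this] at hw
      have := norm_hproj_le he (x' - z + (s - τ) • e)
      rw [hproj_add_smul he] at this
      linarith
    have k2 : inner ℝ x' e ≤ h := le_csSup hSb ⟨x', ⟨hx', k1⟩, rfl⟩
    have k3 := (abs_inner_le he (x' + s • e - z')).trans hw
    rw [inner_sub_left, hz'e, inner_add_left, inner_smul_left, inner_self_one he] at k3
    simp only [conj_trivial, mul_one] at k3
    rw [abs_le] at k3
    have k4 := (hA3 x' hx').1
    exact hA2 x' hx' s (by linarith) (by linarith)
  have hsub : volume (T ∩ closedBall z' ρ) ≤ volume (closedBall z' ρ ∩ Eᶜ) := by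
    refine measure_mono_ae ?_
    filter_upwards [ae_hasDensity hE] with w hw hwT
    refine ⟨hwT.2, fun hwE => ?_⟩
    have := tendsto_nhds_unique (hw.1 hwE) (hO w hwT)
    norm_num at this
  have hball : closedBall z' ρ ⊆ ball x (6 * ρ) := by
    apply closedBall_subset_ball'
    have := norm_le_hproj_add he (x - z')
    have k1 : x - z' = (x - z) + (-τ) • e := by rw [hz']; simp; abel
    rw [inner_sub_left, hz'e, k1, hproj_add_smul he] at this
    have k2 := hx.2
    have k3 : |inner ℝ x e - (h + 2 * ρ)| ≤ 3 * ρ := by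
      rw [abs_le]; constructor <;> linarith
    rw [dist_comm, dist_eq_norm, k1]
    linarith
  have hfin := hA1 x hx.1 (6 * ρ) (by positivity) (by linarith)
  have hchain : volume (closedBall z ρ) / 2 < ENNReal.ofReal (1 / (2 * 6 ^ n)) * volume (ball (0 : Eu n) (6 * ρ)) :=
    calc _ < _ := h1'
      _ = _ := htr.symm
      _ ≤ _ := hsub
      _ ≤ volume (ball x (6 * ρ) ∩ Eᶜ) := measure_mono (Set.inter_subset_inter_left _ hball)
      _ ≤ _ := hfin
  rw [vol_closedBall z hρ, vol_ball _ (by positivity : 0 < 6 * ρ), ← mul_assoc,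
    ← ENNReal.ofReal_mul (by positivity)] at hchain
  have e1 : ENNReal.ofReal (1 / (2 * 6 ^ n) * (6 * ρ) ^ n) = ENNReal.ofReal (ρ ^ n) / 2 := by
    rw [← ENNReal.ofReal_ofNat 2, ← ENNReal.ofReal_div_of_pos (by norm_num), mul_pow]
    congr 1
    field_simp
  rw [e1, ENNReal.mul_div_right_comm] at hchain
  exact lt_irrefl _ hchain

lemma nullBad {n : ℕ} {E : Set (Eu n)} (hE : MeasurableSet E) {e : Eu n} (he : ‖e‖ = 1)
    {δ : ℝ} (hδ : 0 < δ) (A : Set (Eu n))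
    (hA1 : ∀ x ∈ A, x ∈ Gs E (1 / (2 * 6 ^ n)) δ)
    (hA2 : ∀ x ∈ A, ∀ s, 0 < s → s < δ → HasDensity E (x + s • e) 0) : volume (cyl e A) = 0 := by
  have : cyl e A ⊆ ⋃ j : ℤ, cyl e {x ∈ A | j * (δ / 4) ≤ inner ℝ x e ∧ inner ℝ x e < j * (δ / 4) + δ / 4} := by
    rintro w ⟨x, hx, s, rfl⟩
    rw [Set.mem_iUnion]
    refine ⟨⌊inner ℝ x e / (δ / 4)⌋, x, ⟨hx, ?_, ?_⟩, s, rfl⟩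
    · have := Int.floor_le (inner ℝ x e / (δ / 4))
      rwa [le_div_iff₀ (by positivity)] at this
    · have := Int.lt_floor_add_one (inner ℝ x e / (δ / 4))
      rw [div_lt_iff₀ (by positivity)] at this
      linarith
  refine measure_mono_null this (measure_iUnion_null fun j => ?_)
  exact nullBad_strip hE he hδ _ (fun x hx => hA1 x hx.1) (fun x hx => hA2 x hx.1) (fun x hx => hx.2)

/-- one-dimensional Baire argument -/
lemma baire_line (I O : Set ℝ) (P Q : ℕ → Set ℝ) (hP : ∀ k, IsClosed (P k)) (hQ : ∀ k, IsClosed (Q k))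
    (hdsj : Disjoint I O) (hcov : Set.Icc (0:ℝ) 1 ⊆ I ∪ O)
    (hIP : I ⊆ ⋃ k, P k) (hOQ : O ⊆ ⋃ k, Q k) (hPO : ∀ k, Disjoint (P k) O)
    (hQI : ∀ k, Disjoint (Q k) I)
    (hI : (Set.Icc (0:ℝ) 1 ∩ I).Nonempty) (hO : (Set.Icc (0:ℝ) 1 ∩ O).Nonempty) :
    ∃ p k δ, 0 < δ ∧
      ((p ∈ P k ∧ ((∀ s, 0 < s → s < δ → p + s ∈ O) ∨ (∀ s, 0 < s → s < δ → p - s ∈ O))) ∨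
       (p ∈ Q k ∧ ((∀ s, 0 < s → s < δ → p + s ∈ I) ∨ (∀ s, 0 < s → s < δ → p - s ∈ I)))) := by
  set J := Set.Icc (0:ℝ) 1 with hJ
  set K := J ∩ (closure (J ∩ I) ∩ closure (J ∩ O)) with hK
  have hKc : IsClosed K := isClosed_Icc.inter (isClosed_closure.inter isClosed_closure)
  have conn : ∀ C ⊆ J, IsPreconnected C → (C ∩ I).Nonempty → (C ∩ O).Nonempty → (C ∩ K).Nonempty := by
    intro C hC hpc hCI hCO
    have := isPreconnected_closed_iff.1 hpc (closure (J ∩ I)) (closure (J ∩ O)) isClosed_closure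
      isClosed_closure ?_ ?_ ?_
    · obtain ⟨y, hy, hy2⟩ := this
      exact ⟨y, hy, hC hy, hy2⟩
    · intro y hy
      rcases hcov (hC hy) with h | h
      · exact Or.inl (subset_closure ⟨hC hy, h⟩)
      · exact Or.inr (subset_closure ⟨hC hy, h⟩)
    · obtain ⟨y, hy, h⟩ := hCI
      exact ⟨y, hy, subset_closure ⟨hC hy, h⟩⟩
    · obtain ⟨y, hy, h⟩ := hCO
      exact ⟨y, hy, subset_closure ⟨hC hy, h⟩⟩
  -- core one-sided argument
  have core : ∀ (I' O' : Set ℝ), Disjoint I' O' → J ⊆ I' ∪ O' → K ⊆ closure (J ∩ O') →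
      (∀ C ⊆ J, IsPreconnected C → (C ∩ I').Nonempty → (C ∩ O').Nonempty → (C ∩ K).Nonempty) →
      ∀ U : Set ℝ, IsOpen U → (K ∩ U).Nonempty → K ∩ U ⊆ I' →
      ∃ p ∈ K ∩ U, ∃ δ, 0 < δ ∧ ((∀ s, 0 < s → s < δ → p + s ∈ O') ∨ (∀ s, 0 < s → s < δ → p - s ∈ O')) := by
    intro I' O' hd hc hcl hconn U hU ⟨p, hpK, hpU⟩ hKU
    obtain ⟨ε, hε, hball⟩ := Metric.isOpen_iff.1 hU p hpU
    obtain ⟨q, ⟨hqJ, hqO⟩, hpq⟩ := Metric.mem_closure_iff.1 (hcl hpK) ε hε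
    rw [Real.dist_eq, abs_lt] at hpq
    have hpI : p ∈ I' := hKU ⟨hpK, hpU⟩
    have hne : p ≠ q := fun h => Set.disjoint_left.1 hd hpI (h ▸ hqO)
    have hin : ∀ y, p - ε < y → y < p + ε → y ∈ U := fun y h1 h2 => hball (by
      rw [mem_ball, Real.dist_eq, abs_lt]; constructor <;> linarith)
    rcases lt_or_gt_of_ne hne with hlt | hlt
    · have hcomp : IsCompact (K ∩ Set.Icc p q) := isCompact_Icc.inter_left hKc
      obtain ⟨p', ⟨hp'K, hp'⟩, hmax⟩ := hcomp.exists_isGreatest ⟨p, hpK, le_rfl, hlt.le⟩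
      have hp'U : p' ∈ U := hin p' (by linarith [hp'.1]) (by linarith [hp'.2])
      have hp'I : p' ∈ I' := hKU ⟨hp'K, hp'U⟩
      have hlt' : p' < q := lt_of_le_of_ne hp'.2 (fun h => Set.disjoint_left.1 hd hp'I (h ▸ hqO))
      have hsub : Set.Ioc p' q ⊆ J := fun y hy => ⟨hp'K.1.1.trans hy.1.le, hy.2.trans hqJ.2⟩
      refine ⟨p', ⟨hp'K, hp'U⟩, q - p', by linarith, Or.inl fun s hs0 hs => ?_⟩
      have hmem : p' + s ∈ Set.Ioc p' q := ⟨by linarith, by linarith⟩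
      rcases hc (hsub hmem) with h | h
      · exfalso
        obtain ⟨y, hy, hyK⟩ := hconn _ hsub isPreconnected_Ioc ⟨_, hmem, h⟩ ⟨q, ⟨hlt', le_rfl⟩, hqO⟩
        have := hmax ⟨hyK, by linarith [hp'.1, hy.1], hy.2⟩
        linarith [hy.1]
      · exact h
    · have hcomp : IsCompact (K ∩ Set.Icc q p) := isCompact_Icc.inter_left hKc
      obtain ⟨p', ⟨hp'K, hp'⟩, hmax⟩ := hcomp.exists_isLeast ⟨p, hpK, hlt.le, le_rfl⟩
      have hp'U : p' ∈ U := hin p' (by linarith [hp'.1]) (by linarith [hp'.2])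
      have hp'I : p' ∈ I' := hKU ⟨hp'K, hp'U⟩
      have hlt' : q < p' := lt_of_le_of_ne hp'.1 (fun h => Set.disjoint_left.1 hd hp'I (h ▸ hqO))
      have hsub : Set.Ico q p' ⊆ J := fun y hy => ⟨hqJ.1.trans hy.1, hy.2.le.trans hp'K.1.2⟩
      refine ⟨p', ⟨hp'K, hp'U⟩, p' - q, by linarith, Or.inr fun s hs0 hs => ?_⟩
      have hmem : p' - s ∈ Set.Ico q p' := ⟨by linarith, by linarith⟩
      rcases hc (hsub hmem) with h | h
      · exfalso
        obtain ⟨y, hy, hyK⟩ := hconn _ hsub isPreconnected_Ico ⟨_, hmem, h⟩ ⟨q, ⟨le_rfl, hlt'⟩, hqO⟩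
        have := hmax ⟨hyK, hy.1, by linarith [hp'.2, hy.2]⟩
        linarith [hy.2]
      · exact h
  have hKne : K.Nonempty := by
    obtain ⟨y, _, hy⟩ := conn J le_rfl isPreconnected_Icc hI hO
    exact ⟨y, hy⟩
  haveI : CompleteSpace K := hKc.completeSpace_coe
  haveI : Nonempty K := hKne.to_subtype
  let f : ℕ ⊕ ℕ → Set K := fun i => Subtype.val ⁻¹' (Sum.elim P Q i)
  have hf : ∀ i, IsClosed (f i) := by
    rintro (i | i)
    · exact (hP i).preimage continuous_subtype_val
    · exact (hQ i).preimage continuous_subtype_val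
  have hfU : ⋃ i, f i = Set.univ := by
    rw [Set.eq_univ_iff_forall]
    rintro ⟨y, hy⟩
    rw [Set.mem_iUnion]
    rcases hcov hy.1 with h | h
    · obtain ⟨k, hk⟩ := Set.mem_iUnion.1 (hIP h)
      exact ⟨Sum.inl k, hk⟩
    · obtain ⟨k, hk⟩ := Set.mem_iUnion.1 (hOQ h)
      exact ⟨Sum.inr k, hk⟩
  obtain ⟨i, y, hy⟩ := nonempty_interior_of_iUnion_of_closed hf hfU
  obtain ⟨V, hVs, hVo, hyV⟩ := mem_interior.1 hy
  obtain ⟨U, hU, rfl⟩ := isOpen_induced_iff.1 hVo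
  have hKUf : ∀ x ∈ K ∩ U, x ∈ Sum.elim P Q i := fun x hx => hVs (show (⟨x, hx.1⟩ : K) ∈ _ from hx.2)
  rcases i with k | k
  · obtain ⟨p, hp, δ, hδ, h⟩ := core I O hdsj hcov (fun x hx => hx.2.2) conn U hU ⟨y, y.2, hyV⟩
      (fun x hx => (hcov hx.1.1).resolve_right fun h => Set.disjoint_left.1 (hPO k) (hKUf x hx) h)
    exact ⟨p, k, δ, hδ, Or.inl ⟨hKUf p hp, h⟩⟩
  · obtain ⟨p, hp, δ, hδ, h⟩ := core O I hdsj.symm (by rwa [Set.union_comm]) (fun x hx => hx.2.1)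
      (fun C h1 h2 h3 h4 => conn C h1 h2 h4 h3) U hU ⟨y, y.2, hyV⟩
      (fun x hx => (hcov hx.1.1).resolve_left fun h => Set.disjoint_left.1 (hQI k) (hKUf x hx) h)
    exact ⟨p, k, δ, hδ, Or.inr ⟨hKUf p hp, h⟩⟩


end

section
open scoped Topology

def diffSet {n : ℕ} (E : Set (Eu n)) (h : Eu n) : Set (Eu n) := {x | ¬ (x ∈ E ↔ x + h ∈ E)}

def sweep {n : ℕ} (K : Set (Eu n)) (h : Eu n) : Set (Eu n) :=
  {y | ∃ x ∈ K, ∃ s ∈ Set.Icc (0:ℝ) 1, y = x + s • h}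

lemma measurableSet_diffSet {n : ℕ} {E : Set (Eu n)} (hE : MeasurableSet E) (h : Eu n) :
    MeasurableSet (diffSet E h) := by
  have h2 : MeasurableSet {x | x + h ∈ E} := hE.preimage (measurable_id.add_const h)
  have : diffSet E h = (E \ {x | x + h ∈ E}) ∪ ({x | x + h ∈ E} \ E) := by
    ext x; simp only [diffSet, Set.mem_ofPred_eq, Set.mem_union, Set.mem_sdiff]; tauto
  rw [this]
  exact (hE.diff h2).union (h2.diff hE)

lemma isCompact_sweep {n : ℕ} {K : Set (Eu n)} (hK : IsCompact K) (h : Eu n) :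
    IsCompact (sweep K h) := by
  have : sweep K h = (fun p : Eu n × ℝ => p.1 + p.2 • h) '' (K ×ˢ Set.Icc (0:ℝ) 1) := by
    ext y
    simp only [sweep, Set.mem_ofPred_eq, Set.mem_image, Set.mem_prod, Prod.exists]
    constructor
    · rintro ⟨x, hx, s, hs, rfl⟩; exact ⟨x, s, ⟨hx, hs⟩, rfl⟩
    · rintro ⟨x, s, ⟨hx, hs⟩, rfl⟩; exact ⟨x, hx, s, hs, rfl⟩
  rw [this]
  exact (hK.prod isCompact_Icc).image (by fun_prop)

lemma essBoundary_compl {n : ℕ} {E : Set (Eu n)} (hE : MeasurableSet E) :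
    essBoundary Eᶜ = essBoundary E := by
  ext x
  have h1 : HasDensity E x 0 ↔ HasDensity Eᶜ x 1 := by
    constructor
    · intro h; simpa using h.compl hE
    · intro h; simpa using h.compl hE.compl
  have h2 : HasDensity E x 1 ↔ HasDensity Eᶜ x 0 := by
    constructor
    · intro h; simpa using h.compl hE
    · intro h; simpa using h.compl hE.compl
  simp only [essBoundary, Set.mem_ofPred_eq, h1, h2]
  tauto

/-- bad points -/
def badPts {n : ℕ} (E : Set (Eu n)) (e : Eu n) (k : ℕ) : Set (Eu n) :=
  {x | x ∈ Gs E (1 / (2 * 6 ^ n)) (1 / ((k:ℝ) + 1)) ∧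
    ∀ s, 0 < s → s < 1 / ((k:ℝ) + 1) → HasDensity E (x + s • e) 0}

lemma null_badPts {n : ℕ} {E : Set (Eu n)} (hE : MeasurableSet E) {e : Eu n} (he : ‖e‖ = 1) (k : ℕ) :
    volume (cyl e (badPts E e k)) = 0 :=
  nullBad hE he (by positivity) _ (fun _ hx => hx.1) (fun _ hx => hx.2)

lemma cyl_neg {n : ℕ} (e : Eu n) (A : Set (Eu n)) : cyl (-e) A = cyl e A := by
  ext w
  constructor
  · rintro ⟨x, hx, s, rfl⟩; exact ⟨x, hx, -s, by simp⟩
  · rintro ⟨x, hx, s, rfl⟩; exact ⟨x, hx, -s, by simp⟩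

lemma slice_det {n : ℕ} {E : Set (Eu n)} (hE : MeasurableSet E) {x e : Eu n} {t : ℝ}
    (ht : 0 < t) (η : ℝ) (hη : 0 < η) (hη1 : η < 1) (L : ℝ → Eu n) (hLd : ∀ s, L s = x + s • (t • e))
    (hL : Continuous L) (I O : Set ℝ) (hI : ∀ s, s ∈ I ↔ HasDensity E (L s) 1)
    (hO : ∀ s, s ∈ O ↔ HasDensity E (L s) 0)
    (c : ∀ (k : ℕ) (y : Eu n) (e' : Eu n) (E' : Set (Eu n)), x ∈ cyl e {y} → (e' = e ∨ e' = -e) →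
      (E' = E ∨ E' = Eᶜ) → y ∈ Gs E' η (1 / ((k:ℝ) + 1)) →
      ¬ ∀ s, 0 < s → s < 1 / ((k:ℝ) + 1) → HasDensity E' (y + s • e') 0)
    (hI1 : (Set.Icc (0:ℝ) 1 ∩ I).Nonempty) (hO1 : (Set.Icc (0:ℝ) 1 ∩ O).Nonempty)
    (hcon : ∀ s ∈ Set.Icc (0:ℝ) 1, L s ∉ essBoundary E) : False := by
  have hOc : ∀ s, s ∈ O → HasDensity Eᶜ (L s) 1 := fun s hs => by
    simpa using HasDensity.compl hE ((hO s).1 hs)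
  have hIc : ∀ s, s ∈ I → HasDensity Eᶜ (L s) 0 := fun s hs => by
    simpa using HasDensity.compl hE ((hI s).1 hs)
  have hkpos : ∀ k : ℕ, (0:ℝ) < 1 / ((k:ℝ) + 1) := fun k => by positivity
  have g1 : Disjoint I O := Set.disjoint_left.2 fun s h1 h2 => by
      have := tendsto_nhds_unique ((hI s).1 h1) ((hO s).1 h2); norm_num at this
  have g2 : Set.Icc (0:ℝ) 1 ⊆ I ∪ O := fun s hs => by
      have h3 := hcon s hs
      by_cases h4 : HasDensity E (L s) 0
      · exact Or.inr ((hO s).2 h4)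
      · by_cases h5 : HasDensity E (L s) 1
        · exact Or.inl ((hI s).2 h5)
        · exact absurd ⟨h4, h5⟩ h3
  have g3 : I ⊆ ⋃ k : ℕ, L ⁻¹' Gs E η (1 / ((k:ℝ) + 1)) := fun s hs =>
    Set.mem_iUnion.2 (HasDensity.exists_Gs hE ((hI s).1 hs) hη)
  have g4 : O ⊆ ⋃ k : ℕ, L ⁻¹' Gs Eᶜ η (1 / ((k:ℝ) + 1)) := fun s hs =>
    Set.mem_iUnion.2 (HasDensity.exists_Gs hE.compl (hOc s hs) hη)
  have g5 : ∀ k : ℕ, Disjoint (L ⁻¹' Gs E η (1 / ((k:ℝ) + 1))) O := fun k =>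
    Set.disjoint_left.2 fun s h1 h2 =>
      not_density_zero_of_Gs hE hη.le hη1 (hkpos k) h1 ((hO s).1 h2)
  have g6 : ∀ k : ℕ, Disjoint (L ⁻¹' Gs Eᶜ η (1 / ((k:ℝ) + 1))) I := fun k =>
    Set.disjoint_left.2 fun s h1 h2 =>
      not_density_zero_of_Gs hE.compl hη.le hη1 (hkpos k) h1 (hIc s h2)
  obtain ⟨p, k, δ, hδ, hp⟩ := baire_line I O (fun k => L ⁻¹' Gs E η (1 / ((k:ℝ) + 1)))
    (fun k => L ⁻¹' Gs Eᶜ η (1 / ((k:ℝ) + 1))) (fun k => (isClosed_Gs _ _ _).preimage hL)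
    (fun k => (isClosed_Gs _ _ _).preimage hL) g1 g2 g3 g4 g5 g6 hI1 hO1
  obtain ⟨k', hk'⟩ := exists_nat_one_div_lt (mul_pos hδ ht)
  obtain ⟨K, hK1, hK2⟩ : ∃ K : ℕ, 1 / ((K:ℝ) + 1) ≤ 1 / ((k:ℝ) + 1) ∧
      1 / ((K:ℝ) + 1) ≤ 1 / ((k':ℝ) + 1) := by
    refine ⟨max k k', one_div_le_one_div_of_le (by positivity) ?_,
      one_div_le_one_div_of_le (by positivity) ?_⟩
    · have : (k:ℝ) ≤ ((max k k' : ℕ):ℝ) := by exact_mod_cast le_max_left _ _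
      linarith
    · have : (k':ℝ) ≤ ((max k k' : ℕ):ℝ) := by exact_mod_cast le_max_right _ _
      linarith
  have hxL : x ∈ cyl e {L p} := ⟨L p, rfl, -(p * t), by rw [hLd]; module⟩
  have hst : ∀ s, 0 < s → s < 1 / ((K:ℝ) + 1) → 0 < s / t ∧ s / t < δ := by
    intro s h0 h1
    refine ⟨by positivity, ?_⟩
    rw [div_lt_iff₀ ht]; linarith
  have e0 : ∀ s : ℝ, s • e = (s / t) • (t • e) := fun s => by
    rw [smul_smul]; congr 1; field_simp
  have e1 : ∀ s, L p + s • e = L (p + s / t) := fun s => by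
    rw [e0, hLd, hLd]; module
  have e2 : ∀ s, L p + s • (-e) = L (p - s / t) := fun s => by
    rw [smul_neg, e0, hLd, hLd]; module
  rcases hp with ⟨hpk, h | h⟩ | ⟨hpk, h | h⟩
  · refine c K (L p) e E hxL (Or.inl rfl) (Or.inl rfl) (Gs_mono _ _ hK1 hpk) fun s h0 h1 => ?_
    rw [e1]; exact (hO _).1 (h _ (hst s h0 h1).1 (hst s h0 h1).2)
  · refine c K (L p) (-e) E hxL (Or.inr rfl) (Or.inl rfl) (Gs_mono _ _ hK1 hpk) fun s h0 h1 => ?_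
    rw [e2]; exact (hO _).1 (h _ (hst s h0 h1).1 (hst s h0 h1).2)
  · refine c K (L p) e Eᶜ hxL (Or.inl rfl) (Or.inr rfl) (Gs_mono _ _ hK1 hpk) fun s h0 h1 => ?_
    rw [e1]; exact hIc _ (h _ (hst s h0 h1).1 (hst s h0 h1).2)
  · refine c K (L p) (-e) Eᶜ hxL (Or.inr rfl) (Or.inr rfl) (Gs_mono _ _ hK1 hpk) fun s h0 h1 => ?_
    rw [e2]; exact hIc _ (h _ (hst s h0 h1).1 (hst s h0 h1).2)

lemma slice_unit {n : ℕ} {E : Set (Eu n)} (hE : MeasurableSet E) {e : Eu n} (he : ‖e‖ = 1) {t : ℝ}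
    (ht : 0 < t) : ∀ᵐ x, x ∈ diffSet E (t • e) → ∃ s ∈ Set.Icc (0:ℝ) 1, x + s • (t • e) ∈ essBoundary E := by
  have hne : ‖-e‖ = 1 := by rwa [norm_neg]
  have b1 : ∀ᵐ x, ∀ k, x ∉ cyl e (badPts E e k) :=
    ae_all_iff.2 fun k => measure_eq_zero_iff_ae_notMem.1 (null_badPts hE he k)
  have b2 : ∀ᵐ x, ∀ k, x ∉ cyl e (badPts E (-e) k) :=
    ae_all_iff.2 fun k => measure_eq_zero_iff_ae_notMem.1 (by rw [← cyl_neg]; exact null_badPts hE hne k)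
  have b3 : ∀ᵐ x, ∀ k, x ∉ cyl e (badPts Eᶜ e k) :=
    ae_all_iff.2 fun k => measure_eq_zero_iff_ae_notMem.1 (null_badPts hE.compl he k)
  have b4 : ∀ᵐ x, ∀ k, x ∉ cyl e (badPts Eᶜ (-e) k) :=
    ae_all_iff.2 fun k => measure_eq_zero_iff_ae_notMem.1
      (by rw [← cyl_neg]; exact null_badPts hE.compl hne k)
  have d1 := ae_hasDensity hE
  have d2 : ∀ᵐ x, (x + t • e ∈ E → HasDensity E (x + t • e) 1) ∧
      (x + t • e ∉ E → HasDensity E (x + t • e) 0) :=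
    (measurePreserving_add_right volume (t • e)).quasiMeasurePreserving.ae d1
  filter_upwards [b1, b2, b3, b4, d1, d2] with x c1 c2 c3 c4 c5 c6 hx
  by_contra hcon
  push Not at hcon
  have hη : (0:ℝ) < 1 / (2 * 6 ^ n) := by positivity
  have hη1 : (1:ℝ) / (2 * 6 ^ n) < 1 := by
    have : (1:ℝ) ≤ 6 ^ n := one_le_pow₀ (by norm_num)
    rw [div_lt_one (by positivity)]; linarith
  have hxE : (x ∈ E ∧ x + t • e ∉ E) ∨ (x ∉ E ∧ x + t • e ∈ E) := by
    have : ¬ (x ∈ E ↔ x + t • e ∈ E) := hx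
    tauto
  have L0 : x + (0:ℝ) • (t • e) = x := by rw [zero_smul, add_zero]
  have L1 : x + (1:ℝ) • (t • e) = x + t • e := by rw [one_smul]
  have hcyl : ∀ (y : Eu n) (A : Set (Eu n)), x ∈ cyl e {y} → y ∈ A → x ∈ cyl e A := by
    rintro y A ⟨z, rfl, s, hs⟩ hA
    exact ⟨_, hA, s, hs⟩
  refine slice_det hE ht _ hη hη1 (fun s => x + s • (t • e)) (fun _ => rfl) (by fun_prop)
    {s | HasDensity E (x + s • (t • e)) 1} {s | HasDensity E (x + s • (t • e)) 0}
    (fun _ => Iff.rfl) (fun _ => Iff.rfl) ?_ ?_ ?_ hcon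
  · rintro k y e' E' hy (rfl | rfl) (rfl | rfl) hG hs
    · exact c1 k (hcyl y _ hy ⟨hG, hs⟩)
    · exact c3 k (hcyl y _ hy ⟨hG, hs⟩)
    · exact c2 k (hcyl y _ hy ⟨hG, hs⟩)
    · exact c4 k (hcyl y _ hy ⟨hG, hs⟩)
  · rcases hxE with ⟨h1, h2⟩ | ⟨h1, h2⟩
    · exact ⟨0, by simp, show HasDensity E _ 1 by rw [L0]; exact c5.1 h1⟩
    · exact ⟨1, by simp, show HasDensity E _ 1 by rw [L1]; exact c6.1 h2⟩
  · rcases hxE with ⟨h1, h2⟩ | ⟨h1, h2⟩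
    · exact ⟨1, by simp, show HasDensity E _ 0 by rw [L1]; exact c6.2 h2⟩
    · exact ⟨0, by simp, show HasDensity E _ 0 by rw [L0]; exact c5.2 h1⟩

lemma exists_unit_dir {n : ℕ} {h : Eu n} (hh : h ≠ 0) : ∃ e : Eu n, ‖e‖ = 1 ∧ h = ‖h‖ • e := by
  have : ‖h‖ ≠ 0 := norm_ne_zero_iff.2 hh
  refine ⟨(‖h‖)⁻¹ • h, ?_, ?_⟩
  · rw [norm_smul, norm_inv, norm_norm, inv_mul_cancel₀ this]
  · rw [smul_smul, mul_inv_cancel₀ this, one_smul]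

lemma slice {n : ℕ} {E : Set (Eu n)} (hE : MeasurableSet E) (h : Eu n) :
    ∀ᵐ x, x ∈ diffSet E h → ∃ s ∈ Set.Icc (0:ℝ) 1, x + s • h ∈ essBoundary E := by
  by_cases hh : h = 0
  · subst hh
    exact Eventually.of_forall fun x hx => by simp [diffSet] at hx
  · obtain ⟨e, he, heq⟩ := exists_unit_dir hh
    rw [heq]
    exact slice_unit hE he (norm_pos_iff.2 hh)


end

section
open scoped Topology Pointwise

/-- the part of the cylinder over `C` with height in `J`. -/
def cst {n : ℕ} (e : Eu n) (C : Set (Eu n)) (J : Set ℝ) : Set (Eu n) :=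
  {w | inner ℝ w e ∈ J} ∩ cyl e C

def qv {n : ℕ} (e : Eu n) (C : Set (Eu n)) : ℝ≥0∞ := volume (cst e C (Set.Ico 0 1))

lemma inner_meas {n : ℕ} (e : Eu n) : Measurable (fun w : Eu n => (inner ℝ w e : ℝ)) :=
  (by fun_prop : Continuous (fun w : Eu n => (inner ℝ w e : ℝ))).measurable

lemma inner_add_smul {n : ℕ} {e : Eu n} (he : ‖e‖ = 1) (x : Eu n) (s : ℝ) :
    (inner ℝ (x + s • e) e : ℝ) = inner ℝ x e + s := by
  rw [inner_add_left, inner_smul_left, inner_self_one he]; simp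

lemma mem_cyl_add {n : ℕ} {e : Eu n} {C : Set (Eu n)} (w : Eu n) (s : ℝ) :
    w + s • e ∈ cyl e C ↔ w ∈ cyl e C := by
  constructor
  · rintro ⟨x, hx, u, hu⟩
    exact ⟨x, hx, u - s, by rw [eq_sub_of_add_eq hu]; module⟩
  · rintro ⟨x, hx, u, rfl⟩
    exact ⟨x, hx, u + s, by module⟩

lemma hproj_of_cyl {n : ℕ} {e : Eu n} (he : ‖e‖ = 1) {C : Set (Eu n)} {w : Eu n} (hw : w ∈ cyl e C) :
    ∃ x ∈ C, hproj e w = hproj e x := by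
  obtain ⟨x, hx, s, rfl⟩ := hw
  exact ⟨x, hx, hproj_add_smul he x s⟩

lemma cst_subset_closedBall {n : ℕ} {e : Eu n} (he : ‖e‖ = 1) {C : Set (Eu n)} {J : Set ℝ} {R M : ℝ}
    {x0 : Eu n} (hC : C ⊆ closedBall x0 R) (hJ : ∀ s ∈ J, |s| ≤ M) :
    cst e C J ⊆ closedBall (hproj e x0) (R + M) := by
  rintro w ⟨hw1, hw2⟩
  obtain ⟨x, hx, h⟩ := hproj_of_cyl he hw2
  rw [mem_closedBall, dist_eq_norm]
  have h1 : w - hproj e x0 = hproj e (x - x0) + (inner ℝ w e : ℝ) • e := by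
    have : w = hproj e w + (inner ℝ w e : ℝ) • e := by simp [hproj]
    have h2 : hproj e (x - x0) = hproj e x - hproj e x0 := by
      simp only [hproj, inner_sub_left]; module
    rw [h2, ← h]
    nth_rewrite 1 [this]
    module
  rw [h1]
  refine (norm_add_le _ _).trans (add_le_add ?_ ?_)
  · refine (norm_hproj_le he _).trans ?_
    simpa [dist_eq_norm] using hC hx
  · rw [norm_smul, he, mul_one]; exact hJ _ hw1

lemma vol_cst {n : ℕ} {e : Eu n} (he : ‖e‖ = 1) {C : Set (Eu n)} (hC : Bornology.IsBounded C) (a b : ℝ) :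
    volume (cst e C (Set.Ico a b)) = ENNReal.ofReal (b - a) * qv e C := by
  obtain ⟨R, hR⟩ := hC.subset_closedBall 0
  let ν : Measure ℝ := Measure.map (fun w : Eu n => (inner ℝ w e : ℝ)) (volume.restrict (cyl e C))
  have hν : ∀ J, MeasurableSet J → ν J = volume (cst e C J) := by
    intro J hJ
    simp only [ν]
    rw [Measure.map_apply (inner_meas e) hJ, Measure.restrict_apply (inner_meas e hJ)]
    rfl
  have i1 : ν.IsAddLeftInvariant := by
    constructor
    intro s
    ext J hJ
    rw [Measure.map_apply (by fun_prop) hJ, hν _ (hJ.preimage (by fun_prop)), hν _ hJ]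
    rw [← vol_preimage_add (cst e C J) (s • e)]
    congr 1
    ext w
    simp only [cst, Set.mem_inter_iff, Set.mem_ofPred_eq, Set.mem_preimage, mem_cyl_add, inner_add_smul he]
    rw [add_comm]
  have i2 : IsFiniteMeasureOnCompacts ν := by
    constructor
    intro K hK
    rw [hν K hK.measurableSet]
    obtain ⟨M, hM⟩ := hK.isBounded.subset_closedBall 0
    refine (measure_mono (cst_subset_closedBall he hR (M := M) fun s hs => ?_)).trans_lt measure_closedBall_lt_top
    simpa using hM hs
  obtain ⟨c, hc⟩ : ∃ c : NNReal, ν = c • volume := ⟨_, Measure.isAddLeftInvariant_eq_smul ν volume⟩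
  have h1 : ν (Set.Ico a b) = c * ENNReal.ofReal (b - a) := by rw [hc, Measure.smul_apply, Real.volume_Ico]; rfl
  have h2 : ν (Set.Ico 0 1) = c * ENNReal.ofReal (1 - 0) := by rw [hc, Measure.smul_apply, Real.volume_Ico]; rfl
  rw [hν _ measurableSet_Ico] at h1 h2
  rw [h1, qv, h2]
  simp [mul_comm]

lemma cyl_smul {n : ℕ} {e : Eu n} {C : Set (Eu n)} {r : ℝ} (hr : 0 < r) (w : Eu n) :
    r⁻¹ • w ∈ cyl e C ↔ w ∈ cyl e ((fun x => r • x) '' C) := by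
  constructor
  · rintro ⟨x, hx, s, h⟩
    refine ⟨r • x, ⟨x, hx, rfl⟩, r * s, ?_⟩
    have : w = r • (r⁻¹ • w) := by rw [smul_smul, mul_inv_cancel₀ hr.ne', one_smul]
    rw [this, h]; module
  · rintro ⟨_, ⟨x, hx, rfl⟩, s, h⟩
    refine ⟨x, hx, r⁻¹ * s, ?_⟩
    simp only [h, smul_add, smul_smul, inv_mul_cancel₀ hr.ne', one_smul]

lemma qv_smul {n : ℕ} {e : Eu n} (he : ‖e‖ = 1) {C : Set (Eu n)} (hC : Bornology.IsBounded C) {r : ℝ}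
    (hr : 0 < r) :
    ENNReal.ofReal r * qv e ((fun x => r • x) '' C) = ENNReal.ofReal (r ^ n) * qv e C := by
  have hb : Bornology.IsBounded ((fun x => r • x) '' C) := by
    obtain ⟨R, hR⟩ := hC.subset_closedBall 0
    refine (isBounded_closedBall (x := (0 : Eu n)) (r := r * R)).subset ?_
    rintro _ ⟨x, hx, rfl⟩
    have := hR hx
    simp only [mem_closedBall, dist_zero_right, norm_smul, Real.norm_eq_abs, abs_of_pos hr] at this ⊢
    gcongr
  have h1 := vol_cst he hb 0 r
  rw [sub_zero] at h1
  rw [← h1]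
  have h2 : cst e ((fun x => r • x) '' C) (Set.Ico 0 r) = r • cst e C (Set.Ico 0 1) := by
    ext w
    rw [Set.mem_smul_set_iff_inv_smul_mem₀ hr.ne']
    simp only [cst, Set.mem_inter_iff, Set.mem_ofPred_eq, cyl_smul hr, Set.mem_Ico, inner_smul_left]
    simp only [map_inv₀, conj_trivial]
    rw [inv_mul_lt_one₀ hr]
    have : 0 ≤ r⁻¹ * (inner ℝ w e : ℝ) ↔ 0 ≤ (inner ℝ w e : ℝ) := by
      constructor
      · intro h; by_contra h'; push Not at h'
        have := mul_neg_of_pos_of_neg (inv_pos.2 hr) h'; linarith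
      · intro h; positivity
    rw [this]
  rw [h2, Measure.addHaar_smul]
  simp [qv, abs_of_pos hr]

/-- the optimal constant -/
def kap (n : ℕ) : ℝ≥0∞ := ⨆ (e : Eu n) (_ : ‖e‖ = 1) (C : Set (Eu n)) (_ : ediam C ≤ 1), qv e C

lemma qv_le_kap {n : ℕ} {e : Eu n} (he : ‖e‖ = 1) {C : Set (Eu n)} (hC : ediam C ≤ 1) : qv e C ≤ kap n :=
  le_iSup₂_of_le e he (le_iSup₂_of_le C hC le_rfl)

lemma subset_closedBall_of_ediam {n : ℕ} {C : Set (Eu n)} {d : ℝ} (hd : 0 ≤ d) (hC : ediam C ≤ ENNReal.ofReal d)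
    {x : Eu n} (hx : x ∈ C) : C ⊆ closedBall x d := by
  intro y hy
  have := (edist_le_ediam_of_mem hy hx).trans hC
  rw [edist_dist, ENNReal.ofReal_le_ofReal_iff hd] at this
  exact this

lemma qv_empty {n : ℕ} (e : Eu n) : qv e (∅ : Set (Eu n)) = 0 := by
  have : cst e (∅ : Set (Eu n)) (Set.Ico 0 1) = ∅ := by
    ext w; simp [cst, cyl]
  rw [qv, this, measure_empty]

lemma kap_lt_top (n : ℕ) : kap n < ∞ := by
  have : kap n ≤ volume (closedBall (0 : Eu n) (1 + 1)) := by
    refine iSup₂_le fun e he => iSup₂_le fun C hC => ?_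
    rcases C.eq_empty_or_nonempty with rfl | ⟨x, hx⟩
    · simp [qv_empty]
    · have h1 := subset_closedBall_of_ediam zero_le_one (by simpa using hC) hx
      refine (measure_mono (cst_subset_closedBall he h1 (M := 1) fun s hs => ?_)).trans (le_of_eq ?_)
      · rw [abs_of_nonneg hs.1]; exact hs.2.le
      · rw [vol_closedBall _ (by norm_num), vol_closedBall _ (by norm_num)]
  exact this.trans_lt measure_closedBall_lt_top

lemma kap_pos {n : ℕ} {e : Eu n} (he : ‖e‖ = 1) : 0 < kap n := by
  have h1 : ediam (ball (0 : Eu n) (1/2)) ≤ 1 := by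
    refine ediam_le fun x hx y hy => ?_
    rw [edist_dist]
    have := dist_triangle_right x y 0
    simp only [mem_ball] at hx hy
    refine ENNReal.ofReal_le_one.2 (by linarith)
  refine lt_of_lt_of_le ?_ (qv_le_kap he h1)
  refine lt_of_lt_of_le (measure_ball_pos volume ((1/2:ℝ) • e) (show (0:ℝ) < 1/2 by norm_num)) (measure_mono ?_)
  intro w hw
  have hw' : ‖w - (1/2:ℝ) • e‖ < 1/2 := by rwa [mem_ball, dist_eq_norm] at hw
  refine ⟨?_, w - (1/2:ℝ) • e, by simpa using hw', 1/2, by module⟩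
  have h3 := abs_inner_le he (w - (1/2:ℝ) • e)
  have h4 : (inner ℝ (w - (1/2:ℝ) • e) e : ℝ) = inner ℝ w e - 1/2 := by
    rw [inner_sub_left, inner_smul_left, inner_self_one he]; simp
  rw [h4] at h3
  have := abs_lt.1 (h3.trans_lt hw')
  exact ⟨by linarith [this.1], by linarith [this.2]⟩

lemma qv_le_of_ediam {n : ℕ} {e : Eu n} (he : ‖e‖ = 1) {C : Set (Eu n)} {d : ℝ} (hd : 0 < d)
    (hC : ediam C ≤ ENNReal.ofReal d) :
    qv e C ≤ kap n * ENNReal.ofReal d ^ ((n : ℝ) - 1) := by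
  have hb : ediam ((fun x => d⁻¹ • x) '' C) ≤ 1 := by
    have := ediam_smul₀ (d⁻¹ : ℝ) C
    rw [show (fun x : Eu n => d⁻¹ • x) '' C = d⁻¹ • C from rfl, this]
    rw [ENNReal.smul_def, smul_eq_mul]
    refine (mul_le_mul_right hC _).trans (le_of_eq ?_)
    rw [← ENNReal.ofReal_coe_nnreal, ← ENNReal.ofReal_mul (by positivity)]
    simp [abs_of_pos hd, hd.ne']
  have hbd : Bornology.IsBounded ((fun x => d⁻¹ • x) '' C) := by
    rw [Metric.isBounded_iff_ediam_ne_top]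
    exact (hb.trans_lt one_lt_top).ne
  have h1 := qv_smul he hbd hd
  have h2 : (fun x => d • x) '' ((fun x => d⁻¹ • x) '' C) = C := by
    rw [← Set.image_comp]
    simp [Function.comp_def, smul_smul, hd.ne']
  rw [h2] at h1
  have hd0 : ENNReal.ofReal d ≠ 0 := by simpa using hd
  have h3 : ENNReal.ofReal d * qv e C ≤ ENNReal.ofReal d * (kap n * ENNReal.ofReal d ^ ((n : ℝ) - 1)) := by
    rw [h1]
    refine (mul_le_mul_right (qv_le_kap he hb) _).trans (le_of_eq ?_)
    rw [ENNReal.rpow_sub _ _ hd0 ofReal_ne_top, ENNReal.rpow_one, ENNReal.rpow_natCast, ENNReal.ofReal_pow hd.le]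
    rw [mul_left_comm, ENNReal.mul_div_cancel hd0 ofReal_ne_top, mul_comm]
  exact (ENNReal.mul_le_mul_iff_right hd0 ofReal_ne_top).1 h3

lemma qv_le_ediam {n : ℕ} {e : Eu n} (he : ‖e‖ = 1) {C : Set (Eu n)} (hC : ediam C ≠ ∞) (hn : 1 ≤ n) :
    qv e C ≤ kap n * ediam C ^ ((n : ℝ) - 1) := by
  have hn' : (0:ℝ) ≤ (n:ℝ) - 1 := by
    have : (1:ℝ) ≤ n := by exact_mod_cast hn
    linarith
  have ht : Tendsto (fun η : ℝ => kap n * ENNReal.ofReal ((ediam C).toReal + η) ^ ((n : ℝ) - 1)) (𝓝[>] 0)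
      (𝓝 (kap n * ENNReal.ofReal ((ediam C).toReal + 0) ^ ((n : ℝ) - 1))) := by
    refine ENNReal.Tendsto.const_mul ?_ (Or.inr (kap_lt_top n).ne)
    refine ((ENNReal.continuous_rpow_const).tendsto _).comp ?_
    refine (ENNReal.continuous_ofReal.tendsto _).comp ?_
    refine ((continuous_const.add continuous_id).tendsto _).mono_left nhdsWithin_le_nhds
  rw [add_zero, ENNReal.ofReal_toReal hC] at ht
  refine ge_of_tendsto ht ?_
  filter_upwards [self_mem_nhdsWithin] with η hη
  have hη' : (0:ℝ) < η := hη
  refine qv_le_of_ediam he (by positivity) ?_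
  rw [ENNReal.ofReal_add toReal_nonneg hη'.le, ENNReal.ofReal_toReal hC]
  exact le_self_add


end

section
open scoped Topology Pointwise

lemma sweep_subset_cst {n : ℕ} {e : Eu n} (he : ‖e‖ = 1) {C : Set (Eu n)} {d t : ℝ} (hd : 0 < d) (ht : 0 < t)
    {x0 : Eu n} (hC : C ⊆ closedBall x0 d) :
    sweep C (t • e) ⊆ cst e C (Set.Ico (inner ℝ x0 e - d) (inner ℝ x0 e + t + 2 * d)) := by
  rintro y ⟨x, hx, s, ⟨hs0, hs1⟩, rfl⟩
  refine ⟨?_, x, hx, s * t, by module⟩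
  have h1 := abs_inner_le he (x - x0)
  have h2 : ‖x - x0‖ ≤ d := by simpa [dist_eq_norm] using hC hx
  rw [inner_sub_left] at h1
  have h3 := abs_le.1 (h1.trans h2)
  have h4 : (inner ℝ (x + s • t • e) e : ℝ) = inner ℝ x e + s * t := by
    rw [smul_smul, inner_add_smul he]
  have h5 : 0 ≤ s * t := by positivity
  have h6 : s * t ≤ t := by nlinarith
  change (inner ℝ (x + s • t • e) e : ℝ) ∈ Set.Ico (inner ℝ x0 e - d) (inner ℝ x0 e + t + 2 * d)
  rw [h4]
  exact ⟨by linarith [h3.1], by linarith [h3.2]⟩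

lemma vol_sweep_le {n : ℕ} (hn : 1 ≤ n) {e : Eu n} (he : ‖e‖ = 1) {C : Set (Eu n)} {d t : ℝ} (hd : 0 < d)
    (ht : 0 < t) (hC : ediam C ≤ ENNReal.ofReal d) :
    volume (sweep C (t • e)) ≤ ENNReal.ofReal (t + 3 * d) * (kap n * ⨆ _ : C.Nonempty, ediam C ^ ((n : ℝ) - 1)) := by
  rcases C.eq_empty_or_nonempty with rfl | hne
  · have : sweep (∅ : Set (Eu n)) (t • e) = ∅ := by ext; simp [sweep]
    simp [this]
  · obtain ⟨x0, hx0⟩ := hne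
    have hCt : ediam C ≠ ∞ := (hC.trans_lt ofReal_lt_top).ne
    have hb : Bornology.IsBounded C := Metric.isBounded_iff_ediam_ne_top.2 hCt
    refine (measure_mono (sweep_subset_cst he hd ht (subset_closedBall_of_ediam hd.le hC hx0))).trans ?_
    rw [vol_cst he hb]
    refine mul_le_mul (ENNReal.ofReal_le_ofReal (by linarith)) ?_ (by positivity) (by positivity)
    refine (qv_le_ediam he hCt hn).trans ?_
    gcongr
    exact le_iSup (fun _ : C.Nonempty => ediam C ^ ((n : ℝ) - 1)) ⟨x0, hx0⟩

lemma sweep_iUnion_subset {n : ℕ} {A : Set (Eu n)} {T : ℕ → Set (Eu n)} (h : A ⊆ ⋃ i, T i) (v : Eu n) :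
    sweep A v ⊆ ⋃ i, sweep (T i) v := by
  rintro y ⟨x, hx, s, hs, rfl⟩
  obtain ⟨i, hi⟩ := Set.mem_iUnion.1 (h hx)
  exact Set.mem_iUnion.2 ⟨i, x, hi, s, hs, rfl⟩

lemma vol_sweep_hausdorff {n : ℕ} {e : Eu n} (he : ‖e‖ = 1) {t : ℝ} (ht : 0 < t) (A : Set (Eu n)) :
    volume (sweep A (t • e)) ≤ kap n * ENNReal.ofReal t * μH[(n:ℝ) - 1] A := by
  have hn : 1 ≤ n := by
    by_contra h
    have : n = 0 := by omega
    subst this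
    have : e = 0 := Subsingleton.elim _ _
    simp [this] at he
  by_cases htop : μH[(n:ℝ) - 1] A = ∞
  · rw [htop, ENNReal.mul_top]
    · exact le_top
    · exact mul_ne_zero (kap_pos he).ne' (by simpa using ht)
  have key : ∀ d : ℝ, 0 < d → volume (sweep A (t • e)) ≤ kap n * ENNReal.ofReal (t + 3 * d) * μH[(n:ℝ) - 1] A := by
    intro d hd
    have h1 : (⨅ (T : ℕ → Set (Eu n)) (_ : A ⊆ ⋃ i, T i) (_ : ∀ i, ediam (T i) ≤ ENNReal.ofReal d),
        ∑' i, ⨆ _ : (T i).Nonempty, ediam (T i) ^ ((n:ℝ) - 1)) ≤ μH[(n:ℝ) - 1] A := by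
      rw [Measure.hausdorffMeasure_apply]
      exact le_iSup₂ (f := fun (r : ℝ≥0∞) (_ : 0 < r) => ⨅ (T : ℕ → Set (Eu n)) (_ : A ⊆ ⋃ i, T i)
        (_ : ∀ i, ediam (T i) ≤ r), ∑' i, ⨆ _ : (T i).Nonempty, ediam (T i) ^ ((n:ℝ) - 1))
        (ENNReal.ofReal d) (by simpa using hd)
    refine le_trans ?_ (mul_le_mul_right h1 _)
    have hk0 : kap n * ENNReal.ofReal (t + 3 * d) ≠ ∞ := mul_ne_top (kap_lt_top n).ne ofReal_ne_top
    rw [ENNReal.mul_iInf_of_ne (mul_ne_zero (kap_pos he).ne' (by simp; positivity)) hk0]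
    refine le_iInf fun T => ?_
    rw [ENNReal.mul_iInf_of_ne (mul_ne_zero (kap_pos he).ne' (by simp; positivity)) hk0]
    refine le_iInf fun hT => ?_
    rw [ENNReal.mul_iInf_of_ne (mul_ne_zero (kap_pos he).ne' (by simp; positivity)) hk0]
    refine le_iInf fun hTd => ?_
    refine (measure_mono (sweep_iUnion_subset hT _)).trans ((measure_iUnion_le _).trans ?_)
    rw [← ENNReal.tsum_mul_left]
    refine ENNReal.tsum_le_tsum fun i => ?_
    refine (vol_sweep_le hn he hd ht (hTd i)).trans (le_of_eq (by ring))
  have ht2 : Tendsto (fun d : ℝ => kap n * ENNReal.ofReal (t + 3 * d) * μH[(n:ℝ) - 1] A) (𝓝[>] 0)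
      (𝓝 (kap n * ENNReal.ofReal (t + 3 * 0) * μH[(n:ℝ) - 1] A)) := by
    refine ENNReal.Tendsto.mul_const ?_ (Or.inr htop)
    refine ENNReal.Tendsto.const_mul ?_ (Or.inr (kap_lt_top n).ne)
    refine (ENNReal.continuous_ofReal.tendsto _).comp ?_
    exact (Continuous.tendsto (by fun_prop) _).mono_left nhdsWithin_le_nhds
  rw [mul_zero, add_zero] at ht2
  refine ge_of_tendsto ht2 ?_
  filter_upwards [self_mem_nhdsWithin] with d hd using key d hd

/-- `μ` dominates the variation of `E`. -/
def Dp {n : ℕ} (κ : ℝ≥0∞) (E : Set (Eu n)) (μ : Measure (Eu n)) : Prop :=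
  ∀ K : Set (Eu n), IsCompact K → ∀ h : Eu n, volume (K ∩ diffSet E h) ≤ κ * ENNReal.ofReal ‖h‖ * μ (sweep K h)

lemma Dp_hausdorff {n : ℕ} {E : Set (Eu n)} (hE : MeasurableSet E) :
    Dp (kap n) E ((μH[(n:ℝ) - 1]).restrict (essBoundary E)) := by
  intro K hK h
  by_cases hh : h = 0
  · subst hh; simp [diffSet]
  obtain ⟨e, he, heq⟩ := exists_unit_dir hh
  have hpos : 0 < ‖h‖ := norm_pos_iff.2 hh
  rw [Measure.restrict_apply (isCompact_sweep hK h).measurableSet]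
  have hne : ‖-e‖ = 1 := by rwa [norm_neg]
  refine le_trans ?_ (vol_sweep_hausdorff hne hpos _)
  rw [smul_neg, ← heq]
  refine measure_mono_ae ?_
  filter_upwards [slice hE h] with x hx hxK
  obtain ⟨s, hs, hb⟩ := hx hxK.2
  exact ⟨x + s • h, ⟨⟨x, hxK.1, s, hs, rfl⟩, hb⟩, s, hs, by module⟩


end

section
open scoped Topology Pointwise

lemma qv_rot {n : ℕ} (U : Eu n ≃ₗᵢ[ℝ] Eu n) (e : Eu n) (C : Set (Eu n)) :
    qv (U e) (U '' C) = qv e C := by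
  have : cst e C (Set.Ico 0 1) = U ⁻¹' cst (U e) (U '' C) (Set.Ico 0 1) := by
    ext w
    simp only [cst, Set.mem_inter_iff, Set.mem_ofPred_eq, Set.mem_preimage, LinearIsometryEquiv.inner_map_map]
    refine and_congr_right fun _ => ?_
    constructor
    · rintro ⟨x, hx, s, rfl⟩
      exact ⟨U x, ⟨x, hx, rfl⟩, s, by simp⟩
    · rintro ⟨_, ⟨x, hx, rfl⟩, s, h⟩
      refine ⟨x, hx, s, U.injective ?_⟩
      rw [h]; simp
  rw [qv, qv, this]
  exact ((U.measurePreserving).measure_preimage_emb U.toHomeomorph.measurableEmbedding _).symm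

lemma exists_rot {n : ℕ} {e f : Eu n} (he : ‖e‖ = 1) (hf : ‖f‖ = 1) : ∃ U : Eu n ≃ₗᵢ[ℝ] Eu n, U e = f :=
  ⟨(ℝ ∙ (e - f))ᗮ.reflection, Submodule.reflection_sub (by rw [he, hf])⟩

lemma qv_mono {n : ℕ} {e : Eu n} {C D : Set (Eu n)} (h : C ⊆ D) : qv e C ≤ qv e D := by
  refine measure_mono ?_
  rintro w ⟨h1, x, hx, s, rfl⟩
  exact ⟨h1, x, h hx, s, rfl⟩

lemma exists_shape {n : ℕ} {ε : ℝ} (hε : 0 < ε) (hε1 : ε < 1) : ∃ R0 : ℝ, 0 < R0 ∧ ∀ ν : Eu n, ‖ν‖ = 1 →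
    ∃ C : Set (Eu n), IsCompact C ∧ C ⊆ closedBall 0 R0 ∧ ediam C ≤ ENNReal.ofReal (1 + ε) ∧
      ENNReal.ofReal (1 - ε) * kap n ≤ qv ν C ∧ (interior C).Nonempty := by
  by_cases hu : ∃ e : Eu n, ‖e‖ = 1
  swap
  · push Not at hu
    exact ⟨1, one_pos, fun ν hν => absurd hν (hu ν)⟩
  obtain ⟨e0, he0⟩ := hu
  have h1 : ENNReal.ofReal (1 - ε) * kap n < kap n := by
    nth_rewrite 2 [← one_mul (kap n)]
    refine ENNReal.mul_lt_mul_left (kap_pos he0).ne' (kap_lt_top n).ne ?_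
    exact ENNReal.ofReal_lt_one.2 (by linarith)
  nth_rewrite 2 [kap] at h1
  simp only [lt_iSup_iff] at h1
  obtain ⟨e1, he1, C1, hC1, hq⟩ := h1
  have hne : C1.Nonempty := by
    by_contra h
    rw [Set.not_nonempty_iff_eq_empty] at h
    subst h
    simp [qv_empty] at hq
  obtain ⟨x1, hx1⟩ := hne
  have hsub := subset_closedBall_of_ediam zero_le_one (by simpa using hC1) hx1
  have hd : ediam (cthickening (ε/2) C1) ≤ ENNReal.ofReal (1 + ε) := by
    have := ediam_cthickening_le (s := C1) (Real.toNNReal (ε/2))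
    rw [Real.coe_toNNReal _ (by positivity)] at this
    refine this.trans ?_
    rw [ENNReal.ofReal_add zero_le_one hε.le, ENNReal.ofReal_one]
    refine add_le_add hC1 (le_of_eq ?_)
    change 2 * ENNReal.ofReal (ε/2) = _
    rw [← ENNReal.ofReal_ofNat 2, ← ENNReal.ofReal_mul (by norm_num)]
    congr 1; ring
  have hsub2 := subset_closedBall_of_ediam (by positivity) hd (self_subset_cthickening C1 hx1)
  refine ⟨‖x1‖ + (1 + ε), by positivity, fun ν hν => ?_⟩
  obtain ⟨U, rfl⟩ := exists_rot he1 hν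
  have hcomp : IsCompact (cthickening (ε/2) C1) :=
    Metric.isCompact_of_isClosed_isBounded isClosed_cthickening (isBounded_closedBall.subset hsub2)
  refine ⟨U '' cthickening (ε/2) C1, hcomp.image U.continuous, ?_, ?_, ?_, ?_⟩
  · rintro _ ⟨x, hx, rfl⟩
    have h3 := hsub2 hx
    rw [mem_closedBall, dist_eq_norm] at h3
    rw [mem_closedBall, dist_zero_right, U.norm_map]
    have := norm_add_le x1 (x - x1)
    rw [add_sub_cancel] at this
    linarith
  · rw [U.isometry.ediam_image]; exact hd
  · rw [qv_rot]; exact hq.le.trans (qv_mono (self_subset_cthickening C1))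
  · refine ⟨U x1, ?_⟩
    refine interior_mono (Set.image_mono (thickening_subset_cthickening (ε/2) C1)) ?_
    have ho : IsOpen (U '' thickening (ε/2) C1) := U.toHomeomorph.isOpenMap _ isOpen_thickening
    rw [ho.interior_eq]
    exact ⟨x1, self_subset_thickening (by positivity) C1 hx1, rfl⟩

lemma exists_box {n : ℕ} {ε τ : ℝ} (hε : 0 < ε) (hε1 : ε < 1) (hτ : 0 < τ) : ∃ R0 : ℝ, 0 < R0 ∧ ∀ ν : Eu n, ‖ν‖ = 1 →
    ∃ K1 : Set (Eu n), IsCompact K1 ∧ (∀ w ∈ K1, (inner ℝ w ν : ℝ) ∈ Set.Icc (-τ) 0) ∧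
      ENNReal.ofReal τ * (ENNReal.ofReal (1 - ε) * kap n) ≤ volume K1 ∧ 
      K1 ⊆ closedBall 0 R0 ∧
      sweep K1 (τ • ν) ⊆ closedBall 0 R0 ∧ ediam (sweep K1 (τ • ν)) ≤ ENNReal.ofReal (1 + ε + 2 * τ) ∧
      (interior (sweep K1 (τ • ν))).Nonempty := by
  obtain ⟨R0, hR0, hC⟩ := exists_shape (n := n) hε hε1
  refine ⟨R0 + τ, by positivity, fun ν hν => ?_⟩
  obtain ⟨C, hCc, hCb, hCd, hCq, x, hx⟩ := hC ν hν
  have hin : ∀ x s, (inner ℝ (hproj ν x + s • ν) ν : ℝ) = s := fun x s => by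
    rw [inner_add_smul hν, hproj, inner_sub_left, inner_smul_left, inner_self_one hν]; simp
  have hK : cst ν C (Set.Icc (-τ) 0) =
      (fun p : Eu n × ℝ => hproj ν p.1 + p.2 • ν) '' (C ×ˢ Set.Icc (-τ) 0) := by
    ext w
    constructor
    · rintro ⟨h1, hw2⟩
      obtain ⟨x, hx, h⟩ := hproj_of_cyl hν hw2
      refine ⟨(x, inner ℝ w ν), ⟨hx, h1⟩, ?_⟩
      change hproj ν x + (inner ℝ w ν : ℝ) • ν = w
      rw [← h, hproj]; module
    · rintro ⟨⟨x, s⟩, ⟨hx, hs⟩, rfl⟩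
      refine ⟨?_, x, hx, s - inner ℝ x ν, ?_⟩
      · simp only [Set.mem_ofPred_eq, hin]; exact hs
      · simp only [hproj]; module
  have hcont : Continuous (fun p : Eu n × ℝ => hproj ν p.1 + p.2 • ν) := by
    unfold hproj; fun_prop
  have hsw : ∀ y ∈ sweep (cst ν C (Set.Icc (-τ) 0)) (τ • ν), ∃ x ∈ C, ∃ s ∈ Set.Icc (-τ) τ, y = hproj ν x + s • ν := by
    rintro _ ⟨w, hw, s, hs, rfl⟩
    rw [hK] at hw
    obtain ⟨⟨x, u⟩, ⟨hx, hu⟩, rfl⟩ := hw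
    simp only at hu
    refine ⟨x, hx, u + s * τ, ⟨?_, ?_⟩, by simp only; module⟩
    · have : 0 ≤ s * τ := mul_nonneg hs.1 hτ.le
      linarith [hu.1]
    · have : s * τ ≤ τ := by nlinarith [hs.2]
      linarith [hu.2]
  have hsub : cst ν C (Set.Icc (-τ) 0) ⊆ sweep (cst ν C (Set.Icc (-τ) 0)) (τ • ν) := fun w hw =>
    ⟨w, hw, 0, by simp, by simp⟩
  have hbd : sweep (cst ν C (Set.Icc (-τ) 0)) (τ • ν) ⊆ closedBall 0 (R0 + τ) := by
    intro y hy
    obtain ⟨x, hx, s, hs, rfl⟩ := hsw y hy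
    rw [mem_closedBall, dist_zero_right]
    refine (norm_add_le _ _).trans (add_le_add ((norm_hproj_le hν _).trans (by simpa using hCb hx)) ?_)
    rw [norm_smul, hν, mul_one, Real.norm_eq_abs]
    exact abs_le.2 hs
  refine ⟨cst ν C (Set.Icc (-τ) 0), ?_, fun w hw => hw.1, ?_, hsub.trans hbd, hbd, ?_, ?_⟩
  · rw [hK]; exact (hCc.prod isCompact_Icc).image hcont
  · refine (mul_le_mul_right hCq _).trans ?_
    have := vol_cst hν hCc.isBounded (-τ) 0
    rw [zero_sub, neg_neg] at this
    rw [← this]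
    refine measure_mono (fun w hw => ⟨Set.Ico_subset_Icc_self hw.1, hw.2⟩)
  · refine ediam_le fun y hy z hz => ?_
    obtain ⟨x, hx, s, hs, rfl⟩ := hsw y hy
    obtain ⟨x', hx', s', hs', rfl⟩ := hsw z hz
    rw [edist_dist]
    refine ENNReal.ofReal_le_ofReal ?_
    rw [dist_eq_norm]
    have h1 : hproj ν x + s • ν - (hproj ν x' + s' • ν) = hproj ν (x - x') + (s - s') • ν := by
      simp only [hproj, inner_sub_left]; module
    rw [h1]
    refine (norm_add_le _ _).trans (add_le_add ((norm_hproj_le hν _).trans ?_) ?_)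
    · have := subset_closedBall_of_ediam (by positivity) hCd hx' hx
      rwa [mem_closedBall, dist_eq_norm] at this
    · rw [norm_smul, hν, mul_one, Real.norm_eq_abs]
      refine abs_le.2 ⟨by linarith [hs.1, hs'.2], by linarith [hs.2, hs'.1]⟩
  · obtain ⟨ρ, hρ, hball⟩ := Metric.mem_nhds_iff.1 (mem_interior_iff_mem_nhds.1 hx)
    refine ⟨hproj ν x, mem_interior_iff_mem_nhds.2 (Metric.mem_nhds_iff.2 ⟨min ρ τ, by positivity, ?_⟩)⟩
    intro w hw
    rw [mem_ball, dist_eq_norm, lt_min_iff] at hw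
    have hc : w ∈ cyl ν C := by
      refine ⟨w + (inner ℝ x ν : ℝ) • ν, hball ?_, -(inner ℝ x ν : ℝ), by module⟩
      rw [mem_ball, dist_eq_norm]
      have : w + (inner ℝ x ν : ℝ) • ν - x = w - hproj ν x := by simp only [hproj]; module
      rw [this]; exact hw.1
    have hh : |(inner ℝ w ν : ℝ)| < τ := by
      have h1 := abs_inner_le hν (w - hproj ν x)
      have h2 := hin x 0
      rw [zero_smul, add_zero] at h2
      rw [inner_sub_left, h2, sub_zero] at h1
      linarith [hw.2]
    have hh' := abs_lt.1 hh
    by_cases h0 : (inner ℝ w ν : ℝ) ≤ 0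
    · exact hsub ⟨⟨hh'.1.le, h0⟩, hc⟩
    · push Not at h0
      refine ⟨w + (-τ) • ν, ⟨?_, (mem_cyl_add _ _).2 hc⟩, 1, by simp, by module⟩
      simp only [Set.mem_ofPred_eq, inner_add_smul hν]
      exact ⟨by linarith, by linarith [hh'.2]⟩


end

section
open scoped Topology Pointwise CompactlySupported

/-- vague convergence along a filter -/
def VL {n : ℕ} (𝒰 : Filter ℕ) (ν : ℕ → Measure (Eu n)) (μ : Measure (Eu n)) : Prop :=
  ∀ φ : Eu n → ℝ, Continuous φ → HasCompactSupport φ →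
    Tendsto (fun i => ∫ x, φ x ∂(ν i)) 𝒰 (𝓝 (∫ x, φ x ∂μ))

lemma exists_bump {n : ℕ} {K U : Set (Eu n)} (hK : IsCompact K) (hU : IsOpen U) (hKU : K ⊆ U) :
    ∃ φ : Eu n → ℝ, Continuous φ ∧ HasCompactSupport φ ∧ (∀ x, 0 ≤ φ x) ∧ (∀ x, φ x ≤ 1) ∧
      (∀ x ∈ K, φ x = 1) ∧ (∀ x, x ∉ U → φ x = 0) := by
  obtain ⟨f, h1, h2, h3, h4⟩ := exists_continuousMap_one_of_isCompact_subset_isOpen hK hU hKU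
  refine ⟨f, f.continuous, h2, fun x => (h4 x).1, fun x => (h4 x).2, fun x hx => h1 hx, fun x hx => ?_⟩
  exact image_eq_zero_of_notMem_tsupport fun h => hx (h3 h)

lemma meas_le_integral {n : ℕ} {μ : Measure (Eu n)} [IsFiniteMeasure μ] {K : Set (Eu n)} (hK : MeasurableSet K)
    {φ : Eu n → ℝ} (h1 : Continuous φ) (h2 : HasCompactSupport φ) (h3 : ∀ x, 0 ≤ φ x) (h4 : ∀ x ∈ K, φ x = 1) :
    (μ K).toReal ≤ ∫ x, φ x ∂μ := by
  have : (μ K).toReal = ∫ x, K.indicator 1 x ∂μ := by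
    rw [integral_indicator_one hK]; rfl
  rw [this]
  refine integral_mono ((integrable_const (1:ℝ)).indicator hK) (h1.integrable_of_hasCompactSupport h2) fun x => ?_
  by_cases hx : x ∈ K
  · simp [hx, h4 x hx]
  · simp [hx, h3 x]

lemma integral_le_meas {n : ℕ} {μ : Measure (Eu n)} [IsFiniteMeasure μ] {U : Set (Eu n)} (hU : MeasurableSet U)
    {φ : Eu n → ℝ} (h1 : Continuous φ) (h2 : HasCompactSupport φ) (h3 : ∀ x, φ x ≤ 1) (h4 : ∀ x, x ∉ U → φ x = 0) :
    ∫ x, φ x ∂μ ≤ (μ U).toReal := by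
  have : (μ U).toReal = ∫ x, U.indicator 1 x ∂μ := by
    rw [integral_indicator_one hU]; rfl
  rw [this]
  refine integral_mono (h1.integrable_of_hasCompactSupport h2) ((integrable_const (1:ℝ)).indicator hU) fun x => ?_
  by_cases hx : x ∈ U
  · simp [hx, h3 x]
  · simp [hx, h4 x hx]

lemma exists_VL {n : ℕ} (𝒰 : Ultrafilter ℕ) (ν : ℕ → Measure (Eu n)) {M : ℝ≥0∞} (hM : M ≠ ∞)
    (hν : ∀ i, ν i Set.univ ≤ M) : ∃ μ : Measure (Eu n), μ Set.univ ≤ M ∧ VL 𝒰 ν μ := by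
  have hfin : ∀ i, IsFiniteMeasure (ν i) := fun i => ⟨(hν i).trans_lt hM.lt_top⟩
  have hlim : ∀ φ : C_c(Eu n, ℝ), ∃ l : ℝ, Tendsto (fun i => ∫ x, φ x ∂(ν i)) 𝒰 (𝓝 l) := by
    intro φ
    obtain ⟨C, hC⟩ := φ.hasCompactSupport.exists_bound_of_continuous φ.continuous
    have hb : ∀ i, (∫ x, φ x ∂(ν i)) ∈ closedBall (0:ℝ) (C * M.toReal) := by
      intro i
      rw [mem_closedBall, dist_zero_right]
      have hC0 : 0 ≤ C := (norm_nonneg _).trans (hC 0)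
      refine (norm_integral_le_of_norm_le_const (Eventually.of_forall hC)).trans ?_
      refine mul_le_mul_of_nonneg_left ?_ hC0
      exact ENNReal.toReal_mono hM (hν i)
    have := (isCompact_closedBall (0:ℝ) (C * M.toReal)).ultrafilter_le_nhds (𝒰.map fun i => ∫ x, φ x ∂(ν i))
      (by simp only [le_principal_iff, Ultrafilter.mem_coe, Ultrafilter.mem_map]
          exact Filter.mem_of_superset Filter.univ_mem fun i _ => hb i)
    obtain ⟨l, -, hl⟩ := this
    exact ⟨l, hl⟩
  choose Λ hΛ using hlim
  let L : C_c(Eu n, ℝ) →ₗ[ℝ] ℝ :=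
    { toFun := Λ
      map_add' := fun f g => by
        refine tendsto_nhds_unique (hΛ (f + g)) (((hΛ f).add (hΛ g)).congr fun i => ?_)
        exact (integral_add (μ := ν i) (f.continuous.integrable_of_hasCompactSupport f.hasCompactSupport)
          (g.continuous.integrable_of_hasCompactSupport g.hasCompactSupport)).symm
      map_smul' := fun c f => by
        refine tendsto_nhds_unique (hΛ (c • f)) (((hΛ f).const_mul c).congr fun i => ?_)
        rw [← integral_const_mul]
        rfl }
  let P : C_c(Eu n, ℝ) →ₚ[ℝ] ℝ := PositiveLinearMap.mk₀ L fun f hf => by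
    refine ge_of_tendsto (hΛ f) (Eventually.of_forall fun i => ?_)
    exact integral_nonneg fun x => hf x
  have hVL : VL 𝒰 ν (RealRMK.rieszMeasure P) := by
    intro φ h1 h2
    have := RealRMK.integral_rieszMeasure P ⟨⟨φ, h1⟩, h2⟩
    change ∫ x, φ x ∂(RealRMK.rieszMeasure P) = Λ ⟨⟨φ, h1⟩, h2⟩ at this
    rw [this]
    exact hΛ ⟨⟨φ, h1⟩, h2⟩
  refine ⟨RealRMK.rieszMeasure P, ?_, hVL⟩
  have hK : ∀ k : ℕ, RealRMK.rieszMeasure P (closedBall 0 k) ≤ M := by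
    intro k
    obtain ⟨φ, a1, a2, a3, a4, a5, -⟩ := exists_bump (isCompact_closedBall (0 : Eu n) k) isOpen_univ (Set.subset_univ _)
    have h2 := RealRMK.rieszMeasure_le_of_eq_one P (f := ⟨⟨φ, a1⟩, a2⟩) a3 (isCompact_closedBall (0 : Eu n) k) a5
    refine h2.trans ?_
    refine ENNReal.ofReal_le_of_le_toReal ?_
    refine le_of_tendsto (hΛ ⟨⟨φ, a1⟩, a2⟩) (Eventually.of_forall fun i => ?_)
    refine (integral_le_meas (U := Set.univ) MeasurableSet.univ a1 a2 a4 (by simp)).trans ?_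
    exact ENNReal.toReal_mono hM (hν i)
  have hU : (Set.univ : Set (Eu n)) = ⋃ k : ℕ, closedBall 0 (k:ℝ) := by
    rw [iUnion_closedBall_nat]
  rw [hU, Monotone.measure_iUnion]
  · exact iSup_le hK
  · intro a b hab
    exact closedBall_subset_closedBall (by exact_mod_cast hab)

lemma VL.upper {n : ℕ} {𝒰 : Filter ℕ} [𝒰.NeBot] {ν : ℕ → Measure (Eu n)} {μ : Measure (Eu n)} [IsFiniteMeasure μ]
    [∀ i, IsFiniteMeasure (ν i)]
    (h : VL 𝒰 ν μ) {K U : Set (Eu n)} (hK : IsCompact K) (hU : IsOpen U) (hKU : K ⊆ U) {c : ℝ≥0∞}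
    (hc : ∃ᶠ i in 𝒰, ν i U ≤ c) : μ K ≤ c := by
  by_cases hct : c = ∞
  · simp [hct]
  obtain ⟨φ, a1, a2, a3, a4, a5, a6⟩ := exists_bump hK hU hKU
  rw [← ENNReal.ofReal_toReal hct, ← ENNReal.ofReal_toReal (measure_ne_top μ K)]
  refine ENNReal.ofReal_le_ofReal ((meas_le_integral hK.measurableSet a1 a2 a3 a5).trans ?_)
  by_contra hlt
  push Not at hlt
  have := (h φ a1 a2).eventually (lt_mem_nhds hlt)
  obtain ⟨i, h1, h2⟩ := (hc.and_eventually this).exists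
  have := (integral_le_meas hU.measurableSet a1 a2 a4 a6).trans (ENNReal.toReal_mono hct h1)
  linarith

lemma VL.lower {n : ℕ} {𝒰 : Filter ℕ} [𝒰.NeBot] {ν : ℕ → Measure (Eu n)} {μ : Measure (Eu n)} [IsFiniteMeasure μ]
    [∀ i, IsFiniteMeasure (ν i)]
    (h : VL 𝒰 ν μ) {K : Set (Eu n)} (hK : IsCompact K) {c : ℝ≥0∞} (hct : c ≠ ∞)
    (hc : ∃ᶠ i in 𝒰, c ≤ ν i K) : c ≤ μ K := by
  rw [Set.measure_eq_iInf_isOpen]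
  refine le_iInf₂ fun U hKU => le_iInf fun hU => ?_
  obtain ⟨φ, a1, a2, a3, a4, a5, a6⟩ := exists_bump hK hU hKU
  rw [← ENNReal.ofReal_toReal hct, ← ENNReal.ofReal_toReal (measure_ne_top μ U)]
  refine ENNReal.ofReal_le_ofReal (le_trans ?_ (integral_le_meas hU.measurableSet a1 a2 a4 a6))
  by_contra hlt
  push Not at hlt
  have := (h φ a1 a2).eventually (gt_mem_nhds hlt)
  obtain ⟨i, h1, h2⟩ := (hc.and_eventually this).exists
  have := (ENNReal.toReal_mono (measure_ne_top _ _) h1).trans (meas_le_integral hK.measurableSet a1 a2 a3 a5)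
  linarith


end

section
open scoped Topology Pointwise

def xd {n : ℕ} (E F : Set (Eu n)) : Set (Eu n) := {x | ¬ (x ∈ E ↔ x ∈ F)}

lemma measurableSet_xd {n : ℕ} {E F : Set (Eu n)} (hE : MeasurableSet E) (hF : MeasurableSet F) :
    MeasurableSet (xd E F) := by
  have : xd E F = (E \ F) ∪ (F \ E) := by
    ext x; simp only [xd, Set.mem_ofPred_eq, Set.mem_union, Set.mem_sdiff]; tauto
  rw [this]
  exact (hE.diff hF).union (hF.diff hE)

lemma xd_comm {n : ℕ} (E F : Set (Eu n)) : xd E F = xd F E := by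
  ext x; simp only [xd, Set.mem_ofPred_eq]; tauto

lemma measurableSet_diff2 {n : ℕ} {E : Set (Eu n)} (hE : MeasurableSet E) :
    MeasurableSet {p : Eu n × Eu n | p.1 ∈ diffSet E p.2} := by
  have h1 : MeasurableSet {p : Eu n × Eu n | p.1 ∈ E} := measurable_fst hE
  have h2 : MeasurableSet {p : Eu n × Eu n | p.1 + p.2 ∈ E} := (measurable_fst.add measurable_snd) hE
  have : {p : Eu n × Eu n | p.1 ∈ diffSet E p.2} = ({p : Eu n × Eu n | p.1 ∈ E} \ {p : Eu n × Eu n | p.1 + p.2 ∈ E}) ∪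
      ({p : Eu n × Eu n | p.1 + p.2 ∈ E} \ {p : Eu n × Eu n | p.1 ∈ E}) := by
    ext p; simp only [diffSet, Set.mem_ofPred_eq, Set.mem_union, Set.mem_sdiff]; tauto
  rw [this]
  exact (h1.diff h2).union (h2.diff h1)

lemma fub {n : ℕ} {E : Set (Eu n)} (hE : MeasurableSet E) {W B : Set (Eu n)} (hW : MeasurableSet W)
    (hB : MeasurableSet B) :
    ∫⁻ x in W, volume (B ∩ {h | x ∈ diffSet E h}) = ∫⁻ h in B, volume (W ∩ diffSet E h) := by
  have hS := measurableSet_diff2 hE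
  have h1 := Measure.prod_apply (μ := volume.restrict W) (ν := volume.restrict B) hS
  have h2 := Measure.prod_apply_symm (μ := volume.restrict W) (ν := volume.restrict B) hS
  rw [h1] at h2
  have h3 : ∀ x : Eu n, (volume.restrict B) (Prod.mk x ⁻¹' {p : Eu n × Eu n | p.1 ∈ diffSet E p.2}) =
      volume (B ∩ {h | x ∈ diffSet E h}) := fun x => by
    rw [Measure.restrict_apply (measurable_prodMk_left hS), Set.inter_comm]; rfl
  have h4 : ∀ h : Eu n, (volume.restrict W) ((fun x => (x, h)) ⁻¹' {p : Eu n × Eu n | p.1 ∈ diffSet E p.2}) =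
      volume (W ∩ diffSet E h) := fun h => by
    rw [Measure.restrict_apply (measurable_prodMk_right hS), Set.inter_comm]; rfl
  simpa only [h3, h4] using h2

lemma vol_shift {n : ℕ} (x : Eu n) (δ : ℝ) (A : Set (Eu n)) :
    volume (ball 0 δ ∩ {h | x + h ∈ A}) = volume (ball x δ ∩ A) := by
  rw [← vol_preimage_add (ball x δ ∩ A) x]
  congr 1
  ext h
  simp [add_comm h x, mem_ball, dist_eq_norm]

/-- key inequality: at points where `E` and `F` differ -/
lemma vol_ball_le_of_xd {n : ℕ} {E F : Set (Eu n)} (hE : MeasurableSet E)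
    {x : Eu n} {δ : ℝ} (hxE : x ∈ E) (hxF : x ∉ F) :
    volume (ball x δ) + volume (ball x δ ∩ F) ≤ volume (ball 0 δ ∩ {h | x ∈ diffSet E h}) +
      volume (ball 0 δ ∩ {h | x ∈ diffSet F h}) + volume (ball x δ ∩ E) := by
  have h1 : {h : Eu n | x ∈ diffSet E h} = {h | x + h ∈ Eᶜ} := by
    ext h; simp [diffSet, hxE]
  have h2 : {h : Eu n | x ∈ diffSet F h} = {h | x + h ∈ F} := by
    ext h; simp [diffSet, hxF]
  rw [h1, h2, vol_shift, vol_shift]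
  have : volume (ball x δ) = volume (ball x δ ∩ E) + volume (ball x δ ∩ Eᶜ) := by
    rw [← Set.sdiff_eq, measure_inter_add_sdiff _ hE]
  rw [this]
  exact le_of_eq (by ring)

lemma int_diff_le {n : ℕ} {E : Set (Eu n)} (hE : MeasurableSet E) {W : Set (Eu n)} (hW : MeasurableSet W)
    {δ : ℝ} (hδ1 : δ ≤ 1) {C : ℝ≥0∞}
    (hC : ∀ h : Eu n, ‖h‖ ≤ 1 → volume (W ∩ diffSet E h) ≤ C * ENNReal.ofReal ‖h‖) :
    ∫⁻ x in W, volume (ball 0 δ ∩ {h | x ∈ diffSet E h}) ≤ C * ENNReal.ofReal δ * volume (ball (0 : Eu n) δ) := by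
  rw [fub hE hW measurableSet_ball]
  refine (setLIntegral_mono' measurableSet_ball (g := fun _ => C * ENNReal.ofReal δ) fun h hh => ?_).trans ?_
  · have : ‖h‖ < δ := by simpa using hh
    refine (hC h (by linarith)).trans ?_
    gcongr
  · rw [setLIntegral_const]

lemma meas_D {n : ℕ} {E : Set (Eu n)} (hE : MeasurableSet E) (δ : ℝ) :
    Measurable (fun x : Eu n => volume (ball 0 δ ∩ {h | x ∈ diffSet E h})) := by
  have h1 := measurable_measure_prodMk_left (ν := volume.restrict (ball (0 : Eu n) δ)) (measurableSet_diff2 hE)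
  have h2 : (fun x : Eu n => volume (ball 0 δ ∩ {h | x ∈ diffSet E h})) =
      fun x => (volume.restrict (ball (0 : Eu n) δ)) (Prod.mk x ⁻¹' {p : Eu n × Eu n | p.1 ∈ diffSet E p.2}) := by
    funext x
    rw [Measure.restrict_apply (measurable_prodMk_left (measurableSet_diff2 hE)), Set.inter_comm]; rfl
  rw [h2]; exact h1

lemma cauchy_core {n : ℕ} {E F : Set (Eu n)} (hE : MeasurableSet E) (hF : MeasurableSet F) {W : Set (Eu n)}
    (hW : MeasurableSet W) {δ : ℝ} (hδ : 0 < δ) (hδ1 : δ ≤ 1) {C : ℝ≥0∞}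
    (hCE : ∀ h : Eu n, ‖h‖ ≤ 1 → volume (W ∩ diffSet E h) ≤ C * ENNReal.ofReal ‖h‖)
    (hCF : ∀ h : Eu n, ‖h‖ ≤ 1 → volume (W ∩ diffSet F h) ≤ C * ENNReal.ofReal ‖h‖)
    (hf : ∀ x ∈ W, |(volume (ball x δ ∩ E)).toReal - (volume (ball x δ ∩ F)).toReal| ≤
      (volume (ball (0 : Eu n) δ)).toReal / 2) :
    volume (W ∩ xd E F) ≤ 4 * C * ENNReal.ofReal δ := by
  set v := volume (ball (0 : Eu n) δ) with hv
  have hv0 : v ≠ 0 := (measure_ball_pos volume _ hδ).ne'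
  have hvt : v ≠ ∞ := measure_ball_lt_top.ne
  have hWx : MeasurableSet (W ∩ xd E F) := hW.inter (measurableSet_xd hE hF)
  have hfin : ∀ (x : Eu n) (A : Set (Eu n)), volume (ball x δ ∩ A) ≠ ∞ := fun x A =>
    ((measure_mono Set.inter_subset_left).trans_lt measure_ball_lt_top).ne
  have hpt : ∀ x ∈ W ∩ xd E F, v / 2 ≤ volume (ball 0 δ ∩ {h | x ∈ diffSet E h}) +
      volume (ball 0 δ ∩ {h | x ∈ diffSet F h}) := by
    rintro x ⟨hxW, hx⟩
    have hx' : ¬ (x ∈ E ↔ x ∈ F) := hx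
    have h1 := abs_le.1 (hf x hxW)
    have key : ∀ a b X : ℝ≥0∞, a ≠ ∞ → b ≠ ∞ → v + b ≤ X + a → a.toReal - b.toReal ≤ v.toReal / 2 → v / 2 ≤ X := by
      intro a b X ha hb h2 h3
      by_cases hX : X = ∞
      · simp [hX]
      rw [← ENNReal.toReal_le_toReal (ENNReal.div_ne_top hvt (by simp)) hX, ENNReal.toReal_div]
      have := ENNReal.toReal_mono (ENNReal.add_ne_top.2 ⟨hX, ha⟩) h2
      rw [ENNReal.toReal_add hvt hb, ENNReal.toReal_add hX ha] at this
      simp only [ENNReal.toReal_ofNat]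
      linarith
    by_cases hxE : x ∈ E
    · have hxF : x ∉ F := by tauto
      have h2 := vol_ball_le_of_xd hE (δ := δ) hxE hxF
      rw [← vol_ball_zero_eq] at h2
      exact key _ _ _ (hfin _ _) (hfin _ _) h2 h1.2
    · have hxF : x ∈ F := by tauto
      have h2 := vol_ball_le_of_xd hF (δ := δ) hxF hxE
      rw [← vol_ball_zero_eq] at h2
      rw [add_comm (volume (ball 0 δ ∩ {h | x ∈ diffSet E h}))]
      exact key _ _ _ (hfin _ _) (hfin _ _) h2 (by linarith [h1.1])
  have h5 : volume (W ∩ xd E F) * (v / 2) ≤ 2 * C * ENNReal.ofReal δ * v := by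
    calc volume (W ∩ xd E F) * (v / 2) = ∫⁻ x in W ∩ xd E F, v / 2 := by rw [setLIntegral_const, mul_comm]
      _ ≤ ∫⁻ x in W ∩ xd E F, (volume (ball 0 δ ∩ {h | x ∈ diffSet E h}) +
            volume (ball 0 δ ∩ {h | x ∈ diffSet F h})) := setLIntegral_mono' hWx hpt
      _ ≤ ∫⁻ x in W, (volume (ball 0 δ ∩ {h | x ∈ diffSet E h}) +
            volume (ball 0 δ ∩ {h | x ∈ diffSet F h})) := lintegral_mono_set Set.inter_subset_left
      _ = (∫⁻ x in W, volume (ball 0 δ ∩ {h | x ∈ diffSet E h})) +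
            ∫⁻ x in W, volume (ball 0 δ ∩ {h | x ∈ diffSet F h}) := by
          exact lintegral_add_left (meas_D hE δ) _
      _ ≤ C * ENNReal.ofReal δ * v + C * ENNReal.ofReal δ * v :=
          add_le_add (int_diff_le hE hW hδ1 hCE) (int_diff_le hF hW hδ1 hCF)
      _ = _ := by ring
  have hv2 : v / 2 ≠ 0 := (ENNReal.half_pos hv0).ne'
  refine (ENNReal.mul_le_mul_iff_left hv2 (ENNReal.div_ne_top hvt (by simp))).1 (h5.trans (le_of_eq ?_))
  have : v = 2 * (v / 2) := by rw [ENNReal.mul_div_cancel (by simp) (by simp)]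
  nth_rewrite 1 [this]
  ring


end

section
open scoped Topology Pointwise

lemma f_lip {n : ℕ} (A : Set (Eu n)) (x y : Eu n) {r : ℝ} (hr : 0 < r) :
    |(volume (ball x r ∩ A)).toReal - (volume (ball y r ∩ A)).toReal| ≤
      ((r + dist x y) ^ n - r ^ n) * (volume (ball (0 : Eu n) 1)).toReal := by
  have hfin : ∀ (x : Eu n), volume (ball x r ∩ A) ≠ ∞ := fun x =>
    ((measure_mono Set.inter_subset_left).trans_lt measure_ball_lt_top).ne
  have hw : volume (ball (0 : Eu n) 1) ≠ ∞ := measure_ball_lt_top.ne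
  have key : ∀ x y : Eu n, (volume (ball x r ∩ A)).toReal - (volume (ball y r ∩ A)).toReal ≤
      ((r + dist x y) ^ n - r ^ n) * (volume (ball (0 : Eu n) 1)).toReal := by
    intro x y
    have h0 : 0 ≤ (r + dist x y) ^ n - r ^ n := by
      have : r ^ n ≤ (r + dist x y) ^ n := pow_le_pow_left₀ hr.le (by linarith [dist_nonneg (x := x) (y := y)]) n
      linarith
    have h1 := ENNReal.toReal_mono (ENNReal.add_ne_top.2 ⟨hfin y, mul_ne_top ofReal_ne_top hw⟩)
      (vol_inter_ball_le A x y hr)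
    rw [ENNReal.toReal_add (hfin y) (mul_ne_top ofReal_ne_top hw), ENNReal.toReal_mul, ENNReal.toReal_ofReal h0] at h1
    linarith
  rw [abs_le]
  constructor
  · have := key y x
    rw [dist_comm] at this
    linarith
  · exact key x y

lemma cauchy_ultra {n : ℕ} (𝒰 : Ultrafilter ℕ) (E : ℕ → Set (Eu n)) (hE : ∀ i, MeasurableSet (E i)) {R : ℝ} {C : ℝ≥0∞}
    (hCt : C ≠ ∞)
    (hC : ∀ᶠ i in (𝒰 : Filter ℕ), ∀ h : Eu n, ‖h‖ ≤ 1 →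
      volume (closedBall 0 R ∩ diffSet (E i) h) ≤ C * ENNReal.ofReal ‖h‖) {ε : ℝ≥0∞} (hε : 0 < ε) :
    ∃ A ∈ 𝒰, ∀ i ∈ A, ∀ j ∈ A, volume (closedBall 0 R ∩ xd (E i) (E j)) ≤ ε := by
  obtain ⟨δ, hδ, hδ1, hδε⟩ : ∃ δ : ℝ, 0 < δ ∧ δ ≤ 1 ∧ 4 * C * ENNReal.ofReal δ ≤ ε := by
    have ht : Tendsto (fun δ : ℝ => 4 * C * ENNReal.ofReal δ) (𝓝[>] 0) (𝓝 (4 * C * ENNReal.ofReal 0)) :=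
      ENNReal.Tendsto.const_mul ((ENNReal.continuous_ofReal.tendsto _).mono_left nhdsWithin_le_nhds)
        (Or.inr (mul_ne_top (by simp) hCt))
    rw [ENNReal.ofReal_zero, mul_zero] at ht
    have h1 := ht.eventually (ge_mem_nhds hε)
    have h2 : ∀ᶠ δ : ℝ in 𝓝[>] 0, δ ∈ Set.Ioc (0:ℝ) 1 := Ioc_mem_nhdsGT one_pos
    obtain ⟨δ, a, b⟩ := (h1.and h2).exists
    exact ⟨δ, b.1, b.2, a⟩
  set v := (volume (ball (0 : Eu n) δ)).toReal with hv
  have hv0 : 0 < v := vol_ball_toReal_pos 0 hδ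
  set ω := (volume (ball (0 : Eu n) 1)).toReal with hω
  obtain ⟨ρ, hρ, hρv⟩ : ∃ ρ : ℝ, 0 < ρ ∧ ((δ + ρ) ^ n - δ ^ n) * ω ≤ v / 8 := by
    have ht : Tendsto (fun ρ : ℝ => ((δ + ρ) ^ n - δ ^ n) * ω) (𝓝[>] 0) (𝓝 (((δ + 0) ^ n - δ ^ n) * ω)) :=
      (Continuous.tendsto (by fun_prop) _).mono_left nhdsWithin_le_nhds
    rw [add_zero, sub_self, zero_mul] at ht
    have h1 := ht.eventually (ge_mem_nhds (show 0 < v / 8 by positivity))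
    obtain ⟨ρ, a, b⟩ := (h1.and self_mem_nhdsWithin).exists
    exact ⟨ρ, b, a⟩
  obtain ⟨T, hTW, hTf, hT⟩ := Metric.finite_approx_of_totallyBounded
    (isCompact_closedBall (0 : Eu n) R).totallyBounded ρ hρ
  have hlim : ∀ x : Eu n, ∃ l : ℝ, Tendsto (fun i => (volume (ball x δ ∩ E i)).toReal) 𝒰 (𝓝 l) := by
    intro x
    have := (isCompact_Icc (a := (0:ℝ)) (b := v)).ultrafilter_le_nhds
      (𝒰.map fun i => (volume (ball x δ ∩ E i)).toReal)
      (by simp only [le_principal_iff, Ultrafilter.mem_coe, Ultrafilter.mem_map]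
          refine Filter.mem_of_superset Filter.univ_mem fun i _ => ⟨toReal_nonneg, ?_⟩
          rw [hv, vol_ball_zero_eq x]
          exact ENNReal.toReal_mono measure_ball_lt_top.ne (measure_mono Set.inter_subset_left))
    obtain ⟨l, -, hl⟩ := this
    exact ⟨l, hl⟩
  choose l hl using hlim
  have hA : ∀ᶠ i in (𝒰 : Filter ℕ), ∀ y ∈ T, |(volume (ball y δ ∩ E i)).toReal - l y| < v / 16 := by
    rw [hTf.eventually_all]
    intro y _
    have := (hl y).eventually (Metric.ball_mem_nhds (l y) (show 0 < v / 16 by positivity))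
    simpa [Real.dist_eq] using this
  refine ⟨_, hA.and hC, fun i hi j hj => ?_⟩
  refine (cauchy_core (hE i) (hE j) measurableSet_closedBall hδ hδ1 hi.2 hj.2 fun x hx => ?_).trans hδε
  obtain ⟨y, hy, hxy⟩ := Set.mem_iUnion₂.1 (hT hx)
  have hxy' : dist x y < ρ := hxy
  have h0 : ((δ + dist x y) ^ n - δ ^ n) * ω ≤ v / 8 := by
    refine le_trans ?_ hρv
    refine mul_le_mul_of_nonneg_right ?_ toReal_nonneg
    have : (δ + dist x y) ^ n ≤ (δ + ρ) ^ n := pow_le_pow_left₀ (by positivity) (by linarith) n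
    linarith
  have h1 := abs_le.1 ((f_lip (E i) x y hδ).trans h0)
  have h2 := abs_le.1 ((f_lip (E j) x y hδ).trans h0)
  have h3 := abs_lt.1 (hi.1 y hy)
  have h4 := abs_lt.1 (hj.1 y hy)
  rw [abs_le]
  constructor <;> linarith [h1.1, h1.2, h2.1, h2.2, h3.1, h3.2, h4.1, h4.2]

/-- compactness for sets of locally bounded variation -/
lemma compactness {n : ℕ} (E : ℕ → Set (Eu n)) (hE : ∀ i, MeasurableSet (E i))
    (hC : ∀ R : ℝ, ∃ C : ℝ≥0∞, C ≠ ∞ ∧ ∀ᶠ i in atTop, ∀ h : Eu n, ‖h‖ ≤ 1 →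
      volume (closedBall 0 R ∩ diffSet (E i) h) ≤ C * ENNReal.ofReal ‖h‖) :
    ∃ (F : Set (Eu n)) (s : ℕ → ℕ), MeasurableSet F ∧ StrictMono s ∧
      (∀ᵐ x, ∀ᶠ j in atTop, x ∈ E (s j) ↔ x ∈ F) ∧
      ∀ R : ℝ, Tendsto (fun j => volume (closedBall 0 R ∩ xd (E (s j)) F)) atTop (𝓝 0) := by
  let 𝒰 : Ultrafilter ℕ := hyperfilter ℕ
  have hle : (𝒰 : Filter ℕ) ≤ atTop := by rw [← Nat.cofinite_eq_atTop]; exact hyperfilter_le_cofinite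
  have hA : ∀ m : ℕ, ∃ A ∈ 𝒰, ∀ i ∈ A, ∀ j ∈ A,
      volume (closedBall 0 (m:ℝ) ∩ xd (E i) (E j)) ≤ (1/2 : ℝ≥0∞) ^ m := by
    intro m
    obtain ⟨C, hCt, hC⟩ := hC m
    exact cauchy_ultra 𝒰 E hE hCt (hle hC) (pos_iff_ne_zero.2 (pow_ne_zero _ (by simp)))
  choose A hAU hA using hA
  have hfreq : ∀ m : ℕ, ∀ N : ℕ, ∃ i, N < i ∧ ∀ k ≤ m, i ∈ A k := by
    intro m N
    have h1 : ∀ᶠ i in (𝒰 : Filter ℕ), N < i := hle (eventually_gt_atTop N)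
    have h2 : ∀ᶠ i in (𝒰 : Filter ℕ), ∀ k ∈ Set.Iic m, i ∈ A k :=
      (Set.finite_Iic m).eventually_all.2 fun k _ => hAU k
    exact (h1.and h2).exists
  choose g hg1 hg2 using hfreq
  let s : ℕ → ℕ := fun m => Nat.rec (g 0 0) (fun m p => g (m+1) p) m
  have hs1 : ∀ m, s m < s (m+1) := fun m => hg1 (m+1) (s m)
  have hs2 : ∀ m, ∀ k ≤ m, s m ∈ A k := by
    intro m
    cases m with
    | zero => exact hg2 0 0
    | succ m => exact hg2 (m+1) (s m)
  have hpair : ∀ m : ℕ, volume (closedBall 0 (m:ℝ) ∩ xd (E (s m)) (E (s (m+1)))) ≤ (1/2 : ℝ≥0∞) ^ m := fun m =>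
    hA m _ (hs2 m m le_rfl) _ (hs2 (m+1) m (by omega))
  let F : Set (Eu n) := limsup (fun m => E (s m)) atTop
  have hF : MeasurableSet F := MeasurableSet.measurableSet_limsup fun m => hE _
  have hBC : ∀ᵐ x, ∀ᶠ m : ℕ in atTop, x ∉ closedBall 0 (m:ℝ) ∩ xd (E (s m)) (E (s (m+1))) := by
    refine ae_eventually_notMem ?_
    refine ne_top_of_le_ne_top ?_ (ENNReal.tsum_le_tsum hpair)
    rw [ENNReal.tsum_geometric]; simp
  have hae : ∀ᵐ x, ∀ᶠ j in atTop, x ∈ E (s j) ↔ x ∈ F := by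
    filter_upwards [hBC] with x hx
    obtain ⟨N0, hN0⟩ := exists_nat_ge ‖x‖
    obtain ⟨N, hN⟩ := eventually_atTop.1 (hx.and (eventually_ge_atTop N0))
    have hst : ∀ m, N ≤ m → (x ∈ E (s m) ↔ x ∈ E (s N)) := by
      intro m hm
      induction m, hm using Nat.le_induction with
      | base => exact Iff.rfl
      | succ m hm ih =>
        rw [← ih]
        by_contra hcon
        refine (hN m hm).1 ⟨?_, fun h => hcon h.symm⟩
        have : (N0:ℝ) ≤ m := by exact_mod_cast (hN m hm).2
        simp; linarith
    have hxF : x ∈ F ↔ x ∈ E (s N) := by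
      rw [show x ∈ F ↔ ∃ᶠ m in atTop, x ∈ E (s m) from mem_limsup_iff_frequently_mem]
      constructor
      · intro h
        obtain ⟨m, h1, h2⟩ := (h.and_eventually (eventually_ge_atTop N)).exists
        exact (hst m h2).1 h1
      · intro h
        exact Eventually.frequently ((eventually_ge_atTop N).mono fun m hm => (hst m hm).2 h)
    filter_upwards [eventually_ge_atTop N] with j hj
    rw [hxF, hst j hj]
  refine ⟨F, s, hF, strictMono_nat_of_lt_succ hs1, hae, fun R => ?_⟩
  have hmeas : ∀ j, MeasurableSet (xd (E (s j)) F) := fun j => measurableSet_xd (hE _) hF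
  have h1 : ∀ j, volume (closedBall 0 R ∩ xd (E (s j)) F) =
      ∫⁻ x in closedBall 0 R, (xd (E (s j)) F).indicator 1 x := by
    intro j
    rw [lintegral_indicator_one (hmeas j), Measure.restrict_apply (hmeas j), Set.inter_comm]
  simp only [h1]
  have h2 : Tendsto (fun j => ∫⁻ x in closedBall (0 : Eu n) R, (xd (E (s j)) F).indicator (1 : Eu n → ℝ≥0∞) x) atTop
      (𝓝 (∫⁻ x in closedBall (0 : Eu n) R, 0)) := by
    refine tendsto_lintegral_of_dominated_convergence (fun _ => 1)
      (fun j => measurable_one.indicator (hmeas j)) (fun j => Eventually.of_forall fun x => ?_) ?_ ?_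
    · exact Set.indicator_le_self' (by simp) x
    · simp [measure_closedBall_lt_top.ne]
    · refine ae_restrict_of_ae ?_
      filter_upwards [hae] with x hx
      refine tendsto_const_nhds.congr' ?_
      filter_upwards [hx] with j hj
      rw [Set.indicator_of_notMem]
      exact fun h => h hj
  simpa using h2

/-- the domination property passes to limits -/
lemma Dp_limit {n : ℕ} {𝒰 : Filter ℕ} [𝒰.NeBot] {κ : ℝ≥0∞} (hκ : κ ≠ ∞) {E : ℕ → Set (Eu n)} {F : Set (Eu n)}
    {ν : ℕ → Measure (Eu n)} {μ : Measure (Eu n)} [IsFiniteMeasure μ] [∀ i, IsFiniteMeasure (ν i)]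
    (hV : VL 𝒰 ν μ) (hD : ∀ i, Dp κ (E i) (ν i))
    (hL : ∀ R : ℝ, Tendsto (fun j => volume (closedBall 0 R ∩ xd (E j) F)) 𝒰 (𝓝 0)) : Dp κ F μ := by
  intro K hK h
  set κ' := κ * ENNReal.ofReal ‖h‖ with hκ'
  have hκ't : κ' ≠ ∞ := mul_ne_top hκ ofReal_ne_top
  obtain ⟨R, hR⟩ := hK.isBounded.subset_closedBall 0
  have hbound : ∀ i, volume (K ∩ diffSet F h) ≤ κ' * ν i (sweep K h) +
      (volume (closedBall 0 (R + ‖h‖) ∩ xd (E i) F) + volume (closedBall 0 (R + ‖h‖) ∩ xd (E i) F)) := by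
    intro i
    refine le_trans ?_ (add_le_add (hD i K hK h) le_rfl)
    have h1 : volume ((fun x => x + h) ⁻¹' (closedBall 0 (R + ‖h‖) ∩ xd (E i) F)) =
      volume (closedBall 0 (R + ‖h‖) ∩ xd (E i) F) := vol_preimage_add _ h
    nth_rewrite 2 [← h1]
    refine le_trans (measure_mono ?_) ((measure_union_le _ _).trans (add_le_add le_rfl (measure_union_le _ _)))
    rintro x ⟨hxK, hx⟩
    have hxR : ‖x‖ ≤ R := by simpa using hR hxK
    have hxR2 : ‖x + h‖ ≤ R + ‖h‖ := (norm_add_le _ _).trans (by linarith)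
    have hx' : ¬ (x ∈ F ↔ x + h ∈ F) := hx
    by_cases a : x ∈ E i ↔ x ∈ F
    · by_cases b : x + h ∈ E i ↔ x + h ∈ F
      · left
        refine ⟨hxK, ?_⟩
        change ¬ (x ∈ E i ↔ x + h ∈ E i)
        tauto
      · right; right
        exact ⟨by simpa using hxR2, b⟩
    · right; left
      exact ⟨by simp; linarith [norm_nonneg h], a⟩
  have hat : volume (K ∩ diffSet F h) ≠ ∞ :=
    ((measure_mono Set.inter_subset_left).trans_lt hK.measure_lt_top).ne
  refine le_of_forall_lt fun c hc => ?_
  obtain ⟨c', hcc', hc'⟩ := exists_between hc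
  refine hcc'.trans_le ?_
  have he := (hL (R + ‖h‖)).add (hL (R + ‖h‖))
  rw [add_zero] at he
  have hev := he.eventually (gt_mem_nhds (tsub_pos_of_lt hc'))
  have hev2 : ∀ᶠ i in 𝒰, c' / κ' ≤ ν i (sweep K h) := by
    filter_upwards [hev] with i hi
    refine ENNReal.div_le_of_le_mul' ?_
    by_contra hlt
    push Not at hlt
    have := (hbound i).trans_lt (ENNReal.add_lt_add hlt hi)
    rw [add_tsub_cancel_of_le hc'.le] at this
    exact lt_irrefl _ this
  by_cases hk0 : κ' = 0
  · obtain ⟨i, hi⟩ := hev.exists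
    have := hbound i
    rw [hk0, zero_mul, zero_add] at this
    have h3 := this.trans_lt hi
    exact absurd h3 (not_lt.2 tsub_le_self)
  have hct : c' / κ' ≠ ∞ := ENNReal.div_ne_top (hc'.ne_top) hk0
  have := hV.lower (isCompact_sweep hK h) hct hev2.frequently
  rwa [ENNReal.div_le_iff' hk0 hκ't] at this


end

section
open scoped Topology Pointwise

lemma vol_diff_le {n : ℕ} {κ : ℝ≥0∞} {E : Set (Eu n)} {μ : Measure (Eu n)} (hD : Dp κ E μ) (h : Eu n) :
    volume (diffSet E h) ≤ κ * ENNReal.ofReal ‖h‖ * μ Set.univ := by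
  have h1 : diffSet E h = ⋃ m : ℕ, closedBall 0 (m:ℝ) ∩ diffSet E h := by
    rw [← Set.iUnion_inter, iUnion_closedBall_nat, Set.univ_inter]
  rw [h1, Monotone.measure_iUnion]
  · refine iSup_le fun m => (hD _ (isCompact_closedBall _ _) h).trans ?_
    gcongr
    exact Set.subset_univ _
  · intro a b hab
    refine Set.inter_subset_inter_left _ (closedBall_subset_closedBall (by exact_mod_cast hab))

lemma vl_dom {n : ℕ} (𝒰 : Ultrafilter ℕ) (hle : (𝒰 : Filter ℕ) ≤ atTop) {κ : ℝ≥0∞} (hκ : κ ≠ ∞) {E : Set (Eu n)}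
    {μ : Measure (Eu n)} [IsFiniteMeasure μ]
    (hD : Dp κ E μ) (v : Eu n) (S : ℕ → Set (Eu n)) (_hSm : ∀ k, MeasurableSet (S k))
    (hS : ∀ k : ℕ, S k ⊆ diffSet E ((1 / ((k:ℝ) + 1)) • v)) :
    ∃ σ : Measure (Eu n), IsFiniteMeasure σ ∧ σ ≤ (κ * ENNReal.ofReal ‖v‖) • μ ∧
      VL 𝒰 (fun k : ℕ => ENNReal.ofReal ((k:ℝ) + 1) • volume.restrict (S k)) σ := by
  set κ' := κ * ENNReal.ofReal ‖v‖ with hκ'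
  have hκ't : κ' ≠ ∞ := mul_ne_top hκ ofReal_ne_top
  have hcan : ∀ (k : ℕ) (a : ℝ≥0∞), ENNReal.ofReal ((k:ℝ) + 1) *
      (κ * ENNReal.ofReal ‖(1 / ((k:ℝ) + 1)) • v‖ * a) = κ' * a := by
    intro k a
    have hk : (0:ℝ) < (k:ℝ) + 1 := by positivity
    rw [norm_smul, Real.norm_of_nonneg (by positivity), ENNReal.ofReal_mul (by positivity)]
    have : ENNReal.ofReal ((k:ℝ) + 1) * ENNReal.ofReal (1 / ((k:ℝ) + 1)) = 1 := by
      rw [← ENNReal.ofReal_mul hk.le, mul_one_div_cancel hk.ne', ofReal_one]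
    rw [hκ']
    calc _ = (ENNReal.ofReal ((k:ℝ) + 1) * ENNReal.ofReal (1 / ((k:ℝ) + 1))) * (κ * ENNReal.ofReal ‖v‖ * a) := by ring
      _ = _ := by rw [this, one_mul]
  set ν : ℕ → Measure (Eu n) := fun k : ℕ => ENNReal.ofReal ((k:ℝ) + 1) • volume.restrict (S k) with hν
  have hνa : ∀ k A, MeasurableSet A → ν k A = ENNReal.ofReal ((k:ℝ) + 1) * volume (A ∩ S k) := by
    intro k A hA
    rw [hν]; simp only
    rw [Measure.smul_apply, Measure.restrict_apply hA]; rfl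
  have hmass : ∀ k, ν k Set.univ ≤ κ' * μ Set.univ := by
    intro k
    rw [hνa k _ MeasurableSet.univ, ← hcan k, Set.univ_inter]
    exact mul_le_mul_right ((measure_mono (hS k)).trans (vol_diff_le hD _)) _
  have hMt : κ' * μ Set.univ ≠ ∞ := mul_ne_top hκ't (measure_ne_top _ _)
  obtain ⟨σ, hσ1, hσ2⟩ := exists_VL 𝒰 ν hMt hmass
  have : ∀ k, IsFiniteMeasure (ν k) := fun k => ⟨(hmass k).trans_lt hMt.lt_top⟩
  have hσf : IsFiniteMeasure σ := ⟨hσ1.trans_lt hMt.lt_top⟩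
  refine ⟨σ, hσf, ?_, hσ2⟩
  rw [Measure.le_iff]
  intro s hs
  rw [hs.measure_eq_iSup_isCompact]
  refine iSup_le fun K => iSup_le fun hKs => iSup_le fun hK => ?_
  refine le_trans ?_ (measure_mono hKs)
  rw [show (κ' • μ) K = κ' * μ K from rfl]
  have hstep : ∀ δ : ℝ, 0 < δ → σ K ≤ κ' * μ (cthickening (2 * δ) K) := by
    intro δ hδ
    refine hσ2.upper hK isOpen_thickening (self_subset_thickening hδ K) ?_
    refine Eventually.frequently (hle ?_)
    have ht : Tendsto (fun k : ℕ => (1 / ((k:ℝ) + 1)) * ‖v‖) atTop (𝓝 (0 * ‖v‖)) :=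
      tendsto_one_div_add_atTop_nhds_zero_nat.mul_const _
    rw [zero_mul] at ht
    filter_upwards [ht.eventually (ge_mem_nhds hδ)] with k hk
    rw [hνa k _ isOpen_thickening.measurableSet]
    have h2 : volume (thickening δ K ∩ S k) ≤
        κ * ENNReal.ofReal ‖(1 / ((k:ℝ) + 1)) • v‖ * μ (cthickening (2 * δ) K) := by
      refine (measure_mono (Set.inter_subset_inter (thickening_subset_cthickening _ _) (hS k))).trans ?_
      refine (hD _ hK.cthickening _).trans ?_
      refine mul_le_mul_right (measure_mono ?_) _
      rintro _ ⟨x, hx, s, hs, rfl⟩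
      rw [two_mul]
      refine cthickening_cthickening_subset hδ.le hδ.le K ?_
      refine mem_cthickening_of_dist_le _ x _ _ hx ?_
      rw [dist_eq_norm, add_sub_cancel_left, norm_smul, norm_smul, Real.norm_of_nonneg hs.1,
        Real.norm_of_nonneg (by positivity)]
      exact (mul_le_of_le_one_left (by positivity) hs.2).trans hk
    exact (mul_le_mul_right h2 _).trans (hcan k _).le
  have ht := tendsto_measure_cthickening_of_isCompact (μ := μ) hK
  have h2 : Tendsto (fun δ : ℝ => 2 * δ) (𝓝[>] 0) (𝓝 0) := by
    have : Tendsto (fun δ : ℝ => 2 * δ) (𝓝 0) (𝓝 (2 * 0)) := (by fun_prop : Continuous fun δ : ℝ => 2 * δ).tendsto 0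
    rw [mul_zero] at this
    exact this.mono_left nhdsWithin_le_nhds
  refine ge_of_tendsto (ENNReal.Tendsto.const_mul (ht.comp h2) (Or.inr hκ't)) ?_
  filter_upwards [self_mem_nhdsWithin] with δ hδ using hstep δ hδ

lemma diff_quot {n : ℕ} {E : Set (Eu n)} (hE : MeasurableSet E) (v : Eu n) {φ : Eu n → ℝ} (hφ : ContDiff ℝ 1 φ)
    (hc : HasCompactSupport φ) :
    Tendsto (fun k : ℕ => ((k:ℝ) + 1) * ((∫ x in E \ {x | x + (1 / ((k:ℝ) + 1)) • v ∈ E}, φ x) -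
      ∫ x in {x | x + (1 / ((k:ℝ) + 1)) • v ∈ E} \ E, φ x)) atTop (𝓝 (∫ x in E, fderiv ℝ φ x v)) := by
  have hintg : Integrable φ := hφ.continuous.integrable_of_hasCompactSupport hc
  have hT : ∀ a : Eu n, MeasurableSet {x | x + a ∈ E} := fun a => hE.preimage (measurable_add_const a)
  have h1 : ∀ a : Eu n, (∫ x in E \ {x | x + a ∈ E}, φ x) - (∫ x in {x | x + a ∈ E} \ E, φ x) =
      ∫ x in E, (φ x - φ (x - a)) := by
    intro a
    have e1 := integral_inter_add_sdiff (μ := volume) (s := E) (t := {x | x + a ∈ E}) (f := φ) (hT a) hintg.integrableOn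
    have e2 := integral_inter_add_sdiff (μ := volume) (s := {x | x + a ∈ E}) (t := E) (f := φ) hE hintg.integrableOn
    have e3 : ∫ x in {x | x + a ∈ E}, φ x = ∫ x in E, φ (x - a) := by
      have := (measurePreserving_add_right (volume : Measure (Eu n)) a).setIntegral_preimage_emb
        (measurableEmbedding_addRight a) (fun y => φ (y - a)) E
      simp only [add_sub_cancel_right] at this
      exact this
    rw [integral_sub hintg.integrableOn (hintg.comp_sub_right a).integrableOn, ← e3, ← e1, ← e2, Set.inter_comm]
    ring
  simp only [h1]
  simp only [← integral_const_mul]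
  obtain ⟨C, hC⟩ := hφ.lipschitzWith_of_hasCompactSupport hc (by simp)
  obtain ⟨R, hR⟩ := hc.isBounded.subset_closedBall 0
  refine tendsto_integral_of_dominated_convergence ((closedBall (0 : Eu n) (R + ‖v‖)).indicator fun _ => C * ‖v‖) ?_ ?_ ?_ ?_
  · intro k
    exact (by have := hφ.continuous; fun_prop : Continuous _).aestronglyMeasurable
  · refine Integrable.integrableOn ?_
    rw [integrable_indicator_iff measurableSet_closedBall]
    exact integrableOn_const measure_closedBall_lt_top.ne
  · intro k
    refine Eventually.of_forall fun x => ?_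
    have hk : (0:ℝ) < (k:ℝ) + 1 := by positivity
    by_cases hx : x ∈ closedBall (0 : Eu n) (R + ‖v‖)
    · rw [Set.indicator_of_mem hx, norm_mul, Real.norm_of_nonneg hk.le]
      have := hC.dist_le_mul x (x - (1 / ((k:ℝ) + 1)) • v)
      rw [dist_eq_norm, dist_eq_norm, _root_.sub_sub_cancel, norm_smul, Real.norm_of_nonneg (show (0:ℝ) ≤ 1 / ((k:ℝ) + 1) by positivity)] at this
      calc _ ≤ ((k:ℝ) + 1) * (C * (1 / ((k:ℝ) + 1) * ‖v‖)) := by gcongr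
        _ = C * ‖v‖ := by field_simp
    · rw [Set.indicator_of_notMem hx]
      have hx' : R + ‖v‖ < ‖x‖ := by simpa using hx
      have hz : ∀ y : Eu n, R < ‖y‖ → φ y = 0 := by
        intro y hy
        by_contra h
        have := hR (subset_tsupport _ h)
        simp at this; linarith
      have hle : ‖(1 / ((k:ℝ) + 1)) • v‖ ≤ ‖v‖ := by
        rw [norm_smul, Real.norm_of_nonneg (by positivity)]
        refine mul_le_of_le_one_left (norm_nonneg _) ?_
        rw [div_le_one hk]; linarith [Nat.cast_nonneg (α := ℝ) k]
      have := norm_sub_norm_le x ((1 / ((k:ℝ) + 1)) • v)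
      rw [hz x (by linarith [norm_nonneg v]), hz _ (by linarith)]
      simp
  · refine Eventually.of_forall fun x => ?_
    have hd : HasFDerivAt φ (fderiv ℝ φ x) x := (hφ.differentiable (by simp)).differentiableAt.hasFDerivAt
    have hlim := ((hd.lim_real (-v)).comp (tendsto_atTop_add_const_right atTop (1:ℝ) tendsto_natCast_atTop_atTop)).neg
    rw [map_neg, neg_neg] at hlim
    refine hlim.congr fun k => ?_
    simp only [Function.comp, smul_eq_mul, smul_neg, ← sub_eq_add_neg, one_div]
    ring

lemma ibp_dir {n : ℕ} {κ : ℝ≥0∞} (hκ : κ ≠ ∞) {E : Set (Eu n)} (hE : MeasurableSet E)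
    {μ : Measure (Eu n)} [IsFiniteMeasure μ] (hD : Dp κ E μ) (v : Eu n) :
    ∃ g : Eu n → ℝ, Integrable g μ ∧ ∀ φ : Eu n → ℝ, ContDiff ℝ 1 φ → HasCompactSupport φ →
      ∫ x in E, fderiv ℝ φ x v = ∫ x, g x * φ x ∂μ := by
  let 𝒰 : Ultrafilter ℕ := hyperfilter ℕ
  have hle : (𝒰 : Filter ℕ) ≤ atTop := by rw [← Nat.cofinite_eq_atTop]; exact hyperfilter_le_cofinite
  have hT : ∀ a : Eu n, MeasurableSet {x | x + a ∈ E} := fun a => hE.preimage (measurable_add_const a)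
  obtain ⟨σ, hσf, hσ, hσV⟩ := vl_dom 𝒰 hle hκ hD v (fun k : ℕ => E \ {x | x + (1 / ((k:ℝ) + 1)) • v ∈ E})
    (fun k => hE.diff (hT _)) (fun k x hx => by
      change ¬ (x ∈ E ↔ x + (1 / ((k:ℝ) + 1)) • v ∈ E)
      have h1 := hx.1; have h2 : ¬ (x + (1 / ((k:ℝ) + 1)) • v ∈ E) := hx.2
      tauto)
  obtain ⟨σ', hσf', hσ', hσV'⟩ := vl_dom 𝒰 hle hκ hD v (fun k : ℕ => {x | x + (1 / ((k:ℝ) + 1)) • v ∈ E} \ E)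
    (fun k => (hT _).diff hE) (fun k x hx => by
      change ¬ (x ∈ E ↔ x + (1 / ((k:ℝ) + 1)) • v ∈ E)
      have h1 := hx.2; have h2 : (x + (1 / ((k:ℝ) + 1)) • v ∈ E) := hx.1
      tauto)
  have hac : σ ≪ μ := (Measure.absolutelyContinuous_of_le hσ).trans (Measure.smul_absolutelyContinuous)
  have hac' : σ' ≪ μ := (Measure.absolutelyContinuous_of_le hσ').trans (Measure.smul_absolutelyContinuous)
  refine ⟨fun x => (σ.rnDeriv μ x).toReal - (σ'.rnDeriv μ x).toReal,
    Measure.integrable_toReal_rnDeriv.sub Measure.integrable_toReal_rnDeriv, fun φ hφ hc => ?_⟩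
  have h1 : Tendsto (fun k : ℕ => ((k:ℝ) + 1) * ((∫ x in E \ {x | x + (1 / ((k:ℝ) + 1)) • v ∈ E}, φ x) -
      ∫ x in {x | x + (1 / ((k:ℝ) + 1)) • v ∈ E} \ E, φ x)) 𝒰 (𝓝 ((∫ x, φ x ∂σ) - ∫ x, φ x ∂σ')) := by
    refine ((hσV φ hφ.continuous hc).sub (hσV' φ hφ.continuous hc)).congr fun k => ?_
    have hk : (0:ℝ) ≤ (k:ℝ) + 1 := by positivity
    rw [integral_smul_measure, integral_smul_measure, ENNReal.toReal_ofReal hk, smul_eq_mul, smul_eq_mul, mul_sub]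
  have h2 := tendsto_nhds_unique ((diff_quot hE v hφ hc).mono_left hle) h1
  have l1 : σ.HaveLebesgueDecomposition μ := Measure.haveLebesgueDecomposition_of_sigmaFinite σ μ
  have l2 : σ'.HaveLebesgueDecomposition μ := Measure.haveLebesgueDecomposition_of_sigmaFinite σ' μ
  rw [h2, ← integral_rnDeriv_smul hac, ← integral_rnDeriv_smul hac']
  have hi : ∀ (τ : Measure (Eu n)) [IsFiniteMeasure τ], τ ≪ μ →
      Integrable (fun x => (τ.rnDeriv μ x).toReal • φ x) μ := by
    intro τ _ hτ
    have l3 : τ.HaveLebesgueDecomposition μ := Measure.haveLebesgueDecomposition_of_sigmaFinite τ μ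
    rw [integrable_rnDeriv_smul_iff hτ]
    exact hφ.continuous.integrable_of_hasCompactSupport hc
  rw [← integral_sub (hi σ hac) (hi σ' hac')]
  simp only [smul_eq_mul, sub_mul]

/-- the integration by parts property -/
def IBP {n : ℕ} (E : Set (Eu n)) (μ : Measure (Eu n)) (g : Eu n → Eu n) : Prop :=
  ∀ φ : Eu n → ℝ, ContDiff ℝ 1 φ → HasCompactSupport φ → ∀ v : Eu n,
      ∫ x in E, fderiv ℝ φ x v = ∫ x, inner ℝ (g x) v * φ x ∂μ

lemma exists_IBP {n : ℕ} {κ : ℝ≥0∞} (hκ : κ ≠ ∞) {E : Set (Eu n)} (hE : MeasurableSet E)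
    {μ : Measure (Eu n)} [IsFiniteMeasure μ] (hD : Dp κ E μ) :
    ∃ g : Eu n → Eu n, Integrable g μ ∧ IBP E μ g := by
  let b := EuclideanSpace.basisFun (Fin n) ℝ
  choose g hg hI using fun i => ibp_dir hκ hE hD (b i)
  refine ⟨fun x => ∑ i, g i x • b i, integrable_finsetSum _ fun i _ => (hg i).smul_const _, ?_⟩
  intro φ hφ hc v
  have hv : ∀ x, fderiv ℝ φ x v = ∑ i, inner ℝ (b i) v * fderiv ℝ φ x (b i) := by
    intro x
    conv_lhs => rw [← b.sum_repr' v]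
    simp [map_sum]
  have hcf : ∀ w : Eu n, Integrable (fun x => fderiv ℝ φ x w) := by
    intro w
    refine Continuous.integrable_of_hasCompactSupport ?_ (hc.fderiv_apply ℝ w)
    exact (hφ.continuous_fderiv (by simp)).clm_apply continuous_const
  simp only [hv]
  rw [integral_finsetSum _ fun i _ => ((hcf _).const_mul _).integrableOn]
  simp only [integral_const_mul, hI _ φ hφ hc, sum_inner, Finset.sum_mul]
  have hgi : ∀ i, Integrable (fun x => g i x * φ x) μ := by
    intro i
    obtain ⟨C, hC⟩ := hc.exists_bound_of_continuous hφ.continuous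
    exact (hg i).mul_bdd (c := C) hφ.continuous.aestronglyMeasurable (Eventually.of_forall hC)
  rw [integral_finsetSum]
  · refine Finset.sum_congr rfl fun i _ => ?_
    rw [← integral_const_mul]
    refine integral_congr_ae (Eventually.of_forall fun x => ?_)
    simp only [inner_smul_left]
    simp; ring
  · intro i _
    refine ((hgi i).const_mul (inner ℝ (b i) v)).congr (Eventually.of_forall fun x => ?_)
    simp only [inner_smul_left]
    simp; ring


end

section
open scoped Topology Pointwise

lemma haus_le_of_cover {n : ℕ} {ι : Type} {d : ℝ} {A : Set (Eu n)} {L : ℝ≥0∞}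
    (h : ∀ k : ℕ, ∃ (u : Set ι) (T : ι → Set (Eu n)), u.Countable ∧
      (∀ a ∈ u, ediam (T a) ≤ ENNReal.ofReal (1 / ((k:ℝ) + 1))) ∧ A ⊆ (⋃ a ∈ u, T a) ∧
      ∑' a : u, ediam (T a) ^ d ≤ L) : μH[d] A ≤ L := by
  choose u T hu h1 h2 h3 using h
  have : ∀ k, Countable (u k) := fun k => (hu k).to_subtype
  have ht : Tendsto (fun k : ℕ => ENNReal.ofReal (1 / ((k:ℝ) + 1))) atTop (𝓝 0) := by
    have := (ENNReal.continuous_ofReal.tendsto 0).comp (tendsto_one_div_add_atTop_nhds_zero_nat (𝕜 := ℝ))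
    rwa [ofReal_zero] at this
  refine (Measure.hausdorffMeasure_le_liminf_tsum (ι := fun k => u k) d A _ ht (fun k a => T k a)
    (Eventually.of_forall fun k i => h1 k i i.2) (Eventually.of_forall fun k => ?_)).trans ?_
  · intro x hx
    obtain ⟨a, ha, hxa⟩ := Set.mem_iUnion₂.1 (h2 k hx)
    exact Set.mem_iUnion.2 ⟨⟨a, ha⟩, hxa⟩
  · refine liminf_le_of_frequently_le' (Eventually.frequently (Eventually.of_forall fun k => h3 k))

lemma ediam_cb_le {n : ℕ} (x : Eu n) {r : ℝ} (_hr : 0 ≤ r) : ediam (closedBall x r) ≤ ENNReal.ofReal (2 * r) := by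
  refine ediam_le fun a ha b hb => ?_
  rw [edist_dist]
  refine ENNReal.ofReal_le_ofReal ?_
  have := dist_triangle_right a b x
  have h1 : dist a x ≤ r := ha
  have h2 : dist b x ≤ r := hb
  linarith

lemma dens_cover {n : ℕ} (hn : 1 ≤ n) {μ : Measure (Eu n)} [IsFiniteMeasure μ] {A : Set (Eu n)} {c : ℝ} (hc : 0 < c)
    (h : ∀ x ∈ A, ∀ ε > 0, ∃ r, 0 < r ∧ r < ε ∧ ENNReal.ofReal (c * r ^ ((n:ℝ) - 1)) ≤ μ (closedBall x r)) :
    μH[(n:ℝ) - 1] A ≤ ENNReal.ofReal (10 ^ ((n:ℝ) - 1) / c) * μ A := by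
  have hd : (0:ℝ) ≤ (n:ℝ) - 1 := by
    have : (1:ℝ) ≤ n := by exact_mod_cast hn
    linarith
  set d := (n:ℝ) - 1 with hdd
  set C := ENNReal.ofReal (10 ^ d / c) with hC
  have key : ∀ U : Set (Eu n), IsOpen U → A ⊆ U → μH[d] A ≤ C * μ U := by
    intro U hU hAU
    refine haus_le_of_cover (ι := Eu n × ℝ) fun k => ?_
    have hk : (0:ℝ) < 1 / ((k:ℝ) + 1) := by positivity
    set t : Set (Eu n × ℝ) := {p | p.1 ∈ A ∧ 0 < p.2 ∧ closedBall p.1 p.2 ⊆ U ∧ 10 * p.2 ≤ 1 / ((k:ℝ) + 1) ∧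
      ENNReal.ofReal (c * p.2 ^ d) ≤ μ (closedBall p.1 p.2)} with ht
    obtain ⟨u, hut, hdis, hcov⟩ := Vitali.exists_disjoint_subfamily_covering_enlargement_closedBall t
      (fun p => p.1) (fun p => p.2) (1 / ((k:ℝ) + 1)) (fun p hp => by linarith [hp.2.1, hp.2.2.2.1]) 5 (by norm_num)
    have hcu : u.Countable := by
      refine hdis.countable_of_nonempty_interior fun p hp => ?_
      refine ⟨p.1, ?_⟩
      exact ball_subset_interior_closedBall (mem_ball_self (hut hp).2.1)
    have hb : ∀ p ∈ u, ediam (closedBall p.1 (5 * p.2)) ≤ ENNReal.ofReal (10 * p.2) := by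
      intro p hp
      refine (ediam_cb_le _ (by linarith [(hut hp).2.1])).trans (le_of_eq (by ring_nf))
    refine ⟨u, fun p => closedBall p.1 (5 * p.2), hcu, ?_, ?_, ?_⟩
    · intro p hp
      exact (hb p hp).trans (ENNReal.ofReal_le_ofReal (hut hp).2.2.2.1)
    · intro x hx
      obtain ⟨ε, hε, hεU⟩ := Metric.isOpen_iff.1 hU x (hAU hx)
      obtain ⟨r, hr0, hr1, hr2⟩ := h x hx (min ε (1 / ((k:ℝ) + 1) / 10)) (by positivity)
      have hmem : (x, r) ∈ t := by
        refine ⟨hx, hr0, (closedBall_subset_ball (hr1.trans_le (min_le_left _ _))).trans hεU, ?_, hr2⟩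
        have := hr1.trans_le (min_le_right _ _)
        simp only
        linarith
      obtain ⟨b, hb, hsub⟩ := hcov _ hmem
      exact Set.mem_biUnion hb (hsub (mem_closedBall_self hr0.le))
    · have : Countable u := hcu.to_subtype
      calc ∑' p : u, ediam (closedBall p.1.1 (5 * p.1.2)) ^ d
          ≤ ∑' p : u, C * μ (closedBall p.1.1 p.1.2) := by
            refine ENNReal.tsum_le_tsum fun p => ?_
            have hp := hut p.2
            refine (ENNReal.rpow_le_rpow (hb p p.2) hd).trans ?_
            refine le_trans ?_ (mul_le_mul_right hp.2.2.2.2 C)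
            rw [hC, ← ENNReal.ofReal_mul (by positivity), ENNReal.ofReal_rpow_of_nonneg (by linarith [hp.2.1]) hd,
              Real.mul_rpow (by norm_num) hp.2.1.le]
            refine ENNReal.ofReal_le_ofReal (le_of_eq ?_)
            field_simp
        _ = C * ∑' p : u, μ (closedBall p.1.1 p.1.2) := ENNReal.tsum_mul_left
        _ = C * μ (⋃ p : u, closedBall p.1.1 p.1.2) := by
            rw [measure_iUnion]
            · intro p q hpq
              exact hdis p.2 q.2 (fun h => hpq (Subtype.ext h))
            · intro p; exact measurableSet_closedBall
        _ ≤ C * μ U := by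
            refine mul_le_mul_right (measure_mono (Set.iUnion_subset fun p => (hut p.2).2.2.1)) _
  have hCt : C ≠ ∞ := ofReal_ne_top
  refine ENNReal.le_of_forall_pos_le_add fun η hη _ => ?_
  by_cases hC0 : C = 0
  · have := key Set.univ isOpen_univ (Set.subset_univ _)
    rw [hC0, zero_mul] at this
    exact this.trans (zero_le)
  obtain ⟨U, hAU, hUo, hU⟩ := A.exists_isOpen_le_add μ (ε := η / C)
    (ENNReal.div_ne_zero.2 ⟨by simpa using hη.ne', hCt⟩)
  refine (key U hUo hAU).trans ((mul_le_mul_right hU C).trans ?_)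
  rw [mul_add, ENNReal.mul_div_cancel hC0 hCt]

/-- points of infinite upper density are negligible -/
lemma dens_inf {n : ℕ} (hn : 1 ≤ n) {μ : Measure (Eu n)} [IsFiniteMeasure μ] :
    μH[(n:ℝ) - 1] {x : Eu n | ∀ M : ℕ, ∃ r, 0 < r ∧ r < 1 / ((M:ℝ) + 1) ∧
      ENNReal.ofReal (((M:ℝ) + 1) * r ^ ((n:ℝ) - 1)) < μ (closedBall x r)} = 0 := by
  set A := {x : Eu n | ∀ M : ℕ, ∃ r, 0 < r ∧ r < 1 / ((M:ℝ) + 1) ∧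
      ENNReal.ofReal (((M:ℝ) + 1) * r ^ ((n:ℝ) - 1)) < μ (closedBall x r)} with hA
  set K : ℝ := 10 ^ ((n:ℝ) - 1) with hK
  have h1 : ∀ M : ℕ, μH[(n:ℝ) - 1] A ≤ ENNReal.ofReal (K / ((M:ℝ) + 1)) * μ A := by
    intro M
    refine dens_cover hn (by positivity) fun x hx ε hε => ?_
    obtain ⟨M', hM'⟩ := exists_nat_gt (1 / ε)
    obtain ⟨r, hr0, hr1, hr2⟩ := hx (max M M')
    refine ⟨r, hr0, hr1.trans ?_, le_trans (ENNReal.ofReal_le_ofReal ?_) hr2.le⟩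
    · rw [div_lt_comm₀ (by positivity) hε]
      refine hM'.trans_le ?_
      have : (M':ℝ) ≤ (max M M' : ℕ) := by exact_mod_cast le_max_right _ _
      linarith
    · have : (M:ℝ) ≤ (max M M' : ℕ) := by exact_mod_cast le_max_left _ _
      gcongr
  have h2 : Tendsto (fun M : ℕ => ENNReal.ofReal (K / ((M:ℝ) + 1)) * μ A) atTop (𝓝 (ENNReal.ofReal (K * 0) * μ A)) := by
    refine ENNReal.Tendsto.mul_const ?_ (Or.inr (measure_ne_top _ _))
    refine (ENNReal.continuous_ofReal.tendsto _).comp ?_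
    simp only [div_eq_mul_one_div K]
    exact tendsto_one_div_add_atTop_nhds_zero_nat.const_mul K
  rw [mul_zero, ofReal_zero, zero_mul] at h2
  exact le_antisymm (ge_of_tendsto' h2 h1) zero_le


end

section
open scoped Topology Pointwise

lemma cont_ratio {n : ℕ} (E : Set (Eu n)) (x : Eu n) :
    ContinuousOn (fun r : ℝ => (volume (E ∩ ball x r)).toReal / (volume (ball x r)).toReal) (Set.Ioi 0) := by
  have hω : volume (ball (0 : Eu n) 1) ≠ ∞ := measure_ball_lt_top.ne
  have hv : ∀ r ∈ Set.Ioi (0:ℝ), (volume (ball x r)).toReal = r ^ n * (volume (ball (0 : Eu n) 1)).toReal := by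
    intro r hr
    have hr' : (0:ℝ) < r := hr
    rw [vol_ball x hr, ENNReal.toReal_mul, ENNReal.toReal_ofReal (by positivity)]
  have hfin : ∀ r, volume (E ∩ ball x r) ≠ ∞ := fun r =>
    ((measure_mono Set.inter_subset_right).trans_lt measure_ball_lt_top).ne
  refine ContinuousOn.div ?_ ?_ ?_
  · have hle : ∀ a ∈ Set.Ioi (0:ℝ), ∀ b ∈ Set.Ioi (0:ℝ), a ≤ b →
        |(volume (E ∩ ball x b)).toReal - (volume (E ∩ ball x a)).toReal| ≤
        |b ^ n - a ^ n| * (volume (ball (0 : Eu n) 1)).toReal := by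
      intro a ha b hb hab
      have h1 : (volume (E ∩ ball x a)).toReal ≤ (volume (E ∩ ball x b)).toReal :=
        ENNReal.toReal_mono (hfin b) (measure_mono (Set.inter_subset_inter_right _ (ball_subset_ball hab)))
      have h2 : volume (E ∩ ball x b) ≤ volume (E ∩ ball x a) + (volume (ball x b) - volume (ball x a)) := by
        rw [← measure_sdiff (ball_subset_ball hab) measurableSet_ball.nullMeasurableSet measure_ball_lt_top.ne]
        refine (measure_mono ?_).trans (measure_union_le _ _)
        intro y hy
        by_cases h : y ∈ ball x a
        · exact Or.inl ⟨hy.1, h⟩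
        · exact Or.inr ⟨hy.2, h⟩
      have hm : volume (ball x a) ≤ volume (ball x b) := measure_mono (ball_subset_ball hab)
      have h3 := ENNReal.toReal_mono (ENNReal.add_ne_top.2 ⟨hfin a, (tsub_le_self.trans_lt measure_ball_lt_top).ne⟩) h2
      rw [ENNReal.toReal_add (hfin a) (tsub_le_self.trans_lt measure_ball_lt_top).ne,
        ENNReal.toReal_sub_of_le hm measure_ball_lt_top.ne, hv b hb, hv a ha] at h3
      rw [abs_of_nonneg (by linarith)]
      have h4 : b ^ n - a ^ n ≤ |b ^ n - a ^ n| := le_abs_self _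
      have := mul_le_mul_of_nonneg_right h4 (ENNReal.toReal_nonneg (a := volume (ball (0 : Eu n) 1)))
      linarith
    intro a ha
    rw [ContinuousWithinAt, tendsto_iff_dist_tendsto_zero]
    have ht : Tendsto (fun b : ℝ => |b ^ n - a ^ n| * (volume (ball (0 : Eu n) 1)).toReal) (𝓝[Set.Ioi 0] a)
        (𝓝 (|a ^ n - a ^ n| * (volume (ball (0 : Eu n) 1)).toReal)) :=
      (Continuous.tendsto (by fun_prop) a).mono_left nhdsWithin_le_nhds
    rw [sub_self, abs_zero, zero_mul] at ht
    refine squeeze_zero' (Eventually.of_forall fun _ => dist_nonneg) ?_ ht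
    filter_upwards [self_mem_nhdsWithin] with b hb
    rw [Real.dist_eq]
    rcases le_total a b with h | h
    · exact hle a ha b hb h
    · rw [abs_sub_comm, abs_sub_comm (b ^ n)]
      exact hle b hb a ha h
  · refine ContinuousOn.congr (f := fun r : ℝ => r ^ n * (volume (ball (0 : Eu n) 1)).toReal) ?_ hv
    exact (by fun_prop : Continuous _).continuousOn
  · intro r hr
    exact (vol_ball_toReal_pos x hr).ne'

/-- at an essential boundary point, frequently intermediate density -/
lemma mid_density {n : ℕ} {E : Set (Eu n)} {x : Eu n} (hx : x ∈ essBoundary E) :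
    ∃ c : ℝ, 0 < c ∧ c < 1 ∧ ∀ ε > 0, ∃ r, 0 < r ∧ r < ε ∧
      c * (volume (ball x r)).toReal ≤ (volume (E ∩ ball x r)).toReal ∧
      (volume (E ∩ ball x r)).toReal ≤ (1 - c) * (volume (ball x r)).toReal := by
  set f : ℝ → ℝ := fun r : ℝ => (volume (E ∩ ball x r)).toReal / (volume (ball x r)).toReal with hf
  have hf0 : ∀ r, 0 ≤ f r := fun r => by positivity
  have hf1 : ∀ r, f r ≤ 1 := fun r => div_le_one_of_le₀
    (ENNReal.toReal_mono measure_ball_lt_top.ne (measure_mono Set.inter_subset_right)) toReal_nonneg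
  have hfr : ∀ d : ℝ, ¬ Tendsto f (𝓝[>] 0) (𝓝 d) → ∃ η > 0, ∃ᶠ r in 𝓝[>] (0:ℝ), η ≤ |f r - d| := by
    intro d hd
    rw [Metric.tendsto_nhds] at hd
    push Not at hd
    obtain ⟨η, h1, h2⟩ := hd
    refine ⟨η, h1, ?_⟩
    simpa [Real.dist_eq] using h2
  obtain ⟨a, ha, hfa⟩ := hfr 0 hx.1
  obtain ⟨b, hb, hfb⟩ := hfr 1 hx.2
  set c := min (min a b) (1/2) / 2 with hc
  have hc0 : 0 < c := by positivity
  have hca : 2 * c ≤ a := by rw [hc]; linarith [min_le_left (min a b) (1/2), min_le_left a b]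
  have hcb : 2 * c ≤ b := by rw [hc]; linarith [min_le_left (min a b) (1/2), min_le_right a b]
  have hc4 : c ≤ 1/4 := by rw [hc]; linarith [min_le_right (min a b) (1/2)]
  refine ⟨c, hc0, by linarith, ?_⟩
  intro ε hε
  suffices h : ∃ r, 0 < r ∧ r < ε ∧ c ≤ f r ∧ f r ≤ 1 - c by
    obtain ⟨r, h1, h2, h3, h4⟩ := h
    refine ⟨r, h1, h2, ?_, ?_⟩
    · rwa [← le_div_iff₀ (vol_ball_toReal_pos x h1)]
    · rwa [← div_le_iff₀ (vol_ball_toReal_pos x h1)]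
  have hI : ∀ᶠ r in 𝓝[>] (0:ℝ), r ∈ Set.Ioo 0 ε := Ioo_mem_nhdsGT hε
  obtain ⟨p, hp, hpI⟩ := (hfa.and_eventually hI).exists
  obtain ⟨q, hq, hqI⟩ := (hfb.and_eventually hI).exists
  rw [sub_zero, abs_of_nonneg (hf0 p)] at hp
  rw [abs_of_nonpos (by linarith [hf1 q])] at hq
  by_cases h1 : f p ≤ 1 - c
  · exact ⟨p, hpI.1, hpI.2, by linarith, h1⟩
  by_cases h2 : c ≤ f q
  · exact ⟨q, hqI.1, hqI.2, h2, by linarith⟩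
  push Not at h1 h2
  have hcont : ContinuousOn f (Set.Ioo 0 ε) := (cont_ratio E x).mono fun r hr => hr.1
  obtain ⟨r, hr, hr2⟩ := isPreconnected_Ioo.intermediate_value hqI hpI hcont (show (1/2:ℝ) ∈ Set.Icc (f q) (f p) from
    ⟨by linarith, by linarith⟩)
  exact ⟨r, hr.1, hr.2, by linarith, by linarith⟩

/-- relative isoperimetric inequality -/
lemma rel_iso {n : ℕ} {κ : ℝ≥0∞} {E : Set (Eu n)} (hE : MeasurableSet E) {μ : Measure (Eu n)} (hD : Dp κ E μ)
    (x : Eu n) {r : ℝ} (hr : 0 < r) :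
    volume (E ∩ ball x r) * volume (ball x r \ E) ≤
      volume (ball (0 : Eu n) (2 * r)) * (κ * ENNReal.ofReal (2 * r) * μ (closedBall x (3 * r))) := by
  calc volume (E ∩ ball x r) * volume (ball x r \ E)
      = ∫⁻ y in E ∩ ball x r, volume (ball x r \ E) := by rw [setLIntegral_const, mul_comm]
    _ ≤ ∫⁻ y in E ∩ ball x r, volume (ball 0 (2 * r) ∩ {h | y ∈ diffSet E h}) := by
        refine setLIntegral_mono' (hE.inter measurableSet_ball) fun y hy => ?_
        have := vol_preimage_add (ball x r \ E) y
        rw [← this]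
        refine measure_mono fun h hh => ?_
        have h1 : h + y ∈ ball x r := hh.1
        have h2 : h + y ∉ E := hh.2
        have h3 : y ∈ ball x r := hy.2
        constructor
        · rw [mem_ball, dist_eq_norm] at h1 h3
          rw [mem_ball, dist_zero_right]
          have : h = (h + y - x) - (y - x) := by abel
          rw [this]
          exact (norm_sub_le _ _).trans_lt (by linarith)
        · change ¬ (y ∈ E ↔ y + h ∈ E)
          rw [add_comm y h]
          have := hy.1
          tauto
    _ ≤ ∫⁻ y in ball x r, volume (ball 0 (2 * r) ∩ {h | y ∈ diffSet E h}) :=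
        lintegral_mono_set Set.inter_subset_right
    _ = ∫⁻ h in ball 0 (2 * r), volume (ball x r ∩ diffSet E h) := fub hE measurableSet_ball measurableSet_ball
    _ ≤ ∫⁻ h in ball (0 : Eu n) (2 * r), κ * ENNReal.ofReal (2 * r) * μ (closedBall x (3 * r)) := by
        refine setLIntegral_mono' measurableSet_ball fun h hh => ?_
        have hh' : ‖h‖ < 2 * r := by simpa using hh
        refine (measure_mono (Set.inter_subset_inter_left _ ball_subset_closedBall)).trans
          ((hD _ (isCompact_closedBall _ _) h).trans ?_)
        refine mul_le_mul' (mul_le_mul_right (ENNReal.ofReal_le_ofReal hh'.le) _) (measure_mono ?_)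
        rintro _ ⟨y, hy, s, hs, rfl⟩
        rw [mem_closedBall, dist_eq_norm] at hy ⊢
        have : y + s • h - x = (y - x) + s • h := by abel
        rw [this]
        refine (norm_add_le _ _).trans ?_
        rw [norm_smul, Real.norm_of_nonneg hs.1]
        have := mul_le_of_le_one_left (norm_nonneg h) hs.2
        linarith
    _ = _ := by rw [setLIntegral_const, mul_comm]

lemma lower_density {n : ℕ} {κ : ℝ≥0∞} (hκ : κ ≠ ∞) {E : Set (Eu n)} (hE : MeasurableSet E)
    {μ : Measure (Eu n)} [IsFiniteMeasure μ] (hD : Dp κ E μ) {x : Eu n} (hx : x ∈ essBoundary E) :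
    ∃ c : ℝ, 0 < c ∧ ∀ ε > 0, ∃ r, 0 < r ∧ r < ε ∧ ENNReal.ofReal (c * r ^ ((n:ℝ) - 1)) ≤ μ (closedBall x r) := by
  obtain ⟨c, hc0, hc1, hc⟩ := mid_density hx
  set ω := (volume (ball (0 : Eu n) 1)).toReal with hω
  have hω0 : 0 < ω := vol_ball_toReal_pos 0 one_pos
  set k := κ.toReal with hk
  have hk0 : 0 ≤ k := toReal_nonneg
  set c' := c * c * ω / (2 ^ n * (k + 1) * 2) with hc'
  have hc'0 : 0 < c' := by positivity
  have h3 : (0:ℝ) < 3 ^ ((n:ℝ) - 1) := by positivity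
  refine ⟨c' / 3 ^ ((n:ℝ) - 1), by positivity, fun ε hε => ?_⟩
  obtain ⟨r, hr0, hr1, hr2, hr3⟩ := hc (ε / 3) (by positivity)
  refine ⟨3 * r, by positivity, by linarith, ?_⟩
  have hiso := rel_iso hE hD x hr0
  have hm : μ (closedBall x (3 * r)) ≠ ∞ := measure_ne_top _ _
  refine ENNReal.ofReal_le_of_le_toReal ?_
  set m := (μ (closedBall x (3 * r))).toReal with hmm
  have hiso' := ENNReal.toReal_mono (mul_ne_top measure_ball_lt_top.ne
    (mul_ne_top (mul_ne_top hκ ofReal_ne_top) hm)) hiso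
  have hs := vol_ball_split hE x r
  have hcomm : Eᶜ ∩ ball x r = ball x r \ E := by rw [Set.inter_comm]; rfl
  rw [hcomm] at hs
  rw [ENNReal.toReal_mul, ENNReal.toReal_mul, ENNReal.toReal_mul, ENNReal.toReal_mul, ENNReal.toReal_ofReal (by positivity),
    vol_ball 0 (by positivity : 0 < 2 * r), ENNReal.toReal_mul, ENNReal.toReal_ofReal (by positivity)] at hiso'
  have hv : (volume (ball x r)).toReal = r ^ n * ω := by
    rw [vol_ball x hr0, ENNReal.toReal_mul, ENNReal.toReal_ofReal (by positivity)]
  rw [hv] at hr2 hr3 hs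
  have hA : c * (r ^ n * ω) ≤ (volume (ball x r \ E)).toReal := by linarith
  have h5 : (c * (r ^ n * ω)) * (c * (r ^ n * ω)) ≤ (2 * r) ^ n * ω * (k * (2 * r) * m) :=
    (mul_le_mul hr2 hA (by positivity) toReal_nonneg).trans hiso'
  have hm0 : 0 ≤ m := toReal_nonneg
  have h6 : (2 * r) ^ n * ω * (k * (2 * r) * m) ≤ (2 * r) ^ n * ω * ((k + 1) * (2 * r) * m) := by
    gcongr; linarith
  have h7 := h5.trans h6
  rw [mul_pow] at h7
  rw [Real.mul_rpow (by norm_num) hr0.le, Real.rpow_sub_one hr0.ne', Real.rpow_natCast]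
  have h8 : c' / 3 ^ ((n:ℝ) - 1) * (3 ^ ((n:ℝ) - 1) * (r ^ n / r)) = c' * (r ^ n / r) := by field_simp
  rw [h8, hc', div_mul_div_comm, div_le_iff₀ (by positivity)]
  have hrn : 0 < r ^ n := by positivity
  have : (r ^ n * ω) * (c * c * ω * r ^ n) ≤ (r ^ n * ω) * (m * (2 ^ n * (k + 1) * 2 * r)) := by
    calc _ = c * (r ^ n * ω) * (c * (r ^ n * ω)) := by ring
      _ ≤ _ := h7
      _ = _ := by ring
  exact le_of_mul_le_mul_left this (by positivity)

/-- μ-null subsets of the essential boundary are Hausdorff null -/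
lemma null_of_null {n : ℕ} (hn : 1 ≤ n) {κ : ℝ≥0∞} (hκ : κ ≠ ∞) {E : Set (Eu n)} (hE : MeasurableSet E)
    {μ : Measure (Eu n)} [IsFiniteMeasure μ] (hD : Dp κ E μ) {A : Set (Eu n)} (hA : A ⊆ essBoundary E)
    (h0 : μ A = 0) : μH[(n:ℝ) - 1] A = 0 := by
  have hsub : A ⊆ ⋃ m : ℕ, {x ∈ A | ∀ ε > 0, ∃ r, 0 < r ∧ r < ε ∧
      ENNReal.ofReal (1 / ((m:ℝ) + 1) * r ^ ((n:ℝ) - 1)) ≤ μ (closedBall x r)} := by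
    intro x hx
    obtain ⟨c, hc, h⟩ := lower_density hκ hE hD (hA hx)
    obtain ⟨m, hm⟩ := exists_nat_one_div_lt hc
    refine Set.mem_iUnion.2 ⟨m, hx, fun ε hε => ?_⟩
    obtain ⟨r, h1, h2, h3⟩ := h ε hε
    exact ⟨r, h1, h2, le_trans (ENNReal.ofReal_le_ofReal (by gcongr)) h3⟩
  refine measure_mono_null hsub (measure_iUnion_null fun m => ?_)
  have := dens_cover hn (μ := μ) (A := {x ∈ A | ∀ ε > 0, ∃ r, 0 < r ∧ r < ε ∧
      ENNReal.ofReal (1 / ((m:ℝ) + 1) * r ^ ((n:ℝ) - 1)) ≤ μ (closedBall x r)}) (c := 1 / ((m:ℝ) + 1)) (by positivity)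
      (fun x hx => hx.2)
  rw [measure_mono_null (fun x hx => hx.1) h0, mul_zero] at this
  exact le_antisymm this zero_le


end

section
open scoped Topology Pointwise Convolution

/-- normed bump functions -/
def bmp (n : ℕ) (k : ℕ) : ContDiffBump (0 : Eu n) where
  rIn := 1 / ((k:ℝ) + 1)
  rOut := 2 / ((k:ℝ) + 1)
  rIn_pos := by positivity
  rIn_lt_rOut := by gcongr; norm_num

def mol {n : ℕ} (F : Set (Eu n)) (k : ℕ) : Eu n → ℝ :=
  (F.indicator (1 : Eu n → ℝ)) ⋆[ContinuousLinearMap.lsmul ℝ ℝ, volume] ((bmp n k).normed volume)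

lemma locInt_ind {n : ℕ} {F : Set (Eu n)} (hF : MeasurableSet F) :
    LocallyIntegrable (F.indicator (1 : Eu n → ℝ)) volume :=
  (locallyIntegrable_const (1:ℝ)).indicator hF

lemma mol_eq {n : ℕ} {F : Set (Eu n)} (hF : MeasurableSet F) (k : ℕ) (w : Eu n) :
    mol F k w = ∫ y in F, (bmp n k).normed volume (w - y) := by
  rw [mol, convolution_def, ← integral_indicator hF]
  congr 1
  ext y
  by_cases hy : y ∈ F <;> simp [hy]

lemma mol_le_one {n : ℕ} {F : Set (Eu n)} (hF : MeasurableSet F) (k : ℕ) (w : Eu n) : mol F k w ≤ 1 := by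
  rw [mol_eq hF]
  have h1 : ∫ y, (bmp n k).normed volume (w - y) = 1 := by
    rw [integral_sub_left_eq_self ((bmp n k).normed volume) volume w]
    exact (bmp n k).integral_normed
  rw [← h1]
  refine setIntegral_le_integral ?_ (Eventually.of_forall fun y => (bmp n k).nonneg_normed _)
  exact ((bmp n k).integrable_normed).comp_sub_left w

lemma mol_tendsto {n : ℕ} {F : Set (Eu n)} (hF : MeasurableSet F) :
    ∀ᵐ w, Tendsto (fun k => mol F k w) atTop (𝓝 (F.indicator (1 : Eu n → ℝ) w)) := by
  have h := ContDiffBump.ae_convolution_tendsto_right_of_locallyIntegrable (μ := volume) (φ := bmp n) (l := atTop)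
    (K := 2) (g := F.indicator (1 : Eu n → ℝ)) ?_ ?_ (locInt_ind hF)
  · filter_upwards [h] with w hw
    refine hw.congr fun k => ?_
    rw [mol, convolution_lsmul_swap, convolution_def]
    congr 1
    ext y
    simp [mul_comm]
  · have := (tendsto_one_div_add_atTop_nhds_zero_nat (𝕜 := ℝ)).const_mul 2
    rw [mul_zero] at this
    refine this.congr fun k => ?_
    simp only [bmp]; ring
  · refine Eventually.of_forall fun k => ?_
    simp only [bmp]; exact le_of_eq (by ring)

lemma mol_deriv {n : ℕ} {F : Set (Eu n)} (hF : MeasurableSet F) (k : ℕ) (w : Eu n) :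
    ∃ φ : Eu n → ℝ, ContDiff ℝ 1 φ ∧ HasCompactSupport φ ∧ (∀ y, 0 ≤ φ y) ∧ ∃ D : Eu n →L[ℝ] ℝ, HasFDerivAt (mol F k) D w ∧
      ∀ v, D v = - ∫ y in F, fderiv ℝ φ y v := by
  have hb : ContDiff ℝ 1 ((bmp n k).normed volume) := (bmp n k).contDiff_normed
  have hbc : HasCompactSupport ((bmp n k).normed volume) := (bmp n k).hasCompactSupport_normed
  refine ⟨fun y => (bmp n k).normed volume (w - y), hb.comp (contDiff_const.sub contDiff_id),
    hbc.comp_homeomorph (Homeomorph.subLeft w), fun y => (bmp n k).nonneg_normed _, _,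
    hbc.hasFDerivAt_convolution_right (ContinuousLinearMap.lsmul ℝ ℝ) (locInt_ind hF) hb w, fun v => ?_⟩
  rw [convolution_precompR_apply _ (locInt_ind hF) (hbc.fderiv ℝ) (hb.continuous_fderiv (by simp)), convolution_def, ← integral_neg,
    ← integral_indicator hF]
  congr 1
  ext y
  have h1 : HasFDerivAt (fun y => (bmp n k).normed volume (w - y)) ((fderiv ℝ ((bmp n k).normed volume) (w - y)).comp
      (-(ContinuousLinearMap.id ℝ (Eu n)))) y :=
    ((hb.differentiable (by simp)).differentiableAt.hasFDerivAt).comp y ((hasFDerivAt_id y).const_sub w)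
  by_cases hy : y ∈ F <;> simp [hy, h1.fderiv]

lemma mol_inv {n : ℕ} {F : Set (Eu n)} (hF : MeasurableSet F) {v : Eu n}
    (h1 : ∀ φ : Eu n → ℝ, ContDiff ℝ 1 φ → HasCompactSupport φ → (∀ y, 0 ≤ φ y) → 0 ≤ ∫ x in F, fderiv ℝ φ x v)
    (k : ℕ) (w : Eu n) : Antitone fun s : ℝ => mol F k (w + s • v) := by
  have hd : ∀ s : ℝ, ∃ d, HasDerivAt (fun s : ℝ => mol F k (w + s • v)) d s ∧ d ≤ 0 := by
    intro s
    obtain ⟨φ, a, b, c, D, hD, hDv⟩ := mol_deriv hF k (w + s • v)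
    have hl : HasDerivAt (fun s : ℝ => w + s • v) v s := by
      simpa using ((hasDerivAt_id s).smul_const v).const_add w
    refine ⟨D v, HasFDerivAt.comp_hasDerivAt s hD hl, ?_⟩
    rw [hDv]
    have := h1 φ a b c
    linarith
  choose d hd hd0 using hd
  refine antitone_of_deriv_nonpos (fun s => (hd s).differentiableAt) fun s => ?_
  rw [(hd s).deriv]; exact hd0 s

/-- classification of blow-ups -/
lemma halfspace {n : ℕ} {F : Set (Eu n)} (hF : MeasurableSet F) {ν : Eu n} (hν : ‖ν‖ = 1)
    (h1 : ∀ φ : Eu n → ℝ, ContDiff ℝ 1 φ → HasCompactSupport φ → (∀ y, 0 ≤ φ y) →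
      ∀ v, inner ℝ v ν = 0 → ∫ x in F, fderiv ℝ φ x v = 0)
    (h2 : ∀ φ : Eu n → ℝ, ContDiff ℝ 1 φ → HasCompactSupport φ → (∀ y, 0 ≤ φ y) → 0 ≤ ∫ x in F, fderiv ℝ φ x ν)
    (h3 : volume (F ∩ ball 0 1) ≠ 0) (h4 : volume (ball 0 1 \ F) ≠ 0) :
    ∃ t : ℝ, |t| ≤ 1 ∧ ∀ᵐ y, (inner ℝ y ν < t → y ∈ F) ∧ (t < inner ℝ y ν → y ∉ F) := by
  set P : Eu n → Prop := fun w => Tendsto (fun k => mol F k w) atTop (𝓝 1) with hP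
  have hPF : ∀ᵐ w, (w ∈ F ↔ P w) := by
    filter_upwards [mol_tendsto hF] with w hw
    by_cases h : w ∈ F
    · rw [Set.indicator_of_mem h] at hw
      exact ⟨fun _ => hw, fun _ => h⟩
    · rw [Set.indicator_of_notMem h] at hw
      exact ⟨fun h' => absurd h' h, fun h' => absurd (tendsto_nhds_unique hw h') (by norm_num)⟩
  have hdown : ∀ w w', P w → inner ℝ w' ν ≤ (inner ℝ w ν : ℝ) → P w' := by
    intro w w' hw hle
    have hmono : ∀ k, mol F k w ≤ mol F k w' := by
      intro k
      set h := hproj ν (w' - w) with hh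
      set s := (inner ℝ (w' - w) ν : ℝ) with hs
      have hs0 : s ≤ 0 := by rw [hs, inner_sub_left]; linarith
      have hhν : inner ℝ h ν = (0:ℝ) := by
        rw [hh, hproj, inner_sub_left, inner_smul_left, inner_self_one hν]; simp
      have e1 : w' = (w + (1:ℝ) • h) + s • ν := by rw [hh, hproj]; module
      have a1 := mol_inv hF (v := -h) (fun φ a b c => (le_of_eq (h1 φ a b c (-h) (by simp [hhν])).symm)) k (w + (1:ℝ) • h)
      have a2 := mol_inv hF (v := ν) h2 k (w + (1:ℝ) • h)
      have b1 := a1 (show (0:ℝ) ≤ 1 by norm_num)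
      have b2 := a2 hs0
      simp only [zero_smul, add_zero] at b1 b2
      rw [show w + (1:ℝ) • h + (1:ℝ) • (-h) = w by module] at b1
      rw [e1]
      exact b1.trans b2
    exact tendsto_of_tendsto_of_tendsto_of_le_of_le hw tendsto_const_nhds hmono (fun k => mol_le_one hF k w')
  have hex : ∀ S : Set (Eu n), volume S ≠ 0 → ∃ w ∈ S, (w ∈ F ↔ P w) := by
    intro S hS
    by_contra hcon
    push Not at hcon
    refine hS (measure_mono_null ?_ hPF)
    intro w hw
    have := hcon w hw
    intro h
    simp only [Set.mem_ofPred_eq] at h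
    tauto
  obtain ⟨w1, hw1, hw1P⟩ := hex _ h3
  obtain ⟨w0, hw0, hw0P⟩ := hex _ h4
  have hP1 : P w1 := hw1P.1 hw1.1
  have hP0 : ¬ P w0 := fun h => hw0.2 (hw0P.2 h)
  have hn1 : |(inner ℝ w1 ν : ℝ)| ≤ 1 := (abs_inner_le hν w1).trans (by have := hw1.2; simp at this; linarith)
  have hn0 : |(inner ℝ w0 ν : ℝ)| ≤ 1 := (abs_inner_le hν w0).trans (by have := hw0.1; simp at this; linarith)
  set J : Set ℝ := {a | ∃ w, P w ∧ a = inner ℝ w ν} with hJ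
  have hb : ∀ a ∈ J, a ≤ inner ℝ w0 ν := by
    rintro _ ⟨w, hw, rfl⟩
    by_contra h
    push Not at h
    exact hP0 (hdown w w0 hw h.le)
  have hJne : J.Nonempty := ⟨_, w1, hP1, rfl⟩
  have hJb : BddAbove J := ⟨_, hb⟩
  refine ⟨sSup J, ?_, ?_⟩
  · rw [abs_le]
    constructor
    · have := le_csSup hJb (show (inner ℝ w1 ν : ℝ) ∈ J from ⟨w1, hP1, rfl⟩)
      linarith [(abs_le.1 hn1).1]
    · have := csSup_le hJne hb
      linarith [(abs_le.1 hn0).2]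
  · filter_upwards [hPF] with y hy
    rw [hy]
    constructor
    · intro h
      obtain ⟨_, ⟨w, hw, rfl⟩, hlt⟩ := exists_lt_of_lt_csSup hJne h
      exact hdown w y hw hlt.le
    · intro h hPy
      exact absurd (le_csSup hJb (show (inner ℝ y ν : ℝ) ∈ J from ⟨y, hPy, rfl⟩)) (not_le.2 h)


end

section
open scoped Topology Pointwise

/-- affine rescaling map -/
def aff {n : ℕ} (x : Eu n) (r : ℝ) (y : Eu n) : Eu n := r • y + x

/-- rescaled set -/
def resc {n : ℕ} (E : Set (Eu n)) (x : Eu n) (r : ℝ) : Set (Eu n) := {y | aff x r y ∈ E}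

lemma aff_inv {n : ℕ} (x : Eu n) {r : ℝ} (hr : r ≠ 0) (z : Eu n) : aff x r (r⁻¹ • (z - x)) = z := by
  rw [aff, smul_smul, mul_inv_cancel₀ hr]; module

lemma inv_aff {n : ℕ} (x : Eu n) {r : ℝ} (hr : r ≠ 0) (z : Eu n) : r⁻¹ • (aff x r z - x) = z := by
  rw [aff, add_sub_cancel_right, smul_smul, inv_mul_cancel₀ hr, one_smul]

lemma continuous_aff {n : ℕ} (x : Eu n) (r : ℝ) : Continuous (aff x r) :=
  (continuous_const_smul r).add continuous_const

lemma measurableSet_resc {n : ℕ} {E : Set (Eu n)} (hE : MeasurableSet E) (x : Eu n) (r : ℝ) :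
    MeasurableSet (resc E x r) := (continuous_aff x r).measurable hE

lemma vol_aff {n : ℕ} (x : Eu n) {r : ℝ} (hr : 0 < r) (S : Set (Eu n)) :
    volume (aff x r '' S) = ENNReal.ofReal (r ^ n) * volume S := by
  have h1 : aff x r '' S = (fun z => z + (-x)) ⁻¹' (r • S) := by
    ext z
    simp only [Set.mem_image, Set.mem_preimage, Set.mem_smul_set, aff]
    constructor
    · rintro ⟨y, hy, rfl⟩; exact ⟨y, hy, by module⟩
    · rintro ⟨y, hy, h⟩; exact ⟨y, hy, by rw [h]; module⟩
  rw [h1, vol_preimage_add, Measure.addHaar_smul, finrank_euclideanSpace_fin, abs_of_pos (by positivity)]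

lemma mem_diffSet_resc {n : ℕ} (E : Set (Eu n)) (x : Eu n) (r : ℝ) (h y : Eu n) :
    y ∈ diffSet (resc E x r) h ↔ aff x r y ∈ diffSet E (r • h) := by
  have : aff x r (y + h) = aff x r y + r • h := by simp only [aff]; module
  simp only [diffSet, resc, Set.mem_ofPred_eq, this]

lemma sweep_aff {n : ℕ} (x : Eu n) (r : ℝ) (K : Set (Eu n)) (h : Eu n) :
    sweep (aff x r '' K) (r • h) = aff x r '' sweep K h := by
  ext z
  simp only [sweep, Set.mem_image, Set.mem_ofPred_eq]
  constructor
  · rintro ⟨_, ⟨y, hy, rfl⟩, s, hs, rfl⟩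
    exact ⟨_, ⟨y, hy, s, hs, rfl⟩, by simp only [aff]; module⟩
  · rintro ⟨_, ⟨y, hy, s, hs, rfl⟩, rfl⟩
    exact ⟨_, ⟨y, hy, rfl⟩, s, hs, by simp only [aff]; module⟩

lemma Dp_resc {n : ℕ} {κ : ℝ≥0∞} {E : Set (Eu n)} {μ : Measure (Eu n)} (hD : Dp κ E μ) (x : Eu n) {r : ℝ}
    (hr : 0 < r) {K : Set (Eu n)} (hK : IsCompact K) (h : Eu n) :
    ENNReal.ofReal (r ^ n) * volume (K ∩ diffSet (resc E x r) h) ≤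
      κ * ENNReal.ofReal (r * ‖h‖) * μ (aff x r '' sweep K h) := by
  have := hD (aff x r '' K) (hK.image (continuous_aff x r)) (r • h)
  rw [sweep_aff, norm_smul, Real.norm_of_nonneg hr.le] at this
  rw [← vol_aff x hr]
  refine (measure_mono ?_).trans this
  rintro _ ⟨y, ⟨hy, hyd⟩, rfl⟩
  exact ⟨⟨y, hy, rfl⟩, (mem_diffSet_resc E x r h y).1 hyd⟩

lemma IBP_resc {n : ℕ} {E : Set (Eu n)} (hE : MeasurableSet E) {μ : Measure (Eu n)} {g : Eu n → Eu n} (hI : IBP E μ g) (x : Eu n) {r : ℝ}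
    (hr : 0 < r) {φ : Eu n → ℝ} (h1 : ContDiff ℝ 1 φ) (h2 : HasCompactSupport φ) (v : Eu n) :
    r ^ n * ∫ y in resc E x r, fderiv ℝ φ y v = r * ∫ z, inner ℝ (g z) v * φ (r⁻¹ • (z - x)) ∂μ := by
  set ψ : Eu n → ℝ := fun z => φ (r⁻¹ • (z - x)) with hψ
  have e1 : ContDiff ℝ 1 ψ := h1.comp ((contDiff_id.sub contDiff_const).const_smul _)
  let H : Eu n ≃ₜ Eu n :=
    { toFun := fun z => r⁻¹ • (z - x)
      invFun := aff x r
      left_inv := fun z => aff_inv x hr.ne' z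
      right_inv := fun z => inv_aff x hr.ne' z
      continuous_toFun := by fun_prop
      continuous_invFun := continuous_aff x r }
  have e2 : HasCompactSupport ψ := h2.comp_homeomorph H
  have e3 := hI ψ e1 e2 v
  rw [← e3, ← integral_indicator (measurableSet_resc hE x r), ← integral_indicator hE]
  have e4 : ∀ z, fderiv ℝ ψ z v = r⁻¹ * fderiv ℝ φ (r⁻¹ • (z - x)) v := by
    intro z
    have : HasFDerivAt ψ ((fderiv ℝ φ (r⁻¹ • (z - x))).comp (r⁻¹ • ContinuousLinearMap.id ℝ (Eu n))) z :=
      ((h1.differentiable (by simp)).differentiableAt.hasFDerivAt).comp z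
        (((hasFDerivAt_id z).sub_const x).const_smul r⁻¹)
    rw [this.fderiv]; simp
  set G : Eu n → ℝ := E.indicator (fun z => fderiv ℝ ψ z v) with hG
  have e5 : (∫ y, (resc E x r).indicator (fun y => fderiv ℝ φ y v) y) = ∫ y, r * G (r • y + x) := by
    congr 1
    ext y
    by_cases hy : aff x r y ∈ E
    · rw [Set.indicator_of_mem (show y ∈ resc E x r from hy), hG]
      have : r • y + x ∈ E := hy
      rw [Set.indicator_of_mem this, e4]
      have := inv_aff x hr.ne' y
      rw [aff] at this
      rw [this]; field_simp
    · rw [Set.indicator_of_notMem (show y ∉ resc E x r from hy), hG]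
      have : r • y + x ∉ E := hy
      rw [Set.indicator_of_notMem this, mul_zero]
  rw [e5, integral_const_mul, Measure.integral_comp_smul volume (fun z => G (z + x)) r,
    integral_add_right_eq_self G x, finrank_euclideanSpace_fin, abs_of_pos (by positivity), smul_eq_mul]
  field_simp

lemma rpow_nm1 {r : ℝ} (hr : 0 < r) (n : ℕ) : r ^ ((n:ℝ) - 1) * r = r ^ n := by
  rw [Real.rpow_sub_one hr.ne', Real.rpow_natCast]; field_simp

lemma Dp_resc' {n : ℕ} {κ : ℝ≥0∞} {E : Set (Eu n)} {μ : Measure (Eu n)} (hD : Dp κ E μ) (x : Eu n) {r : ℝ}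
    (hr : 0 < r) {K : Set (Eu n)} (hK : IsCompact K) (h : Eu n) :
    ENNReal.ofReal (r ^ ((n:ℝ) - 1)) * volume (K ∩ diffSet (resc E x r) h) ≤
      κ * ENNReal.ofReal ‖h‖ * μ (aff x r '' sweep K h) := by
  have := Dp_resc hD x hr hK h
  rw [← rpow_nm1 hr, ENNReal.ofReal_mul (by positivity), ENNReal.ofReal_mul hr.le] at this
  have h0 : ENNReal.ofReal r ≠ 0 := by simpa using hr
  refine (ENNReal.mul_le_mul_iff_right h0 ENNReal.ofReal_ne_top).1 ?_
  calc _ = _ := by ring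
    _ ≤ _ := this
    _ = _ := by ring

lemma IBP_resc' {n : ℕ} {E : Set (Eu n)} (hE : MeasurableSet E) {μ : Measure (Eu n)} {g : Eu n → Eu n} (hI : IBP E μ g) (x : Eu n) {r : ℝ}
    (hr : 0 < r) {φ : Eu n → ℝ} (h1 : ContDiff ℝ 1 φ) (h2 : HasCompactSupport φ) (v : Eu n) :
    r ^ ((n:ℝ) - 1) * ∫ y in resc E x r, fderiv ℝ φ y v = ∫ z, inner ℝ (g z) v * φ (r⁻¹ • (z - x)) ∂μ := by
  have := IBP_resc hE hI x hr h1 h2 v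
  rw [← rpow_nm1 hr] at this
  refine mul_left_cancel₀ hr.ne' ?_
  linarith

/-- Lebesgue points and density bound -/
def Good {n : ℕ} (μ : Measure (Eu n)) (g : Eu n → Eu n) (M : ℕ) (x : Eu n) : Prop :=
  (∀ r, 0 < r → r < 1 / ((M:ℝ) + 1) → μ (closedBall x r) ≤ ENNReal.ofReal (((M:ℝ) + 1) * r ^ ((n:ℝ) - 1))) ∧
  ∀ η > 0, ∃ δ > 0, ∀ ρ, 0 < ρ → ρ < δ → ∫ y in closedBall x ρ, ‖g y - g x‖ ∂μ ≤ η * (μ (closedBall x ρ)).toReal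

lemma ae_leb {n : ℕ} {μ : Measure (Eu n)} [IsFiniteMeasure μ] {g : Eu n → Eu n} (hg : Integrable g μ) :
    ∀ᵐ x ∂μ, ∀ η > 0, ∃ δ > 0, ∀ ρ, 0 < ρ → ρ < δ →
      ∫ y in closedBall x ρ, ‖g y - g x‖ ∂μ ≤ η * (μ (closedBall x ρ)).toReal := by
  filter_upwards [(Besicovitch.vitaliFamily μ).ae_tendsto_average_norm_sub hg.locallyIntegrable] with x hx η hη
  have h1 := hx.comp (Besicovitch.tendsto_filterAt μ x)
  have h2 := h1.eventually (gt_mem_nhds hη)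
  rw [eventually_nhdsWithin_iff, Metric.eventually_nhds_iff] at h2
  obtain ⟨δ, hδ, h⟩ := h2
  refine ⟨δ, hδ, fun ρ h0 hρ => ?_⟩
  have := h (y := ρ) (by simpa [abs_of_pos h0] using hρ) h0
  simp only [Function.comp, average_eq, smul_eq_mul, Measure.real, Measure.restrict_apply MeasurableSet.univ, Set.univ_inter] at this
  by_cases h0 : μ (closedBall x ρ) = 0
  · rw [setIntegral_measure_zero _ h0, h0]; simp
  · have hp : 0 < (μ (closedBall x ρ)).toReal := ENNReal.toReal_pos h0 (measure_ne_top _ _)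
    rw [inv_mul_lt_iff₀ hp] at this
    linarith


end

section
open scoped Topology Pointwise

lemma aff_image_resc {n : ℕ} (E : Set (Eu n)) (x : Eu n) {r : ℝ} (hr : 0 < r) :
    aff x r '' (resc E x r ∩ ball 0 1) = E ∩ ball x r := by
  ext z
  constructor
  · rintro ⟨y, ⟨h1, h2⟩, rfl⟩
    refine ⟨h1, ?_⟩
    rw [mem_ball, dist_eq_norm, aff, add_sub_cancel_right, norm_smul, Real.norm_of_nonneg hr.le]
    rw [mem_ball, dist_zero_right] at h2
    nlinarith
  · rintro ⟨h1, h2⟩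
    refine ⟨r⁻¹ • (z - x), ⟨?_, ?_⟩, aff_inv x hr.ne' z⟩
    · rw [resc, Set.mem_ofPred_eq, aff_inv x hr.ne']; exact h1
    · rw [mem_ball, dist_zero_right, norm_smul, Real.norm_of_nonneg (by positivity), inv_mul_lt_iff₀ hr, mul_one, ← dist_eq_norm]
      exact h2

lemma mid_resc {n : ℕ} {E : Set (Eu n)} {x : Eu n} (hE : MeasurableSet E) {r c : ℝ} (hr : 0 < r) (hc : 0 < c)
    (h1 : c * (volume (ball x r)).toReal ≤ (volume (E ∩ ball x r)).toReal)
    (h2 : (volume (E ∩ ball x r)).toReal ≤ (1 - c) * (volume (ball x r)).toReal) :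
    ENNReal.ofReal c * volume (ball (0 : Eu n) 1) ≤ volume (resc E x r ∩ ball 0 1) ∧
    ENNReal.ofReal c * volume (ball (0 : Eu n) 1) ≤ volume (ball 0 1 \ resc E x r) := by
  have key : ∀ A : Set (Eu n), c * (volume (ball x r)).toReal ≤ (volume (A ∩ ball x r)).toReal →
      ENNReal.ofReal c * volume (ball (0 : Eu n) 1) ≤ volume (resc A x r ∩ ball 0 1) := by
    intro A hA
    have h0 : ENNReal.ofReal (r ^ n) ≠ 0 := by simp; positivity
    rw [← ENNReal.mul_le_mul_iff_right h0 ENNReal.ofReal_ne_top, ← vol_aff x hr, aff_image_resc A x hr]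
    have e : ENNReal.ofReal (r ^ n) * (ENNReal.ofReal c * volume (ball (0 : Eu n) 1)) = ENNReal.ofReal c * volume (ball x r) := by
      rw [vol_ball x hr]; ring
    rw [e, ← ENNReal.ofReal_toReal (measure_ball_lt_top (μ := volume) (x := x) (r := r)).ne, ← ENNReal.ofReal_mul hc.le]
    exact ENNReal.ofReal_le_of_le_toReal hA
  refine ⟨key E h1, ?_⟩
  have := key Eᶜ (by have := vol_ball_split hE x r; linarith)
  refine this.trans (measure_mono ?_)
  rintro y ⟨h1, h2⟩
  exact ⟨h2, h1⟩

lemma blow_bound {n : ℕ} {κ : ℝ≥0∞} {E : Set (Eu n)} {μ : Measure (Eu n)} (hD : Dp κ E μ) {g : Eu n → Eu n} {M : ℕ}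
    {x : Eu n} (hG : Good μ g M x) (R : ℝ) {r : ℝ} (hr : 0 < r) (hr1 : r * (|R| + 1) < 1 / ((M:ℝ) + 1)) (h : Eu n) (hh : ‖h‖ ≤ 1) :
    volume (closedBall 0 R ∩ diffSet (resc E x r) h) ≤
      (κ * ENNReal.ofReal (((M:ℝ) + 1) * (|R| + 1) ^ ((n:ℝ) - 1))) * ENNReal.ofReal ‖h‖ := by
  have h1 := Dp_resc' hD x hr (isCompact_closedBall (0 : Eu n) R) h
  have h2 : aff x r '' sweep (closedBall 0 R) h ⊆ closedBall x (r * (|R| + 1)) := by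
    rintro _ ⟨_, ⟨y, hy, s, hs, rfl⟩, rfl⟩
    rw [mem_closedBall, dist_eq_norm, aff, add_sub_cancel_right, norm_smul, Real.norm_of_nonneg hr.le]
    rw [mem_closedBall, dist_zero_right] at hy
    gcongr
    refine (norm_add_le _ _).trans (add_le_add (hy.trans (le_abs_self R)) ?_)
    rw [norm_smul, Real.norm_of_nonneg hs.1]
    nlinarith [hs.2, hs.1, norm_nonneg h]
  have h3 := (measure_mono (μ := μ) h2).trans (hG.1 _ (by positivity) hr1)
  rw [Real.mul_rpow hr.le (by positivity), mul_left_comm, ENNReal.ofReal_mul (by positivity)] at h3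
  have h0 : ENNReal.ofReal (r ^ ((n:ℝ) - 1)) ≠ 0 := by simp; positivity
  rw [← ENNReal.mul_le_mul_iff_right h0 ENNReal.ofReal_ne_top]
  refine h1.trans ((mul_le_mul_right h3 _).trans (le_of_eq ?_))
  ring

lemma blow_lower {n : ℕ} {E : Set (Eu n)} (hE : MeasurableSet E) {μ : Measure (Eu n)} [IsFiniteMeasure μ] {g : Eu n → Eu n}
    (hg : Integrable g μ) (hI : IBP E μ g) {M : ℕ} {x : Eu n} (hG : Good μ g M x) {φ : Eu n → ℝ} (h1 : ContDiff ℝ 1 φ)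
    (h2 : HasCompactSupport φ) (h3 : ∀ y, 0 ≤ φ y) {v : Eu n} (hv : 0 ≤ (inner ℝ (g x) v : ℝ)) {η : ℝ} (hη : 0 < η) :
    ∃ δ > 0, ∀ r, 0 < r → r < δ → -η ≤ ∫ y in resc E x r, fderiv ℝ φ y v := by
  obtain ⟨C, hC⟩ := h2.exists_bound_of_continuous h1.continuous
  obtain ⟨R, hR, hRs⟩ : ∃ R : ℝ, 0 < R ∧ tsupport φ ⊆ closedBall 0 R := by
    obtain ⟨R, hR⟩ := h2.isCompact.isBounded.subset_closedBall (0 : Eu n)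
    exact ⟨max R 1, by positivity, hR.trans (closedBall_subset_closedBall (le_max_left _ _))⟩
  have hC0 : 0 ≤ C := (norm_nonneg _).trans (hC 0)
  set B : ℝ := (‖v‖ * C) * (((M:ℝ) + 1) * R ^ ((n:ℝ) - 1)) + 1 with hB
  have hBp : 0 < B := by positivity
  obtain ⟨δ, hδ, hδ'⟩ := hG.2 (η / B) (by positivity)
  refine ⟨min δ (1 / ((M:ℝ) + 1)) / R, by positivity, fun r hr hrlt => ?_⟩
  rw [lt_div_iff₀ hR, lt_min_iff] at hrlt
  have hrR : 0 < r * R := by positivity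
  have hintg := IBP_resc' hE hI x hr h1 h2 v
  have hleb := hδ' (r * R) hrR hrlt.1
  have hden := hG.1 (r * R) hrR hrlt.2
  have hden' : (μ (closedBall x (r * R))).toReal ≤ ((M:ℝ) + 1) * R ^ ((n:ℝ) - 1) * r ^ ((n:ℝ) - 1) := by
    refine (ENNReal.toReal_le_of_le_ofReal (by positivity) hden).trans (le_of_eq ?_)
    rw [Real.mul_rpow hr.le hR.le]; ring
  set ψ : Eu n → ℝ := fun z => φ (r⁻¹ • (z - x)) with hψ
  have hψc : Continuous ψ := h1.continuous.comp (by fun_prop)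
  have hψ0 : ∀ z, z ∉ closedBall x (r * R) → ψ z = 0 := by
    intro z hz
    refine image_eq_zero_of_notMem_tsupport (f := φ) (x := r⁻¹ • (z - x)) fun hmem => hz ?_
    have := hRs hmem
    rw [mem_closedBall, dist_zero_right, norm_smul, Real.norm_of_nonneg (by positivity), inv_mul_le_iff₀ hr, ← dist_eq_norm] at this
    exact this
  have hlow : -(‖v‖ * C * ∫ y in closedBall x (r * R), ‖g y - g x‖ ∂μ) ≤ ∫ z, inner ℝ (g z) v * ψ z ∂μ := by
    rw [← integral_const_mul, ← integral_indicator measurableSet_closedBall, ← integral_neg]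
    have hgi : Integrable (fun z => ‖g z - g x‖) μ := (hg.sub (integrable_const _)).norm
    refine integral_mono ((hgi.const_mul _).indicator measurableSet_closedBall).neg ?_ fun z => ?_
    · have : Integrable (fun z => (inner ℝ (g z) v : ℝ)) μ := hg.inner_const v
      exact this.mul_bdd (c := C) hψc.aestronglyMeasurable (Eventually.of_forall fun z => hC _)
    · by_cases hz : z ∈ closedBall x (r * R)
      · simp only [Set.indicator_of_mem hz]
        have a1 : (inner ℝ (g z) v : ℝ) = inner ℝ (g x) v + inner ℝ (g z - g x) v := by
          rw [← inner_add_left]; congr 1; module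
        have a2 := abs_real_inner_le_norm (g z - g x) v
        have a3 : 0 ≤ ψ z := h3 _
        have a4 : ψ z ≤ C := (le_abs_self _).trans (hC _)
        have a5 := (abs_le.1 a2).1
        have a6 : -(‖g z - g x‖ * ‖v‖) ≤ (inner ℝ (g z) v : ℝ) := by rw [a1]; linarith
        have a7 : 0 ≤ ‖g z - g x‖ * ‖v‖ := by positivity
        nlinarith [mul_le_mul_of_nonneg_right a6 a3, mul_le_mul_of_nonneg_left a4 a7]
      · simp [Set.indicator_of_notMem hz, hψ0 z hz]
  have hrp : 0 < r ^ ((n:ℝ) - 1) := by positivity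
  have hfin : -η * r ^ ((n:ℝ) - 1) ≤ ∫ z, inner ℝ (g z) v * ψ z ∂μ := by
    refine le_trans ?_ hlow
    have b1 : ‖v‖ * C * ∫ y in closedBall x (r * R), ‖g y - g x‖ ∂μ ≤
        ‖v‖ * C * (η / B * (((M:ℝ) + 1) * R ^ ((n:ℝ) - 1) * r ^ ((n:ℝ) - 1))) := by gcongr; exact hleb.trans (by gcongr)
    have b2 : ‖v‖ * C * (η / B * (((M:ℝ) + 1) * R ^ ((n:ℝ) - 1) * r ^ ((n:ℝ) - 1))) = η * r ^ ((n:ℝ) - 1) * ((B - 1) / B) := by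
      rw [hB]; ring
    have b3 : (B - 1) / B ≤ 1 := by rw [div_le_one hBp]; linarith
    have b4 : η * r ^ ((n:ℝ) - 1) * ((B - 1) / B) ≤ η * r ^ ((n:ℝ) - 1) * 1 := by gcongr
    linarith
  rw [← hintg] at hfin
  have : r ^ ((n:ℝ) - 1) * (-η) ≤ r ^ ((n:ℝ) - 1) * ∫ y in resc E x r, fderiv ℝ φ y v := by linarith
  exact le_of_mul_le_mul_left this hrp

lemma int_conv {n : ℕ} {E : ℕ → Set (Eu n)} {F : Set (Eu n)} (hE : ∀ j, MeasurableSet (E j)) (hF : MeasurableSet F)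
    (hae : ∀ᵐ x, ∀ᶠ j in atTop, x ∈ E j ↔ x ∈ F) {f : Eu n → ℝ} (hf : Integrable f) :
    Tendsto (fun j => ∫ x in E j, f x) atTop (𝓝 (∫ x in F, f x)) := by
  simp_rw [← integral_indicator (hE _), ← integral_indicator hF]
  refine tendsto_integral_of_dominated_convergence (fun x => ‖f x‖) (fun j => (hf.indicator (hE j)).aestronglyMeasurable)
    hf.norm (fun j => Eventually.of_forall fun x => norm_indicator_le_norm_self _ _) ?_
  filter_upwards [hae] with x hx
  refine tendsto_const_nhds.congr' ?_
  filter_upwards [hx] with j hj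
  by_cases h : x ∈ F
  · rw [Set.indicator_of_mem h, Set.indicator_of_mem (hj.2 h)]
  · rw [Set.indicator_of_notMem h, Set.indicator_of_notMem (fun h' => h (hj.1 h'))]

lemma exists_unit {n : ℕ} (hn : 1 ≤ n) : ∃ e : Eu n, ‖e‖ = 1 :=
  ⟨EuclideanSpace.single ⟨0, hn⟩ 1, by simp⟩

/-- blow-ups at good points are half-spaces -/
lemma blowup {n : ℕ} (hn : 1 ≤ n) {κ : ℝ≥0∞} (hκ : κ ≠ ∞) {E : Set (Eu n)} (hE : MeasurableSet E) {μ : Measure (Eu n)} [IsFiniteMeasure μ]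
    (hD : Dp κ E μ) {g : Eu n → Eu n} (hg : Integrable g μ) (hI : IBP E μ g) {M : ℕ} {x : Eu n} (hx : x ∈ essBoundary E)
    (hG : Good μ g M x) : ∃ (r : ℕ → ℝ) (F : Set (Eu n)) (ν : Eu n) (t : ℝ), (∀ j, 0 < r j) ∧ Tendsto r atTop (𝓝 0) ∧
      MeasurableSet F ∧ ‖ν‖ = 1 ∧ |t| ≤ 1 ∧ (∀ᵐ y, (inner ℝ y ν < t → y ∈ F) ∧ (t < inner ℝ y ν → y ∉ F)) ∧
      ∀ R : ℝ, Tendsto (fun j => volume (closedBall 0 R ∩ xd (resc E x (r j)) F)) atTop (𝓝 0) := by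
  obtain ⟨c, hc, hc1, hmid⟩ := mid_density hx
  have : ∀ j : ℕ, ∃ r, 0 < r ∧ r < 1 / ((j:ℝ) + 1) ∧
      c * (volume (ball x r)).toReal ≤ (volume (E ∩ ball x r)).toReal ∧
      (volume (E ∩ ball x r)).toReal ≤ (1 - c) * (volume (ball x r)).toReal := fun j => hmid _ (by positivity)
  choose r0 hr0 hr0' hm1 hm2 using this
  have hr0t : Tendsto r0 atTop (𝓝 0) := squeeze_zero (fun j => (hr0 j).le) (fun j => (hr0' j).le)
    tendsto_one_div_add_atTop_nhds_zero_nat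
  obtain ⟨F, s, hF, hs, hae, hL⟩ := compactness (fun j => resc E x (r0 j)) (fun j => measurableSet_resc hE x _) (by
    intro R
    refine ⟨κ * ENNReal.ofReal (((M:ℝ) + 1) * (|R| + 1) ^ ((n:ℝ) - 1)), ENNReal.mul_ne_top hκ ENNReal.ofReal_ne_top, ?_⟩
    have : Tendsto (fun j => r0 j * (|R| + 1)) atTop (𝓝 (0 * (|R| + 1))) := hr0t.mul_const _
    rw [zero_mul] at this
    filter_upwards [this.eventually (gt_mem_nhds (show 0 < 1 / ((M:ℝ) + 1) by positivity))] with j hj h hh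
    exact blow_bound hD hG R (hr0 j) hj h hh)
  have hrt : Tendsto (fun j => r0 (s j)) atTop (𝓝 0) := hr0t.comp hs.tendsto_atTop
  have hpos : ∀ φ : Eu n → ℝ, ContDiff ℝ 1 φ → HasCompactSupport φ → (∀ y, 0 ≤ φ y) → ∀ v, 0 ≤ (inner ℝ (g x) v : ℝ) →
      0 ≤ ∫ y in F, fderiv ℝ φ y v := by
    intro φ a1 a2 a3 v hv
    have hfi : Integrable (fun y => fderiv ℝ φ y v) := by
      refine Continuous.integrable_of_hasCompactSupport ?_ ?_
      · exact (a1.continuous_fderiv (by simp)).clm_apply continuous_const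
      · exact a2.fderiv_apply ℝ v
    have hlim := int_conv (fun j => measurableSet_resc hE x (r0 (s j))) hF hae hfi
    refine le_of_forall_pos_le_add fun η hη => ?_
    obtain ⟨δ, hδ, h⟩ := blow_lower hE hg hI hG a1 a2 a3 hv hη
    have : -η ≤ ∫ y in F, fderiv ℝ φ y v := by
      refine ge_of_tendsto hlim ?_
      filter_upwards [hrt.eventually (gt_mem_nhds hδ)] with j hj
      exact h _ (hr0 _) hj
    linarith
  obtain ⟨ν, hν, a, ha, hga⟩ : ∃ ν : Eu n, ‖ν‖ = 1 ∧ ∃ a : ℝ, 0 ≤ a ∧ g x = a • ν := by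
    by_cases h : g x = 0
    · obtain ⟨e, he⟩ := exists_unit hn
      exact ⟨e, he, 0, le_rfl, by simp [h]⟩
    · obtain ⟨e, he, h'⟩ := exists_unit_dir h
      exact ⟨e, he, _, norm_nonneg _, h'⟩
  have hcv : ENNReal.ofReal c * volume (ball (0 : Eu n) 1) ≠ 0 :=
    mul_ne_zero (by simpa using hc) (measure_ball_pos volume _ one_pos).ne'
  obtain ⟨t, ht, hhalf⟩ := halfspace hF hν (by
      intro φ a1 a2 a3 v hv
      have hv0 : (inner ℝ (g x) v : ℝ) = 0 := by rw [hga, inner_smul_left, real_inner_comm, hv]; simp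
      refine le_antisymm ?_ (hpos φ a1 a2 a3 v hv0.ge)
      have := hpos φ a1 a2 a3 (-v) (by rw [inner_neg_right, hv0]; simp)
      simp only [map_neg, integral_neg] at this
      linarith)
    (by
      intro φ a1 a2 a3
      refine hpos φ a1 a2 a3 ν ?_
      rw [hga, inner_smul_left, inner_self_one hν]; simpa using ha)
    (by
      intro h0
      refine hcv (le_antisymm (ge_of_tendsto (hL 1) (Eventually.of_forall fun j => ?_)) zero_le)
      refine (mid_resc hE (hr0 (s j)) hc (hm1 (s j)) (hm2 (s j))).1.trans ?_
      refine (measure_mono (t := (F ∩ ball 0 1) ∪ (closedBall 0 1 ∩ xd (resc E x (r0 (s j))) F)) ?_).trans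
        ((measure_union_le _ _).trans (by rw [h0, zero_add]))
      rintro y ⟨h1, h2⟩
      by_cases hy : y ∈ F
      · exact Or.inl ⟨hy, h2⟩
      · exact Or.inr ⟨ball_subset_closedBall h2, fun h => hy (h.1 h1)⟩)
    (by
      intro h0
      refine hcv (le_antisymm (ge_of_tendsto (hL 1) (Eventually.of_forall fun j => ?_)) zero_le)
      refine (mid_resc hE (hr0 (s j)) hc (hm1 (s j)) (hm2 (s j))).2.trans ?_
      refine (measure_mono (t := (ball 0 1 \ F) ∪ (closedBall 0 1 ∩ xd (resc E x (r0 (s j))) F)) ?_).trans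
        ((measure_union_le _ _).trans (by rw [h0, zero_add]))
      rintro y ⟨h1, h2⟩
      by_cases hy : y ∈ F
      · exact Or.inr ⟨ball_subset_closedBall h1, fun h => h2 (h.2 hy)⟩
      · exact Or.inl ⟨h1, hy⟩)
  exact ⟨fun j => r0 (s j), F, ν, t, fun j => hr0 _, hrt, hF, hν, ht, hhalf, hL⟩


end

section
open scoped Topology Pointwise

lemma hyper_null {n : ℕ} {ν : Eu n} (hν : ‖ν‖ = 1) (a : ℝ) : volume {y : Eu n | (inner ℝ y ν : ℝ) = a} = 0 := by
  have h0 : volume ((LinearMap.ker (innerSL ℝ ν : Eu n →ₗ[ℝ] ℝ) : Submodule ℝ (Eu n)) : Set (Eu n)) = 0 := by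
    refine Measure.addHaar_submodule volume _ ?_
    intro h
    have : ν ∈ LinearMap.ker (innerSL ℝ ν : Eu n →ₗ[ℝ] ℝ) := by rw [h]; trivial
    rw [LinearMap.mem_ker] at this
    have h2 := inner_self_one hν
    simp at this
    simp [this] at hν
  rw [← vol_preimage_add _ (-(a • ν))] at h0
  refine measure_mono_null ?_ h0
  intro y hy
  rw [Set.mem_ofPred_eq] at hy
  simp only [Set.mem_preimage, SetLike.mem_coe, LinearMap.mem_ker]
  change inner ℝ ν (y + -(a • ν)) = (0:ℝ)
  rw [inner_add_right, inner_neg_right, inner_smul_right, inner_self_one hν, real_inner_comm, hy]; ring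

lemma half_diff {n : ℕ} {F : Set (Eu n)} {ν : Eu n} {t τ : ℝ} (hν : ‖ν‖ = 1)
    (h : ∀ᵐ y, (inner ℝ y ν < t → y ∈ F) ∧ (t < inner ℝ y ν → y ∉ F)) :
    ∀ᵐ y : Eu n, (inner ℝ y ν : ℝ) ∈ Set.Icc (t - τ) t → y ∈ diffSet F (τ • ν) := by
  have h' : ∀ᵐ y : Eu n, (inner ℝ (y + τ • ν) ν < t → (y + τ • ν) ∈ F) ∧ (t < inner ℝ (y + τ • ν) ν → (y + τ • ν) ∉ F) :=
    (measurePreserving_add_right volume (τ • ν)).quasiMeasurePreserving.ae h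
  have n1 : ∀ᵐ y : Eu n, (inner ℝ y ν : ℝ) ≠ t := by
    rw [ae_iff]; simpa using hyper_null hν t
  have n2 : ∀ᵐ y : Eu n, (inner ℝ y ν : ℝ) ≠ t - τ := by
    rw [ae_iff]; simpa using hyper_null hν (t - τ)
  filter_upwards [h, h', n1, n2] with y h1 h2 h3 h4 hy
  rw [inner_add_smul hν] at h2
  have a1 := h1.1 (lt_of_le_of_ne hy.2 h3)
  have a2 := h2.2 (by have := lt_of_le_of_ne hy.1 (Ne.symm h4); linarith)
  simp only [diffSet, Set.mem_ofPred_eq]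
  tauto

lemma diff_xd {n : ℕ} {E F K : Set (Eu n)} {h : Eu n} {R : ℝ} (hK : K ⊆ closedBall 0 R) (hK' : ∀ y ∈ K, y + h ∈ closedBall 0 R) :
    volume (K ∩ diffSet F h) ≤ volume (K ∩ diffSet E h) + (volume (closedBall 0 R ∩ xd E F) + volume (closedBall 0 R ∩ xd E F)) := by
  nth_rewrite 2 [← vol_preimage_add (closedBall 0 R ∩ xd E F) h]
  refine (measure_mono (t := (K ∩ diffSet E h) ∪ ((closedBall 0 R ∩ xd E F) ∪ (fun x => x + h) ⁻¹' (closedBall 0 R ∩ xd E F))) ?_).trans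
    ((measure_union_le _ _).trans (by gcongr; exact measure_union_le _ _))
  rintro y ⟨hy, hd⟩
  simp only [Set.mem_union, Set.mem_inter_iff, Set.mem_preimage]
  have a := hK hy
  have b := hK' y hy
  simp only [diffSet, xd, Set.mem_ofPred_eq] at hd ⊢
  tauto

lemma aff_interior {n : ℕ} (x : Eu n) {r : ℝ} (hr : 0 < r) {S : Set (Eu n)} (hS : (interior S).Nonempty) :
    (interior (aff x r '' S)).Nonempty := by
  have h1 : aff x r '' interior S = (fun z => r⁻¹ • (z - x)) ⁻¹' interior S := by
    ext z
    constructor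
    · rintro ⟨y, hy, rfl⟩
      simpa only [Set.mem_preimage, inv_aff x hr.ne'] using hy
    · intro hz
      exact ⟨_, hz, aff_inv x hr.ne' z⟩
  have h2 : IsOpen (aff x r '' interior S) := by
    rw [h1]
    exact isOpen_interior.preimage (by fun_prop)
  obtain ⟨y, hy⟩ := hS
  exact ⟨aff x r y, interior_maximal (Set.image_mono interior_subset) h2 ⟨y, hy, rfl⟩⟩

lemma aff_ediam {n : ℕ} (x : Eu n) {r : ℝ} (hr : 0 < r) (S : Set (Eu n)) :
    ediam (aff x r '' S) ≤ ENNReal.ofReal r * ediam S := by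
  have : LipschitzWith (Real.toNNReal r) (aff x r) := by
    refine LipschitzWith.of_dist_le_mul fun y z => ?_
    rw [Real.coe_toNNReal r hr.le, dist_eq_norm, dist_eq_norm]
    simp only [aff]
    rw [add_sub_add_right_eq_sub, ← smul_sub, norm_smul, Real.norm_of_nonneg hr.le]
  exact this.ediam_image_le S

lemma local_box {n : ℕ} (hn : 1 ≤ n) {E : Set (Eu n)} (hE : MeasurableSet E) {μ : Measure (Eu n)} [IsFiniteMeasure μ]
    (hD : Dp (kap n) E μ) {g : Eu n → Eu n} (hg : Integrable g μ) (hI : IBP E μ g) {ε τ : ℝ} (hε : 0 < ε) (hε1 : ε < 1 / 2)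
    (hτ : 0 < τ) : ∃ R1 : ℝ, 0 < R1 ∧ ∀ (M : ℕ) (x : Eu n), x ∈ essBoundary E → Good μ g M x → ∀ δ > 0,
      ∃ r, 0 < r ∧ r < δ ∧ ∃ B : Set (Eu n), IsCompact B ∧ (interior B).Nonempty ∧ B ⊆ closedBall x (r * R1) ∧
        ediam B ≤ ENNReal.ofReal (r * (1 + ε + 2 * τ)) ∧ ENNReal.ofReal ((1 - 2 * ε) * r ^ ((n:ℝ) - 1)) ≤ μ B := by
  obtain ⟨R0, hR0, hbox⟩ := exists_box (n := n) hε (by linarith) hτ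
  refine ⟨R0 + 1, by positivity, fun M x hx hG δ hδ => ?_⟩
  obtain ⟨r, F, ν, t, hr, hrt, hF, hν, ht, hhalf, hL⟩ := blowup hn (kap_lt_top n).ne hE hD hg hI hx hG
  obtain ⟨K1, c1, c2, c3, c4, c5, c6, c7⟩ := hbox ν hν
  set K := aff (t • ν) 1 '' K1 with hK
  have hKc : IsCompact K := c1.image (continuous_aff _ _)
  have hsw : sweep K (τ • ν) = aff (t • ν) 1 '' sweep K1 (τ • ν) := by
    rw [← sweep_aff, one_smul]
  have htn : ‖t • ν‖ ≤ 1 := by rw [norm_smul, hν, mul_one]; exact ht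
  have hKb : K ⊆ closedBall 0 (R0 + 1 + τ) := by
    rintro _ ⟨w, hw, rfl⟩
    have := c4 hw
    rw [mem_closedBall, dist_zero_right] at this ⊢
    rw [aff, one_smul]
    exact (norm_add_le _ _).trans (by linarith)
  have hKb' : ∀ y ∈ K, y + τ • ν ∈ closedBall 0 (R0 + 1 + τ) := by
    rintro _ ⟨w, hw, rfl⟩
    have := c4 hw
    rw [mem_closedBall, dist_zero_right] at this ⊢
    rw [aff, one_smul]
    refine (norm_add_le _ _).trans ?_
    have h1 := norm_add_le w (t • ν)
    have h2 : ‖τ • ν‖ = τ := by rw [norm_smul, hν, mul_one, Real.norm_of_nonneg hτ.le]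
    linarith
  have hvK : volume K = volume K1 := by rw [hK, vol_aff _ one_pos]; simp
  have hvd : volume K ≤ volume (K ∩ diffSet F (τ • ν)) := by
    refine measure_mono_ae ?_
    filter_upwards [half_diff (τ := τ) hν hhalf] with y hy hyK
    refine ⟨hyK, hy ?_⟩
    obtain ⟨w, hw, rfl⟩ := hyK
    have := c2 w hw
    rw [aff, one_smul, inner_add_smul hν]
    exact ⟨by linarith [this.1], by linarith [this.2]⟩
  have hkp := kap_pos hν
  have hkt := (kap_lt_top n).ne
  set e0 : ℝ≥0∞ := ENNReal.ofReal τ * (ENNReal.ofReal ε * kap n) with he0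
  have he0p : 0 < e0 := by
    rw [he0]
    exact ENNReal.mul_pos (by simpa using hτ) (mul_ne_zero (by simpa using hε) hkp.ne')
  have he0t : e0 ≠ ∞ := ENNReal.mul_ne_top ENNReal.ofReal_ne_top (ENNReal.mul_ne_top ENNReal.ofReal_ne_top hkt)
  have hev1 : ∀ᶠ j in atTop, volume (closedBall 0 (R0 + 1 + τ) ∩ xd (resc E x (r j)) F) < e0 / 2 :=
    (hL (R0 + 1 + τ)).eventually (gt_mem_nhds (ENNReal.half_pos he0p.ne'))
  obtain ⟨j, hj1, hj2⟩ := (hev1.and (hrt.eventually (gt_mem_nhds hδ))).exists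
  refine ⟨r j, hr j, hj2, aff x (r j) '' sweep K (τ • ν), (isCompact_sweep hKc _).image (continuous_aff _ _), ?_, ?_, ?_, ?_⟩
  · rw [hsw]; exact aff_interior x (hr j) (aff_interior _ one_pos c7)
  · rw [hsw]
    rintro _ ⟨_, ⟨w, hw, rfl⟩, rfl⟩
    have := c5 hw
    rw [mem_closedBall, dist_zero_right] at this
    rw [mem_closedBall, dist_eq_norm]
    rw [aff, add_sub_cancel_right, norm_smul, Real.norm_of_nonneg (hr j).le, aff, one_smul]
    have := hr j
    gcongr
    exact (norm_add_le _ _).trans (by linarith)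
  · rw [hsw, ENNReal.ofReal_mul (hr j).le]
    refine (aff_ediam x (hr j) _).trans (mul_le_mul_right ?_ _)
    refine (aff_ediam _ one_pos _).trans ?_
    rw [ENNReal.ofReal_one, one_mul]
    exact c6
  · have h1 := Dp_resc' hD x (hr j) hKc (τ • ν)
    have h2 := diff_xd (E := resc E x (r j)) (F := F) hKb hKb'
    have h3 : volume (K ∩ diffSet F (τ • ν)) ≤ volume (K ∩ diffSet (resc E x (r j)) (τ • ν)) + e0 := by
      refine h2.trans ?_
      gcongr
      calc _ ≤ e0 / 2 + e0 / 2 := add_le_add hj1.le hj1.le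
        _ = e0 := ENNReal.add_halves _
    have h4 : ENNReal.ofReal τ * (ENNReal.ofReal (1 - 2 * ε) * kap n) + e0 ≤ volume (K ∩ diffSet (resc E x (r j)) (τ • ν)) + e0 := by
      refine le_trans (le_of_eq ?_) (c3.trans (hvK.ge.trans (hvd.trans h3)))
      rw [he0, ← mul_add, ← add_mul, ← ENNReal.ofReal_add (by linarith) hε.le]
      congr 3; ring
    have h5 := (ENNReal.add_le_add_iff_right he0t).1 h4
    rw [norm_smul, hν, mul_one, Real.norm_of_nonneg hτ.le] at h1
    have h6 := (mul_le_mul_right h5 (ENNReal.ofReal ((r j) ^ ((n:ℝ) - 1)))).trans h1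
    have h0 : kap n * ENNReal.ofReal τ ≠ 0 := mul_ne_zero hkp.ne' (by simpa using hτ)
    have h0' : kap n * ENNReal.ofReal τ ≠ ∞ := ENNReal.mul_ne_top hkt ENNReal.ofReal_ne_top
    rw [← ENNReal.mul_le_mul_iff_right h0 h0']
    refine le_trans (le_of_eq ?_) h6
    rw [ENNReal.ofReal_mul (by linarith)]
    ring


end

section
open scoped Topology Pointwise

lemma good_haus {n : ℕ} (hn : 1 ≤ n) {E : Set (Eu n)} (hE : MeasurableSet E) {μ : Measure (Eu n)} [IsFiniteMeasure μ]
    (hD : Dp (kap n) E μ) {g : Eu n → Eu n} (hg : Integrable g μ) (hI : IBP E μ g) {ε τ : ℝ} (hε : 0 < ε) (hε1 : ε < 1 / 2)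
    (hτ : 0 < τ) (M : ℕ) : μH[(n:ℝ) - 1] {x | x ∈ essBoundary E ∧ Good μ g M x} ≤
      ENNReal.ofReal ((1 + ε + 2 * τ) ^ ((n:ℝ) - 1) / (1 - 2 * ε)) * μ Set.univ := by
  obtain ⟨R1, hR1, hbox⟩ := local_box hn hE hD hg hI hε hε1 hτ
  have hd : (0:ℝ) ≤ (n:ℝ) - 1 := by
    have : (1:ℝ) ≤ n := by exact_mod_cast hn
    linarith
  have hε2 : 0 < 1 - 2 * ε := by linarith
  set d := (n:ℝ) - 1 with hdd
  set A : Set (Eu n) := {x | x ∈ essBoundary E ∧ Good μ g M x} with hA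
  set w : ℝ := 1 + ε + 2 * τ with hw
  have hwp : 0 < w := by positivity
  have hcov : ∀ k : ℕ, ∃ u : Set (Eu n × ℝ × Set (Eu n)), u.Countable ∧ u.PairwiseDisjoint (fun p => p.2.2) ∧
      μ (A \ ⋃ a ∈ u, a.2.2) = 0 ∧ ∀ p ∈ u, IsCompact p.2.2 ∧ 0 < p.2.1 ∧ p.2.1 * w ≤ 1 / ((k:ℝ) + 1) ∧
        ediam p.2.2 ≤ ENNReal.ofReal (p.2.1 * w) ∧ ENNReal.ofReal ((1 - 2 * ε) * p.2.1 ^ d) ≤ μ p.2.2 := by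
    intro k
    set t : Set (Eu n × ℝ × Set (Eu n)) := {p | p.1 ∈ A ∧ 3 * (p.2.1 * R1) < 1 / ((M:ℝ) + 1) ∧ (interior p.2.2).Nonempty ∧
      p.2.2 ⊆ closedBall p.1 (p.2.1 * R1) ∧ IsCompact p.2.2 ∧ 0 < p.2.1 ∧ p.2.1 * w ≤ 1 / ((k:ℝ) + 1) ∧
        ediam p.2.2 ≤ ENNReal.ofReal (p.2.1 * w) ∧ ENNReal.ofReal ((1 - 2 * ε) * p.2.1 ^ d) ≤ μ p.2.2} with ht
    set C' : ℝ := ((M:ℝ) + 1) * (3 * R1) ^ d / (1 - 2 * ε) with hC'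
    have hC'0 : 0 ≤ C' := by positivity
    obtain ⟨u, hut, hu1, hu2, hu3⟩ := Vitali.exists_disjoint_covering_ae μ A t (Real.toNNReal C') (fun p => p.2.1 * R1)
      (fun p => p.1) (fun p => p.2.2) (fun p hp => hp.2.2.2.1) (by
        intro p hp
        obtain ⟨a1, a2, a3, a4, a5, a6, a7, a8, a9⟩ := hp
        refine (a1.2.1 _ (by positivity) a2).trans ?_
        refine le_trans (le_of_eq ?_) (mul_le_mul_right a9 _)
        change _ = ENNReal.ofReal C' * _
        rw [← ENNReal.ofReal_mul hC'0, show 3 * (p.2.1 * R1) = (3 * R1) * p.2.1 by ring,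
          Real.mul_rpow (by positivity) a6.le, hC']
        congr 1
        rw [← hdd]
        field_simp) (fun p hp => hp.2.2.1) (fun p hp => hp.2.2.2.2.1.isClosed) (by
        intro x hx δ hδ
        obtain ⟨r, hr0, hr, B, b1, b2, b3, b4, b5⟩ := hbox M x hx.1 hx.2
          (min (δ / R1) (min (1 / ((k:ℝ) + 1) / w) (1 / ((M:ℝ) + 1) / (3 * R1)))) (by positivity)
        rw [lt_min_iff, lt_min_iff, lt_div_iff₀ hR1, lt_div_iff₀ hwp, lt_div_iff₀ (show 0 < 3 * R1 by positivity)] at hr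
        refine ⟨(x, r, B), ⟨hx, ?_, b2, b3, b1, hr0, hr.2.1.le, b4, b5⟩, hr.1.le, rfl⟩
        have := hr.2.2
        simp only
        linarith)
    exact ⟨u, hu1, hu2, hu3, fun p hp => (hut hp).2.2.2.2⟩
  choose u hu1 hu2 hu3 hu4 using hcov
  set N : ℕ → Set (Eu n) := fun k => A \ ⋃ a ∈ u k, a.2.2 with hN
  have hN0 : ∀ k, μH[d] (N k) = 0 := fun k =>
    null_of_null hn (kap_lt_top n).ne hE hD (fun x hx => hx.1.1) (hu3 k)
  have hA' : μH[d] (A \ ⋃ k, N k) ≤ ENNReal.ofReal (w ^ d / (1 - 2 * ε)) * μ Set.univ := by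
    refine haus_le_of_cover (ι := Eu n × ℝ × Set (Eu n)) fun k => ⟨u k, fun p => p.2.2, hu1 k, ?_, ?_, ?_⟩
    · intro p hp
      obtain ⟨-, -, a3, a4, -⟩ := hu4 k p hp
      exact a4.trans (ENNReal.ofReal_le_ofReal a3)
    · rintro x ⟨hx, hxN⟩
      by_contra hcon
      exact hxN (Set.mem_iUnion.2 ⟨k, hx, hcon⟩)
    · have : Countable (u k) := (hu1 k).to_subtype
      calc ∑' p : u k, ediam p.1.2.2 ^ d
          ≤ ∑' p : u k, ENNReal.ofReal (w ^ d / (1 - 2 * ε)) * μ p.1.2.2 := by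
            refine ENNReal.tsum_le_tsum fun p => ?_
            obtain ⟨-, a2, a3, a4, a5⟩ := hu4 k p.1 p.2
            refine (ENNReal.rpow_le_rpow a4 hd).trans ?_
            refine le_trans ?_ (mul_le_mul_right a5 _)
            rw [← ENNReal.ofReal_mul (by positivity), ENNReal.ofReal_rpow_of_nonneg (by positivity) hd,
              Real.mul_rpow a2.le hwp.le]
            refine ENNReal.ofReal_le_ofReal (le_of_eq ?_)
            field_simp
        _ = ENNReal.ofReal (w ^ d / (1 - 2 * ε)) * ∑' p : u k, μ p.1.2.2 := ENNReal.tsum_mul_left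
        _ = ENNReal.ofReal (w ^ d / (1 - 2 * ε)) * μ (⋃ p : u k, p.1.2.2) := by
            rw [measure_iUnion]
            · intro p q hpq
              exact hu2 k p.2 q.2 (fun h => hpq (Subtype.ext h))
            · intro p; exact (hu4 k p.1 p.2).1.measurableSet
        _ ≤ _ := mul_le_mul_right (measure_mono (Set.subset_univ _)) _
  calc μH[d] A ≤ μH[d] ((A \ ⋃ k, N k) ∪ ⋃ k, N k) := measure_mono (by rw [Set.sdiff_union_self]; exact Set.subset_union_left)
    _ ≤ μH[d] (A \ ⋃ k, N k) + μH[d] (⋃ k, N k) := measure_union_le _ _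
    _ = μH[d] (A \ ⋃ k, N k) := by rw [measure_iUnion_null hN0, add_zero]
    _ ≤ _ := hA'

lemma good_haus' {n : ℕ} (hn : 1 ≤ n) {E : Set (Eu n)} (hE : MeasurableSet E) {μ : Measure (Eu n)} [IsFiniteMeasure μ]
    (hD : Dp (kap n) E μ) {g : Eu n → Eu n} (hg : Integrable g μ) (hI : IBP E μ g)
    (M : ℕ) : μH[(n:ℝ) - 1] {x | x ∈ essBoundary E ∧ Good μ g M x} ≤ μ Set.univ := by
  have h1 : Tendsto (fun ε : ℝ => (1 + ε + 2 * ε) ^ ((n:ℝ) - 1) / (1 - 2 * ε)) (𝓝[>] 0) (𝓝 1) := by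
    have : ContinuousAt (fun ε : ℝ => (1 + ε + 2 * ε) ^ ((n:ℝ) - 1) / (1 - 2 * ε)) 0 := by
      refine ContinuousAt.div ?_ (by fun_prop) (by norm_num)
      refine ContinuousAt.rpow_const (by fun_prop) (Or.inl (by norm_num))
    have h := this.tendsto
    norm_num at h
    exact h.mono_left nhdsWithin_le_nhds
  have h2 := ENNReal.Tendsto.mul_const (b := μ Set.univ) (ENNReal.tendsto_ofReal h1) (Or.inr (measure_ne_top _ _))
  rw [ENNReal.ofReal_one, one_mul] at h2
  refine ge_of_tendsto h2 ?_
  have : Set.Ioo (0:ℝ) (1/2) ∈ 𝓝[>] (0:ℝ) := Ioo_mem_nhdsGT (by norm_num)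
  filter_upwards [this] with ε hε
  exact good_haus hn hE hD hg hI hε.1 hε.2 hε.1 M

theorem lsc_dp {n : ℕ} (hn : 1 ≤ n) {E : Set (Eu n)} (hE : MeasurableSet E) {μ : Measure (Eu n)} [IsFiniteMeasure μ]
    (hD : Dp (kap n) E μ) : μH[(n:ℝ) - 1] (essBoundary E) ≤ μ Set.univ := by
  obtain ⟨g, hg, hI⟩ := exists_IBP (kap_lt_top n).ne hE hD
  set d := (n:ℝ) - 1 with hdd
  set S : ℕ → Set (Eu n) := fun M => {x | x ∈ essBoundary E ∧ Good μ g M x} with hS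
  have hmono : Monotone S := by
    rintro M M' hMM x ⟨h1, h2, h3⟩
    have hc : (M:ℝ) ≤ M' := by exact_mod_cast hMM
    refine ⟨h1, fun r hr hr' => ?_, h3⟩
    refine (h2 r hr (hr'.trans_le (by gcongr))).trans (ENNReal.ofReal_le_ofReal (by gcongr))
  set L : Set (Eu n) := {x | ¬ ∀ η > 0, ∃ δ > 0, ∀ ρ, 0 < ρ → ρ < δ →
      ∫ y in closedBall x ρ, ‖g y - g x‖ ∂μ ≤ η * (μ (closedBall x ρ)).toReal} with hL
  have hL0 : μ L = 0 := ae_leb hg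
  set Z : Set (Eu n) := {x : Eu n | ∀ M : ℕ, ∃ r, 0 < r ∧ r < 1 / ((M:ℝ) + 1) ∧
      ENNReal.ofReal (((M:ℝ) + 1) * r ^ ((n:ℝ) - 1)) < μ (closedBall x r)} with hZ
  have hZ0 : μH[d] Z = 0 := dens_inf hn
  have hL1 : μH[d] (essBoundary E ∩ L) = 0 := null_of_null hn (kap_lt_top n).ne hE hD Set.inter_subset_left
    (measure_mono_null Set.inter_subset_right hL0)
  have hsub : essBoundary E ⊆ (⋃ M, S M) ∪ (Z ∪ (essBoundary E ∩ L)) := by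
    intro x hx
    by_cases h1 : x ∈ L
    · exact Or.inr (Or.inr ⟨hx, h1⟩)
    by_cases h2 : x ∈ Z
    · exact Or.inr (Or.inl h2)
    left
    rw [hZ, Set.mem_ofPred_eq] at h2
    push Not at h2
    rw [hL, Set.mem_ofPred_eq, not_not] at h1
    obtain ⟨M, hM⟩ := h2
    exact Set.mem_iUnion.2 ⟨M, hx, hM, h1⟩
  refine (measure_mono hsub).trans ((measure_union_le _ _).trans ?_)
  rw [measure_union_null hZ0 hL1, add_zero, hmono.measure_iUnion]
  exact iSup_le fun M => good_haus' hn hE hD hg hI M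

/-- lower semicontinuity of the perimeter -/
theorem lsc_perimeter {n : ℕ} (hn : 1 ≤ n) {E : ℕ → Set (Eu n)} {F : Set (Eu n)} (hE : ∀ j, MeasurableSet (E j))
    (hF : MeasurableSet F) (hL : ∀ R : ℝ, Tendsto (fun j => volume (closedBall 0 R ∩ xd (E j) F)) atTop (𝓝 0))
    {M : ℝ≥0∞} (hM : M ≠ ∞) (hP : ∀ j, perimeter (E j) ≤ M) : perimeter F ≤ M := by
  set ν : ℕ → Measure (Eu n) := fun j => (μH[(n:ℝ) - 1]).restrict (essBoundary (E j)) with hν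
  have hνu : ∀ j, ν j Set.univ ≤ M := by
    intro j
    rw [hν]; simp only [Measure.restrict_apply MeasurableSet.univ, Set.univ_inter]
    exact hP j
  let 𝒰 : Ultrafilter ℕ := Ultrafilter.of atTop
  obtain ⟨μ, hμ, hV⟩ := exists_VL 𝒰 ν hM hνu
  have : IsFiniteMeasure μ := ⟨hμ.trans_lt hM.lt_top⟩
  have : ∀ j, IsFiniteMeasure (ν j) := fun j => ⟨(hνu j).trans_lt hM.lt_top⟩
  have hD : Dp (kap n) F μ := Dp_limit (kap_lt_top n).ne hV (fun j => Dp_hausdorff (hE j))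
    (fun R => (hL R).mono_left (Ultrafilter.of_le _))
  exact (lsc_dp hn hF hD).trans hμ


end

section
open scoped Topology Pointwise

lemma enn_liminf_add (u v : ℕ → ℝ≥0∞) : liminf u atTop + liminf v atTop ≤ liminf (fun j => u j + v j) atTop := by
  simp only [liminf_eq_iSup_iInf_of_nat]
  rw [ENNReal.iSup_add_iSup_of_monotone]
  · refine iSup_mono fun k => ?_
    refine le_iInf₂ fun i hi => add_le_add (iInf₂_le i hi) (iInf₂_le i hi)
  · intro a b hab
    exact le_iInf₂ fun i hi => iInf₂_le i (le_trans hab hi)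
  · intro a b hab
    exact le_iInf₂ fun i hi => iInf₂_le i (le_trans hab hi)

lemma fatou_set {n : ℕ} {E : ℕ → Set (Eu n)} {F : Set (Eu n)} (hE : ∀ j, MeasurableSet (E j)) (hF : MeasurableSet F)
    (hae : ∀ᵐ x, ∀ᶠ j in atTop, x ∈ E j ↔ x ∈ F) {f : Eu n → ℝ≥0∞} {fj : ℕ → Eu n → ℝ≥0∞} (hfj : ∀ j, Measurable (fj j))
    (hle : ∀ x, f x ≤ liminf (fun j => fj j x) atTop) :
    ∫⁻ x in F, f x ≤ liminf (fun j => ∫⁻ x in E j, fj j x) atTop := by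
  simp_rw [← lintegral_indicator (hE _), ← lintegral_indicator hF]
  refine le_trans (lintegral_mono_ae ?_) (lintegral_liminf_le fun j => (hfj j).indicator (hE j))
  filter_upwards [hae] with x hx
  by_cases h : x ∈ F
  · rw [Set.indicator_of_mem h]
    refine (hle x).trans (le_of_eq (liminf_congr ?_))
    filter_upwards [hx] with j hj
    rw [Set.indicator_of_mem (hj.2 h)]
  · rw [Set.indicator_of_notMem h]; exact zero_le

lemma lsc_kernel {n : ℕ} {E : ℕ → Set (Eu n)} {F : Set (Eu n)} (hE : ∀ j, MeasurableSet (E j)) (hF : MeasurableSet F)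
    (hae : ∀ᵐ x, ∀ᶠ j in atTop, x ∈ E j ↔ x ∈ F) {k : Eu n → Eu n → ℝ≥0∞} (hk : Measurable (Function.uncurry k)) :
    ∫⁻ x in F, ∫⁻ y in F, k x y ≤ liminf (fun j => ∫⁻ x in E j, ∫⁻ y in E j, k x y) atTop := by
  refine fatou_set hE hF hae (f := fun x => ∫⁻ y in F, k x y) (fj := fun j x => ∫⁻ y in E j, k x y)
    (fun j => Measurable.lintegral_prod_right' (ν := volume.restrict (E j)) hk) fun x => ?_
  exact fatou_set hE hF hae (f := k x) (fj := fun _ => k x) (fun _ => hk.of_uncurry_left) fun y => by simp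

lemma meas_kernel {n : ℕ} (γ : ℝ) : Measurable (Function.uncurry fun x y : Eu n => ENNReal.ofReal (‖x - y‖ ^ γ)) := by
  have h : Measurable (fun p : Eu n × Eu n => ‖p.1 - p.2‖) := (measurable_fst.sub measurable_snd).norm
  exact ENNReal.measurable_ofReal.comp (h.pow_const γ)

lemma lsc_riesz {n : ℕ} {E : ℕ → Set (Eu n)} {F : Set (Eu n)} (hE : ∀ j, MeasurableSet (E j)) (hF : MeasurableSet F)
    (hae : ∀ᵐ x, ∀ᶠ j in atTop, x ∈ E j ↔ x ∈ F) (α : ℝ) :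
    rieszEnergy α F ≤ liminf (fun j => rieszEnergy α (E j)) atTop :=
  lsc_kernel hE hF hae (meas_kernel (α - (n:ℝ)))

lemma meas_pot {n : ℕ} (β A : ℝ) : Measurable (fun x : Eu n => ENNReal.ofReal (A * ‖x‖ ^ β)) :=
  ENNReal.measurable_ofReal.comp ((measurable_norm.pow_const _).const_mul _)

lemma lsc_pot {n : ℕ} {E : ℕ → Set (Eu n)} {F : Set (Eu n)} (hE : ∀ j, MeasurableSet (E j)) (hF : MeasurableSet F)
    (hae : ∀ᵐ x, ∀ᶠ j in atTop, x ∈ E j ↔ x ∈ F) (β A : ℝ) :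
    potEnergy β A F ≤ liminf (fun j => potEnergy β A (E j)) atTop :=
  fatou_set hE hF hae (fun _ => meas_pot β A) fun x => by simp

lemma lsc_per {n : ℕ} (hn : 1 ≤ n) {E : ℕ → Set (Eu n)} {F : Set (Eu n)} (hE : ∀ j, MeasurableSet (E j))
    (hF : MeasurableSet F) (hL : ∀ R : ℝ, Tendsto (fun j => volume (closedBall 0 R ∩ xd (E j) F)) atTop (𝓝 0)) :
    perimeter F ≤ liminf (fun j => perimeter (E j)) atTop := by
  refine ENNReal.le_of_forall_pos_le_add fun η hη hlt => ?_
  have h1 : liminf (fun j => perimeter (E j)) atTop < liminf (fun j => perimeter (E j)) atTop + η :=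
    ENNReal.lt_add_right hlt.ne (by simpa using hη.ne')
  obtain ⟨φ, hφ, hP⟩ := extraction_of_frequently_atTop (frequently_lt_of_liminf_lt (by isBoundedDefault) h1)
  exact lsc_perimeter hn (fun j => hE (φ j)) hF (fun R => (hL R).comp hφ.tendsto_atTop)
    (ENNReal.add_ne_top.2 ⟨hlt.ne, ENNReal.coe_ne_top⟩) (fun j => (hP j).le)

lemma tail_le {n : ℕ} {β A : ℝ} (hβ : 0 < β) (hA : 0 < A) {E : Set (Eu n)} (hE : MeasurableSet E) {R : ℝ} (hR : 0 < R) :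
    ENNReal.ofReal (A * R ^ β) * volume (E \ closedBall 0 R) ≤ potEnergy β A E := by
  rw [← setLIntegral_const]
  refine le_trans (setLIntegral_mono' (s := E \ closedBall 0 R) (hE.diff measurableSet_closedBall) ?_) (lintegral_mono_set Set.sdiff_subset)
  intro x hx
  have h1 : R < ‖x‖ := by simpa using hx.2
  exact ENNReal.ofReal_le_ofReal (mul_le_mul_of_nonneg_left (Real.rpow_le_rpow hR.le h1.le hβ.le) hA.le)

lemma exists_vol {n : ℕ} (hn : 1 ≤ n) {m : ℝ} (hm : 0 < m) : ∃ E : Set (Eu n), MeasurableSet E ∧ volume E = ENNReal.ofReal m := by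
  have h0 := vol_ball_toReal_pos (0 : Eu n) one_pos
  set ω := (volume (ball (0 : Eu n) 1)).toReal with hω
  have hr : 0 < (m / ω) ^ ((n:ℝ)⁻¹) := by positivity
  refine ⟨ball 0 ((m / ω) ^ ((n:ℝ)⁻¹)), measurableSet_ball, ?_⟩
  rw [vol_ball _ hr, Real.rpow_inv_natCast_pow (by positivity) (by omega),
    ← ENNReal.ofReal_toReal (measure_ball_lt_top (μ := volume) (x := (0 : Eu n)) (r := 1)).ne, ← hω,
    ← ENNReal.ofReal_mul (by positivity)]
  congr 1
  field_simp

lemma vol_limit {n : ℕ} {β A m : ℝ} (hβ : 0 < β) (hA : 0 < A) {E : ℕ → Set (Eu n)} {F : Set (Eu n)} (hE : ∀ j, MeasurableSet (E j))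
    (hF : MeasurableSet F)
    (hae : ∀ᵐ x, ∀ᶠ j in atTop, x ∈ E j ↔ x ∈ F)
    (hL : ∀ R : ℝ, Tendsto (fun j => volume (closedBall 0 R ∩ xd (E j) F)) atTop (𝓝 0))
    (hv : ∀ j, volume (E j) = ENNReal.ofReal m) {C : ℝ≥0∞} (hC : C ≠ ∞) (hU : ∀ j, potEnergy β A (E j) ≤ C) :
    volume F = ENNReal.ofReal m := by
  refine le_antisymm ?_ ?_
  · have := fatou_set hE hF hae (f := fun _ => 1) (fj := fun _ _ => 1) (fun _ => measurable_const) (fun x => by simp)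
    simpa [hv] using this
  · have h1 : ∀ R : ℝ, 0 < R → ENNReal.ofReal m ≤ volume F + C / ENNReal.ofReal (A * R ^ β) := by
      intro R hR
      have ht : Tendsto (fun j => volume F + volume (closedBall 0 R ∩ xd (E j) F) + C / ENNReal.ofReal (A * R ^ β)) atTop
          (𝓝 (volume F + 0 + C / ENNReal.ofReal (A * R ^ β))) := (tendsto_const_nhds.add (hL R)).add tendsto_const_nhds
      rw [add_zero] at ht
      refine ge_of_tendsto ht (Eventually.of_forall fun j => ?_)
      rw [← hv j]
      have hp : 0 < A * R ^ β := by positivity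
      have htail : volume (E j \ closedBall 0 R) ≤ C / ENNReal.ofReal (A * R ^ β) := by
        rw [ENNReal.le_div_iff_mul_le (Or.inl (by simpa using hp)) (Or.inl ENNReal.ofReal_ne_top), mul_comm]
        exact (tail_le hβ hA (hE j) hR).trans (hU j)
      refine (measure_mono (t := (F ∪ (closedBall 0 R ∩ xd (E j) F)) ∪ (E j \ closedBall 0 R)) ?_).trans
        ((measure_union_le _ _).trans (add_le_add (measure_union_le _ _) htail))
      intro x hx
      by_cases h2 : x ∈ closedBall (0 : Eu n) R
      · left
        by_cases h3 : x ∈ F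
        · exact Or.inl h3
        · exact Or.inr ⟨h2, fun h => h3 (h.1 hx)⟩
      · exact Or.inr ⟨hx, h2⟩
    have h2 : Tendsto (fun R : ℝ => volume F + C / ENNReal.ofReal (A * R ^ β)) atTop (𝓝 (volume F + 0)) := by
      refine tendsto_const_nhds.add ?_
      have h3 : Tendsto (fun R : ℝ => ENNReal.ofReal (A * R ^ β)) atTop (𝓝 ∞) :=
        ENNReal.tendsto_ofReal_nhds_top.2 ((tendsto_rpow_atTop hβ).const_mul_atTop hA)
      have := ENNReal.Tendsto.const_div (a := C) h3 (Or.inr hC)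
      rwa [ENNReal.div_top] at this
    rw [add_zero] at h2
    refine ge_of_tendsto h2 ?_
    filter_upwards [eventually_gt_atTop 0] with R hR
    exact h1 R hR

theorem statement0' (n : ℕ) (hn : 1 ≤ n) (α β A m : ℝ)
    (hβ : 0 < β) (hA : 0 < A) (hm : 0 < m) :
    ∃ E : Set (EuclideanSpace ℝ (Fin n)), IsMinimizer α β A m E := by
  by_cases hfin : ∃ F : Set (Eu n), MeasurableSet F ∧ volume F = ENNReal.ofReal m ∧ totalEnergy α β A F ≠ ∞
  swap
  · push Not at hfin
    obtain ⟨E, h1, h2⟩ := exists_vol hn hm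
    exact ⟨E, h1, h2, fun F a b => by rw [hfin F a b]; exact le_top⟩
  set I : ℝ≥0∞ := ⨅ F : {F : Set (Eu n) // MeasurableSet F ∧ volume F = ENNReal.ofReal m}, totalEnergy α β A F.1 with hI
  have hIt : I ≠ ∞ := by
    obtain ⟨F, a, b, c⟩ := hfin
    exact ((iInf_le _ (⟨F, a, b⟩ : {F : Set (Eu n) // MeasurableSet F ∧ volume F = ENNReal.ofReal m})).trans_lt c.lt_top).ne
  have hex : ∀ k : ℕ, ∃ F : Set (Eu n), MeasurableSet F ∧ volume F = ENNReal.ofReal m ∧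
      totalEnergy α β A F ≤ I + ENNReal.ofReal (1 / ((k:ℝ) + 1)) := by
    intro k
    have : I < I + ENNReal.ofReal (1 / ((k:ℝ) + 1)) := ENNReal.lt_add_right hIt (by
      simp only [ne_eq, ENNReal.ofReal_eq_zero, not_le]; positivity)
    obtain ⟨F, hF⟩ := iInf_lt_iff.1 this
    exact ⟨F.1, F.2.1, F.2.2, hF.le⟩
  choose E0 hE0 hv0 hen0 using hex
  set C : ℝ≥0∞ := I + 1 with hC
  have hCt : C ≠ ∞ := ENNReal.add_ne_top.2 ⟨hIt, ENNReal.one_ne_top⟩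
  have henC : ∀ k, totalEnergy α β A (E0 k) ≤ C := by
    intro k
    refine (hen0 k).trans (add_le_add le_rfl ?_)
    rw [← ENNReal.ofReal_one]
    refine ENNReal.ofReal_le_ofReal ?_
    rw [div_le_one (by positivity)]
    have : (0:ℝ) ≤ k := Nat.cast_nonneg k
    linarith
  have hPC : ∀ k, perimeter (E0 k) ≤ C := fun k =>
    le_trans (le_trans le_self_add le_self_add) (henC k)
  have hUC : ∀ k, potEnergy β A (E0 k) ≤ C := fun k => le_trans le_add_self (henC k)
  obtain ⟨F, s, hF, hs, hae, hL⟩ := compactness E0 hE0 (by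
    intro R
    refine ⟨kap n * C, ENNReal.mul_ne_top (kap_lt_top n).ne hCt, Eventually.of_forall fun k h _ => ?_⟩
    refine (measure_mono Set.inter_subset_right).trans ((vol_diff_le (Dp_hausdorff (hE0 k)) h).trans ?_)
    rw [Measure.restrict_apply MeasurableSet.univ, Set.univ_inter, mul_right_comm]
    exact mul_le_mul_left (mul_le_mul_right (hPC k) _) _)
  have hvF : volume F = ENNReal.ofReal m :=
    vol_limit hβ hA (fun j => hE0 (s j)) hF hae hL (fun j => hv0 _) hCt (fun j => hUC _)
  refine ⟨F, hF, hvF, fun G hG hvG => ?_⟩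
  have h1 : totalEnergy α β A F ≤ liminf (fun j => totalEnergy α β A (E0 (s j))) atTop := by
    unfold totalEnergy
    refine le_trans ?_ (enn_liminf_add _ _)
    refine add_le_add (le_trans ?_ (enn_liminf_add _ _)) (lsc_pot (fun j => hE0 (s j)) hF hae β A)
    exact add_le_add (lsc_per hn (fun j => hE0 (s j)) hF hL) (lsc_riesz (fun j => hE0 (s j)) hF hae α)
  have h2 : Tendsto (fun j => I + ENNReal.ofReal (1 / (((s j : ℕ):ℝ) + 1))) atTop (𝓝 (I + 0)) := by
    refine tendsto_const_nhds.add ?_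
    have := ENNReal.tendsto_ofReal ((tendsto_one_div_add_atTop_nhds_zero_nat (𝕜 := ℝ)).comp hs.tendsto_atTop)
    rwa [ENNReal.ofReal_zero] at this
  rw [add_zero] at h2
  have h3 : totalEnergy α β A F ≤ I := by
    refine h1.trans ?_
    rw [← h2.liminf_eq]
    exact liminf_le_liminf (Eventually.of_forall fun j => hen0 (s j))
  exact h3.trans (iInf_le _ (⟨G, hG, hvG⟩ : {F : Set (Eu n) // MeasurableSet F ∧ volume F = ENNReal.ofReal m}))


end

/-- The variational problem `inf {E_{α,β,A}(E) : |E| = m}` admits a minimizer for every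
mass `m > 0`. -/
theorem statement0 (n : ℕ) (hn : 1 ≤ n) (α β A m : ℝ)
    (hα0 : 0 < α) (hαn : α < n) (hβ : 0 < β) (hA : 0 < A) (hm : 0 < m) :
    ∃ E : Set (EuclideanSpace ℝ (Fin n)), IsMinimizer α β A m E := by
  exact statement0' n hn α β A m hβ hA hm
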